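/- (Theorem 5.1: forward, backward and elliptic Harnack inequalities at initial times.) Let d ≥ 3 and 0 < m < 1, and let p satisfy p = 1 if m > m_c and p > p_c if m ≤ m_c, where m_c = (d−2)/d, p_c = d(1−m)/2 and ϑ_p = 1/(2p − d(1−m)). There exist positive constants c₀′ and C₆ depending only on m, d and p such that the following holds. Let u be a classical solution of the FDE ∂ₜu = Δ(u^m) on (0,T) × Ω taking nonnegative initial data u₀ ∈ L^p_loc(Ω) and having finite extinction time T, and let x₀ ∈ Ω, R > 0 with dist(x₀, ∂Ω) ≥ 6R and ∫_{B_R(x₀)} u₀ > 0. Set t_* = c₀′ R^{2−d(1−m)} ‖u₀‖_{L¹(B_R(x₀))}^{1−m}. Then for every t₀ ∈ (0, t_*] and every 0 ≤ θ ≤ min{t_* − t₀, t₀/2}, both inf over x ∈ B_R(x₀) of u(t₀+θ, x) and inf over x ∈ B_R(x₀) of u(t₀−θ, x) are at least H · u(t₀, x₀), where H = C₆ R^{(2−d)/m} ( ‖u₀‖_{L¹(B_R(x₀))} T^{−1/(1−m)} )^{1/m} ( ‖u₀‖_{L^p(B_R(x₀))}^{2pϑ_p} t₀^{−2pϑ_p/(1−m)}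 + R^{−2/(1−m)} )^{−1}. -/

import Mathlib

open MeasureTheory Metric Set Real

/-- The spatial Laplacian of `f : ℝ^d → ℝ` at a point, as the sum of second
coordinate derivatives. -/
noncomputable def spaceLap {d : ℕ} (f : EuclideanSpace ℝ (Fin d) → ℝ)
    (x : EuclideanSpace ℝ (Fin d)) : ℝ :=
  ∑ i : Fin d, fderiv ℝ (fun y => fderiv ℝ f y (EuclideanSpace.single i 1)) x
    (EuclideanSpace.single i 1)

/-- `u` is a classical solution of the fast diffusion equation `∂ₜ u = Δ(u^m)`
on the space-time set `Q`: it is positive and smooth on `Q` and satisfies the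
equation pointwise on `Q`. -/
def IsFDESol {d : ℕ} (m : ℝ) (Q : Set (ℝ × EuclideanSpace ℝ (Fin d)))
    (u : ℝ → EuclideanSpace ℝ (Fin d) → ℝ) : Prop :=
  (∀ p ∈ Q, 0 < u p.1 p.2) ∧
  ContDiffOn ℝ (⊤ : ℕ∞) (fun p : ℝ × EuclideanSpace ℝ (Fin d) => u p.1 p.2) Q ∧
  ∀ p ∈ Q, deriv (fun s => u s p.2) p.1 = spaceLap (fun y => u p.1 y ^ m) p.2

/-- `u` (defined for `0 < t < T` on `Ω`) takes the initial data `u₀`: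
it extends continuously to `{0} × Ω` with value `u₀` there. -/
def TakesInit {d : ℕ} (T : ℝ) (Ω : Set (EuclideanSpace ℝ (Fin d)))
    (u : ℝ → EuclideanSpace ℝ (Fin d) → ℝ) (u₀ : EuclideanSpace ℝ (Fin d) → ℝ) : Prop :=
  ContinuousOn (fun p : ℝ × EuclideanSpace ℝ (Fin d) => u p.1 p.2) (Ico 0 T ×ˢ Ω) ∧
  ∀ x ∈ Ω, u 0 x = u₀ x

/-- `u` has finite extinction time `T` on `Ω`: it extends continuously to
`{T} × Ω` with value `0` there, while `u(t,·)` is not identically zero for `0 < t < T`. -/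
def ExtinctAt {d : ℕ} (T : ℝ) (Ω : Set (EuclideanSpace ℝ (Fin d)))
    (u : ℝ → EuclideanSpace ℝ (Fin d) → ℝ) : Prop :=
  ContinuousOn (fun p : ℝ × EuclideanSpace ℝ (Fin d) => u p.1 p.2) (Ioc 0 T ×ˢ Ω) ∧
  (∀ x ∈ Ω, u T x = 0) ∧
  ∀ t ∈ Ioo 0 T, ∃ x ∈ Ω, u t x ≠ 0


abbrev EE (d : ℕ) := EuclideanSpace ℝ (Fin d)

noncomputable def eb {d : ℕ} (i : Fin d) : EE d := EuclideanSpace.single i 1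

lemma sd_bound (f f' f'' : ℝ → ℝ) (A ω h : ℝ) (hh : 0 < h)
    (h1 : ∀ θ, |θ| ≤ h → HasDerivAt f (f' θ) θ)
    (h2 : ∀ θ, |θ| ≤ h → HasDerivAt f' (f'' θ) θ)
    (h3 : ∀ θ, |θ| ≤ h → |f'' θ - A| ≤ ω) :
    |f h + f (-h) - 2 * f 0 - A * h ^ 2| ≤ ω * h ^ 2 := by
  have habs : ∀ x ∈ Icc 0 h, |x| ≤ h ∧ |-x| ≤ h := by
    intro x hx
    rw [abs_neg, abs_of_nonneg hx.1]; exact ⟨hx.2, hx.2⟩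
  have hk : ∀ x ∈ Icc 0 h, HasDerivAt (fun x => f' x - f' (-x) - 2 * A * x)
      (f'' x + f'' (-x) - 2 * A) x := by
    intro x hx
    have a1 := h2 x (habs x hx).1
    have a2 : HasDerivAt (fun x => f' (-x)) (f'' (-x) * (-1)) x :=
      HasDerivAt.comp x (h2 (-x) (habs x hx).2) (hasDerivAt_neg x)
    have a3 := (hasDerivAt_id x).const_mul (2 * A)
    exact ((a1.sub a2).sub a3).congr_deriv (by ring)
  have hg : ∀ x ∈ Icc 0 h, HasDerivAt (fun x => f x + f (-x) - 2 * f 0 - A * x ^ 2)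
      (f' x - f' (-x) - 2 * A * x) x := by
    intro x hx
    have a1 := h1 x (habs x hx).1
    have a2 : HasDerivAt (fun x => f (-x)) (f' (-x) * (-1)) x :=
      HasDerivAt.comp x (h1 (-x) (habs x hx).2) (hasDerivAt_neg x)
    have a3 := (hasDerivAt_pow 2 x).const_mul A
    exact (((a1.add a2).sub_const (2 * f 0)).sub a3).congr_deriv (by simp; ring)
  have hkb : ∀ x ∈ Icc 0 h, |f' x - f' (-x) - 2 * A * x| ≤ 2 * ω * x := by
    intro x hx
    have := image_norm_le_of_norm_deriv_right_le_deriv_boundary (a := 0) (b := h)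
      (f := (fun x => f' x - f' (-x) - 2 * A * x)) (f' := fun x => f'' x + f'' (-x) - 2 * A)
      (B := fun x => 2 * ω * x) (B' := fun _ => 2 * ω)
      (fun x hx => (hk x hx).continuousAt.continuousWithinAt)
      (fun x hx => (hk x ⟨hx.1, hx.2.le⟩).hasDerivWithinAt) (by simp)
      (fun x => by simpa using (hasDerivAt_id x).const_mul (2 * ω))
      (fun x hx => by
        have b := habs x ⟨hx.1, hx.2.le⟩
        have b1 := abs_le.1 (h3 x b.1)
        have b2 := abs_le.1 (h3 (-x) b.2)
        rw [Real.norm_eq_abs, abs_le]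
        constructor <;> linarith [b1.1, b1.2, b2.1, b2.2])
    simpa using this hx
  have := image_norm_le_of_norm_deriv_right_le_deriv_boundary (a := 0) (b := h)
      (f := (fun x => f x + f (-x) - 2 * f 0 - A * x ^ 2))
      (f' := fun x => f' x - f' (-x) - 2 * A * x)
      (B := fun x => ω * x ^ 2) (B' := fun x => 2 * ω * x)
      (fun x hx => (hg x hx).continuousAt.continuousWithinAt)
      (fun x hx => (hg x ⟨hx.1, hx.2.le⟩).hasDerivWithinAt) (by
        simp [two_mul])
      (fun x => by
        have := (hasDerivAt_pow 2 x).const_mul ω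
        exact this.congr_deriv (by simp; ring))
      (fun x hx => by
        simpa using hkb x ⟨hx.1, hx.2.le⟩)
  simpa using this ⟨hh.le, le_refl h⟩

lemma unif_near {X : Type*} [PseudoMetricSpace X] {C Q : Set X} (hC : IsCompact C) (hQ : IsOpen Q)
    (hCQ : C ⊆ Q) (f : X → ℝ) (hf : ContinuousOn f Q) (ε : ℝ) (hε : 0 < ε) :
    ∃ δ > 0, ∀ p ∈ C, ∀ q, dist p q < δ → q ∈ Q ∧ |f q - f p| ≤ ε := by
  obtain ⟨δ1, h1, h2⟩ := hC.exists_thickening_subset_open hQ hCQ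
  have := hC.uniformContinuousAt_of_continuousAt f
    (fun a ha => hf.continuousAt (hQ.mem_nhds (hCQ ha))) (Metric.dist_mem_uniformity hε)
  obtain ⟨δ2, h3, h4⟩ := Metric.mem_uniformity_dist.1 this
  refine ⟨min δ1 δ2, lt_min h1 h3, fun p hp q hq => ⟨h2 ?_, ?_⟩⟩
  · exact Metric.mem_thickening_iff.2 ⟨p, hp, by rw [dist_comm]; exact lt_of_lt_of_le hq (min_le_left _ _)⟩
  · have h5 : dist (f p) (f q) < ε := h4 (lt_of_lt_of_le hq (min_le_right _ _)) hp
    rw [dist_comm, Real.dist_eq] at h5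
    exact h5.le

/-- discrete Laplacian -/
noncomputable def lapd {d : ℕ} (F : EE d → ℝ) (y : EE d) (h : ℝ) : ℝ :=
  ∑ i : Fin d, (F (y + h • eb i) + F (y - h • eb i) - 2 * F y)

lemma norm_eb {d : ℕ} (i : Fin d) : ‖(eb i : EE d)‖ = 1 := by simp [eb]

lemma hasDerivAt_shift {d : ℕ} {F : EE d → ℝ} {g : ℝ} {y : EE d} {i : Fin d} {θ : ℝ}
    (h : HasDerivAt (fun h : ℝ => F (y + θ • eb i + h • eb i)) g 0) :
    HasDerivAt (fun h : ℝ => F (y + h • eb i)) g θ := by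
  have h' : HasDerivAt (fun h : ℝ => F (y + θ • eb i + h • eb i)) g (θ - θ) := by simpa using h
  have := HasDerivAt.comp (h := fun x : ℝ => x - θ) θ h' ((hasDerivAt_id θ).sub_const θ)
  simp only [mul_one] at this
  refine this.congr_of_eventuallyEq (Filter.Eventually.of_forall fun x => ?_)
  simp only [Function.comp]
  congr 1
  rw [add_assoc, ← add_smul]; congr 2; ring

lemma unif_lap {d : ℕ} (F : ℝ → EE d → ℝ) (G H : Fin d → ℝ → EE d → ℝ)
    (Q C : Set (ℝ × EE d)) (hQ : IsOpen Q) (hC : IsCompact C) (hCQ : C ⊆ Q)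
    (h1 : ∀ p ∈ Q, ∀ i, HasDerivAt (fun h : ℝ => F p.1 (p.2 + h • eb i)) (G i p.1 p.2) 0)
    (h2 : ∀ p ∈ Q, ∀ i, HasDerivAt (fun h : ℝ => G i p.1 (p.2 + h • eb i)) (H i p.1 p.2) 0)
    (hH : ∀ i, ContinuousOn (fun p : ℝ × EE d => H i p.1 p.2) Q) (ε : ℝ) (hε : 0 < ε) :
    ∃ h0 > 0, ∀ h, 0 < h → h < h0 → ∀ p ∈ C,
      |lapd (F p.1) p.2 h - h ^ 2 * ∑ i, H i p.1 p.2| ≤ ε * h ^ 2 := by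
  have hε' : 0 < ε / (d + 1) := by positivity
  choose δ hδ hδ2 using fun i => unif_near hC hQ hCQ _ (hH i) (ε / (d + 1)) hε'
  obtain ⟨h0, hh0, hh1⟩ : ∃ h0 > 0, ∀ i, h0 ≤ δ i := by
    by_cases hd : Nonempty (Fin d)
    · obtain ⟨i, hi⟩ := Finite.exists_min δ
      exact ⟨δ i, hδ i, hi⟩
    · exact ⟨1, one_pos, fun i => (hd ⟨i⟩).elim⟩
  refine ⟨h0, hh0, fun h hh hlt p hp => ?_⟩
  have key : ∀ i, |(F p.1 (p.2 + h • eb i) + F p.1 (p.2 - h • eb i) - 2 * F p.1 p.2)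
      - h ^ 2 * H i p.1 p.2| ≤ ε / (d + 1) * h ^ 2 := by
    intro i
    have hin : ∀ θ, |θ| ≤ h → (p.1, p.2 + θ • eb i) ∈ Q ∧
        |H i p.1 (p.2 + θ • eb i) - H i p.1 p.2| ≤ ε / (d + 1) := by
      intro θ hθ
      apply hδ2 i p hp (p.1, p.2 + θ • eb i)
      rw [Prod.dist_eq]
      simp only [dist_self, dist_self_add_right, norm_smul, norm_eb, mul_one, Real.norm_eq_abs]
      rw [max_eq_right (abs_nonneg _)]
      linarith [hh1 i]
    have := sd_bound (fun θ => F p.1 (p.2 + θ • eb i)) (fun θ => G i p.1 (p.2 + θ • eb i))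
      (fun θ => H i p.1 (p.2 + θ • eb i)) (H i p.1 p.2) (ε / (d + 1)) h hh
      (fun θ hθ => hasDerivAt_shift (h1 _ (hin θ hθ).1 i))
      (fun θ hθ => hasDerivAt_shift (h2 _ (hin θ hθ).1 i)) (fun θ hθ => (hin θ hθ).2)
    simp only [zero_smul, add_zero, neg_smul, ← sub_eq_add_neg] at this
    rwa [mul_comm (H i p.1 p.2)] at this
  unfold lapd
  rw [Finset.mul_sum, ← Finset.sum_sub_distrib]
  refine (Finset.abs_sum_le_sum_abs _ _).trans ((Finset.sum_le_sum fun i _ => key i).trans ?_)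
  simp only [Finset.sum_const, Finset.card_univ, Fintype.card_fin, nsmul_eq_mul]
  rw [← mul_assoc]
  gcongr
  rw [mul_div_assoc', div_le_iff₀ (by positivity)]
  nlinarith

lemma unif_dt {d : ℕ} (F Ft : ℝ → EE d → ℝ)
    (Q C : Set (ℝ × EE d)) (hQ : IsOpen Q) (hC : IsCompact C) (hCQ : C ⊆ Q)
    (h1 : ∀ p ∈ Q, HasDerivAt (fun s : ℝ => F s p.2) (Ft p.1 p.2) p.1)
    (hF : ContinuousOn (fun p : ℝ × EE d => Ft p.1 p.2) Q) (ε : ℝ) (hε : 0 < ε) :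
    ∃ h0 > 0, ∀ h, 0 < h → h < h0 → ∀ p ∈ C,
      |F p.1 p.2 - F (p.1 - h) p.2 - h * Ft p.1 p.2| ≤ ε * h := by
  obtain ⟨δ, hδ, hδ2⟩ := unif_near hC hQ hCQ _ hF ε hε
  refine ⟨δ, hδ, fun h hh hlt p hp => ?_⟩
  have hin : ∀ x ∈ Icc 0 h, (p.1 - x, p.2) ∈ Q ∧ |Ft (p.1 - x) p.2 - Ft p.1 p.2| ≤ ε := by
    intro x hx
    apply hδ2 p hp (p.1 - x, p.2)
    rw [Prod.dist_eq]
    simp only [dist_self]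
    rw [max_eq_left dist_nonneg, Real.dist_eq]
    rw [abs_lt]; constructor <;> linarith [hx.1, hx.2]
  have hg : ∀ x ∈ Icc 0 h, HasDerivAt (fun x => F p.1 p.2 - F (p.1 - x) p.2 - x * Ft p.1 p.2)
      (Ft (p.1 - x) p.2 - Ft p.1 p.2) x := by
    intro x hx
    have a1 : HasDerivAt (fun x => F (p.1 - x) p.2) _ x :=
      HasDerivAt.comp (h := fun x : ℝ => p.1 - x) x (h1 _ (hin x hx).1)
        ((hasDerivAt_id x).const_sub p.1)
    have a2 := (a1.const_sub (F p.1 p.2)).sub ((hasDerivAt_id x).mul_const (Ft p.1 p.2))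
    exact a2.congr_deriv (by simp)
  have := image_norm_le_of_norm_deriv_right_le_deriv_boundary (a := 0) (b := h)
      (f := (fun x => F p.1 p.2 - F (p.1 - x) p.2 - x * Ft p.1 p.2))
      (f' := fun x => Ft (p.1 - x) p.2 - Ft p.1 p.2)
      (B := fun x => ε * x) (B' := fun x => ε)
      (fun x hx => (hg x hx).continuousAt.continuousWithinAt)
      (fun x hx => (hg x ⟨hx.1, hx.2.le⟩).hasDerivWithinAt) (by simp)
      (fun x => by simpa using (hasDerivAt_id x).const_mul ε)
      (fun x hx => (hin x ⟨hx.1, hx.2.le⟩).2)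
  simpa using this ⟨hh.le, le_refl h⟩


lemma hasDerivAt_pospow (n : ℕ) (x : ℝ) :
    HasDerivAt (fun x : ℝ => (max 0 x) ^ (n + 2)) ((n + 2 : ℝ) * (max 0 x) ^ (n + 1)) x := by
  have hne : ∀ y : ℝ, y ≠ 0 →
      HasDerivAt (fun x : ℝ => (max 0 x) ^ (n + 2)) ((n + 2 : ℝ) * (max 0 y) ^ (n + 1)) y := by
    intro y hy
    rcases lt_or_gt_of_ne hy with h | h
    · have : (fun x : ℝ => (max 0 x) ^ (n + 2)) =ᶠ[nhds y] fun _ => 0 := by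
        filter_upwards [Iio_mem_nhds h] with z hz
        simp [max_eq_left (le_of_lt (mem_Iio.1 hz))]
      have h0 := (hasDerivAt_const y (0 : ℝ)).congr_of_eventuallyEq this
      simpa [max_eq_left h.le] using h0
    · have : (fun x : ℝ => (max 0 x) ^ (n + 2)) =ᶠ[nhds y] fun x => x ^ (n + 2) := by
        filter_upwards [Ioi_mem_nhds h] with z hz
        simp [max_eq_right (le_of_lt (mem_Ioi.1 hz))]
      have h0 := (hasDerivAt_pow (n + 2) y).congr_of_eventuallyEq this
      simpa [max_eq_right h.le] using h0
  by_cases hx : x = 0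
  · subst hx
    refine hasDerivAt_of_hasDerivAt_of_ne (g := fun x => (n + 2 : ℝ) * (max 0 x) ^ (n + 1))
      (fun y hy => hne y hy) ?_ ?_
    · fun_prop
    · fun_prop
  · exact hne x hx

noncomputable def qf {d : ℕ} (c : EE d) (ρ : ℝ) (y : EE d) : ℝ := max 0 (1 - ‖y - c‖ ^ 2 / ρ ^ 2)

noncomputable def Kf {d : ℕ} (k : ℕ) (c : EE d) (ρ : ℝ) (y : EE d) : ℝ := qf c ρ y ^ (k + 3)

noncomputable def KG {d : ℕ} (k : ℕ) (c : EE d) (ρ : ℝ) (i : Fin d) (y : EE d) : ℝ :=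
  (k + 3) * qf c ρ y ^ (k + 2) * (-(2 * (y i - c i)) / ρ ^ 2)

noncomputable def KH {d : ℕ} (k : ℕ) (c : EE d) (ρ : ℝ) (i : Fin d) (y : EE d) : ℝ :=
  (k + 3) * (k + 2) * qf c ρ y ^ (k + 1) * (-(2 * (y i - c i)) / ρ ^ 2) ^ 2
    + (k + 3) * qf c ρ y ^ (k + 2) * (-2 / ρ ^ 2)

noncomputable def lapK {d : ℕ} (k : ℕ) (c : EE d) (ρ : ℝ) (y : EE d) : ℝ :=
  4 * (k + 3) * (k + 2) * qf c ρ y ^ (k + 1) * ‖y - c‖ ^ 2 / ρ ^ 4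
    - 2 * (k + 3) * d * qf c ρ y ^ (k + 2) / ρ ^ 2

section
variable {d : ℕ} (k : ℕ) (c : EE d) (ρ : ℝ)

lemma qf_nonneg (y : EE d) : 0 ≤ qf c ρ y := le_max_left _ _

lemma qf_le_one (y : EE d) : qf c ρ y ≤ 1 := by
  unfold qf
  apply max_le zero_le_one
  have : 0 ≤ ‖y - c‖ ^ 2 / ρ ^ 2 := by positivity
  linarith

lemma qf_cont : Continuous (qf c ρ) := by
  unfold qf; fun_prop

lemma qf_zero (hρ : 0 < ρ) (y : EE d) (hy : y ∉ closedBall c ρ) : qf c ρ y = 0 := by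
  unfold qf
  apply max_eq_left
  rw [mem_closedBall, dist_eq_norm, not_le] at hy
  rw [sub_nonpos, one_le_div (by positivity)]
  gcongr

lemma Kf_nonneg (y : EE d) : 0 ≤ Kf k c ρ y := pow_nonneg (qf_nonneg _ _ _) _

lemma Kf_cont : Continuous (Kf k c ρ) := (qf_cont c ρ).pow _

lemma Kf_zero (hρ : 0 < ρ) (y : EE d) (hy : y ∉ closedBall c ρ) : Kf k c ρ y = 0 := by
  simp [Kf, qf_zero c ρ hρ y hy]

lemma lapK_cont : Continuous (lapK k c ρ) := by
  unfold lapK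
  have := qf_cont c ρ
  fun_prop

lemma lapK_zero (hρ : 0 < ρ) (y : EE d) (hy : y ∉ closedBall c ρ) : lapK k c ρ y = 0 := by
  simp [lapK, qf_zero c ρ hρ y hy]

lemma quad_deriv (i : Fin d) (y : EE d) :
    HasDerivAt (fun h : ℝ => 1 - ‖y + h • eb i - c‖ ^ 2 / ρ ^ 2) (-(2 * (y i - c i)) / ρ ^ 2) 0 := by
  have e : ∀ h : ℝ, ‖y + h • eb i - c‖ ^ 2 = ‖y - c‖ ^ 2 + 2 * h * (y i - c i) + h ^ 2 := by
    intro h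
    have : y + h • eb i - c = (y - c) + h • eb i := by abel
    rw [this, norm_add_sq_real, norm_smul, norm_eb, inner_smul_right]
    simp [eb, EuclideanSpace.inner_single_right]
    ring
  simp_rw [e]
  have h1 : HasDerivAt (fun h : ℝ => ‖y - c‖ ^ 2 + 2 * h * (y i - c i) + h ^ 2)
      (2 * (y i - c i)) 0 := by
    have a := ((((hasDerivAt_id (0 : ℝ)).const_mul 2).mul_const (y i - c i)).const_add
      (‖y - c‖ ^ 2)).add (hasDerivAt_pow 2 (0 : ℝ))
    exact a.congr_deriv (by simp)
  exact ((h1.div_const (ρ ^ 2)).const_sub 1).congr_deriv (by ring)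

lemma qf_pow_deriv (n : ℕ) (i : Fin d) (y : EE d) :
    HasDerivAt (fun h : ℝ => qf c ρ (y + h • eb i) ^ (n + 2))
      ((n + 2) * qf c ρ y ^ (n + 1) * (-(2 * (y i - c i)) / ρ ^ 2)) 0 := by
  have h1 := quad_deriv c ρ i y
  have h2 := hasDerivAt_pospow n (1 - ‖y + (0 : ℝ) • eb i - c‖ ^ 2 / ρ ^ 2)
  have := HasDerivAt.comp (h := fun h : ℝ => 1 - ‖y + h • eb i - c‖ ^ 2 / ρ ^ 2) 0 h2 h1
  exact this.congr_deriv (by simp [qf])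

lemma Kf_d1 (i : Fin d) (y : EE d) :
    HasDerivAt (fun h : ℝ => Kf k c ρ (y + h • eb i)) (KG k c ρ i y) 0 := by
  have := qf_pow_deriv c ρ (k + 1) i y
  refine this.congr_deriv ?_
  unfold KG; push_cast; ring

lemma Kf_d2 (i : Fin d) (y : EE d) :
    HasDerivAt (fun h : ℝ => KG k c ρ i (y + h • eb i)) (KH k c ρ i y) 0 := by
  have h1 := qf_pow_deriv c ρ k i y
  have h2 : HasDerivAt (fun h : ℝ => -(2 * ((y + h • eb i) i - c i)) / ρ ^ 2) (-2 / ρ ^ 2) 0 := by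
    have : ∀ h : ℝ, -(2 * ((y + h • eb i) i - c i)) / ρ ^ 2
        = -(2 * (y i - c i)) / ρ ^ 2 + h * (-2 / ρ ^ 2) := by
      intro h; simp [eb]; ring
    simp_rw [this]
    simpa using ((hasDerivAt_id (0 : ℝ)).mul_const (-2 / ρ ^ 2)).const_add (-(2 * (y i - c i)) / ρ ^ 2)
  have h3 := (h1.const_mul (k + 3 : ℝ)).mul h2
  refine h3.congr_deriv ?_
  simp [KH]; ring

lemma KH_cont (i : Fin d) : Continuous (KH k c ρ i) := by
  unfold KH
  have := qf_cont c ρ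
  fun_prop

lemma KH_sum (y : EE d) : ∑ i, KH k c ρ i y = lapK k c ρ y := by
  unfold KH lapK
  rw [Finset.sum_add_distrib, ← Finset.mul_sum, EuclideanSpace.norm_sq_eq]
  simp only [Finset.sum_const, Finset.card_univ, Fintype.card_fin, nsmul_eq_mul]
  have : ∑ i, (-(2 * (y i - c i)) / ρ ^ 2) ^ 2 = 4 / ρ ^ 4 * ∑ i, ‖(y - c) i‖ ^ 2 := by
    rw [Finset.mul_sum]
    refine Finset.sum_congr rfl fun i _ => ?_
    simp only [PiLp.sub_apply, Real.norm_eq_abs, sq_abs]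
    rw [div_pow, ← pow_mul]; ring
  rw [this]; ring

lemma lapK_bound (hρ : 0 < ρ) (y : EE d) :
    |lapK k c ρ y| ≤ (4 * (k + 3) * (k + 2) + 2 * (k + 3) * d) / ρ ^ 2 * qf c ρ y ^ (k + 1) := by
  by_cases hy : y ∈ closedBall c ρ
  · have h0 := qf_nonneg c ρ y
    have h1 := qf_le_one c ρ y
    rw [mem_closedBall, dist_eq_norm] at hy
    have h2 : ‖y - c‖ ^ 2 ≤ ρ ^ 2 := by gcongr
    have e1 : qf c ρ y ^ (k + 2) ≤ qf c ρ y ^ (k + 1) := pow_le_pow_of_le_one h0 h1 (by omega)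
    have e2 : 0 ≤ qf c ρ y ^ (k + 1) := by positivity
    have e3 : 0 ≤ qf c ρ y ^ (k + 2) := by positivity
    have a1 : 4 * (k + 3) * (k + 2) * qf c ρ y ^ (k + 1) * ‖y - c‖ ^ 2 / ρ ^ 4
        ≤ 4 * (k + 3) * (k + 2) / ρ ^ 2 * qf c ρ y ^ (k + 1) := by
      calc _ ≤ 4 * (k + 3) * (k + 2) * qf c ρ y ^ (k + 1) * ρ ^ 2 / ρ ^ 4 := by gcongr
        _ = _ := by field_simp
    have a0 : 0 ≤ 4 * (k + 3) * (k + 2) * qf c ρ y ^ (k + 1) * ‖y - c‖ ^ 2 / ρ ^ 4 := by positivity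
    have b0 : 0 ≤ 2 * (k + 3) * d * qf c ρ y ^ (k + 2) / ρ ^ 2 := by positivity
    have b1 : 2 * (k + 3) * d * qf c ρ y ^ (k + 2) / ρ ^ 2
       ≤ 2 * (k + 3) * d / ρ ^ 2 * qf c ρ y ^ (k + 1) := by
      calc _ ≤ 2 * (k + 3) * d * qf c ρ y ^ (k + 1) / ρ ^ 2 := by gcongr
        _ = _ := by ring
    have c0 : 0 ≤ 4 * (k + 3) * (k + 2) / ρ ^ 2 * qf c ρ y ^ (k + 1) := by positivity
    have c1 : 0 ≤ 2 * (k + 3) * d / ρ ^ 2 * qf c ρ y ^ (k + 1) := by positivity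
    rw [add_div, add_mul]
    unfold lapK
    rw [abs_le]
    constructor <;> linarith
  · rw [lapK_zero k c ρ hρ y hy, qf_zero c ρ hρ y hy]; simp

end

lemma int_cs {d : ℕ} {f φ : EE d → ℝ} {c : EE d} {ρ : ℝ} (hf : Continuous f) (hφ : Continuous φ)
    (h0 : ∀ y, y ∉ closedBall c ρ → φ y = 0) : Integrable (fun y => f y * φ y) := by
  refine (hf.mul hφ).integrable_of_hasCompactSupport ?_
  exact HasCompactSupport.intro (isCompact_closedBall c ρ) (fun y hy => by simp [h0 y hy])

lemma cont_int {d : ℕ} {X : Type*} [TopologicalSpace X] [FirstCountableTopology X] [LocallyCompactSpace X]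
    {F : X → EE d → ℝ} {φ : EE d → ℝ} {c : EE d} {ρ : ℝ}
    (hF : Continuous (fun p : X × EE d => F p.1 p.2)) (hφ : Continuous φ)
    (h0 : ∀ y, y ∉ closedBall c ρ → φ y = 0) : Continuous (fun s => ∫ y, F s y * φ y) := by
  have : (fun s => ∫ y, F s y * φ y) = fun s => ∫ y in closedBall c ρ, F s y * φ y := by
    funext s
    rw [setIntegral_eq_integral_of_forall_compl_eq_zero]
    intro y hy; simp [h0 y hy]
  rw [this]
  apply continuous_parametric_integral_of_continuous _ (isCompact_closedBall c ρ)
  exact hF.mul (hφ.comp continuous_snd)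

lemma step_mono (Q : ℝ → ℝ) (t1 t2 h1 : ℝ) (h12 : t1 ≤ t2) (hh : 0 < h1)
    (hQ : ∀ h, 0 < h → h < h1 → ∀ s ∈ Icc t1 t2, t1 ≤ s - h → Q s ≤ Q (s - h)) : Q t2 ≤ Q t1 := by
  rcases eq_or_lt_of_le h12 with rfl | hlt
  · exact le_refl _
  obtain ⟨n, hn⟩ := exists_nat_gt ((t2 - t1) / h1)
  have hn0 : (0 : ℝ) < n := lt_of_le_of_lt (by have := sub_pos.2 hlt; positivity) hn
  set h := (t2 - t1) / n with hdef
  have hp : 0 < h := div_pos (sub_pos.2 hlt) hn0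
  have hlt1 : h < h1 := by
    rw [hdef, div_lt_iff₀ hn0]; rw [div_lt_iff₀ hh] at hn; linarith
  have key : ∀ j : ℕ, j ≤ n → Q (t1 + j * h) ≤ Q t1 := by
    intro j
    induction j with
    | zero => simp
    | succ j ih =>
      intro hj
      have hj' : ((j + 1 : ℕ) : ℝ) ≤ n := by exact_mod_cast hj
      have hle : (j + 1 : ℕ) * h ≤ t2 - t1 := by
        calc ((j + 1 : ℕ) : ℝ) * h ≤ n * h := by gcongr
          _ = _ := by rw [hdef]; field_simp
      have hjh : 0 ≤ (j : ℝ) * h := by positivity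
      push_cast at hle ⊢
      have := hQ h hp hlt1 (t1 + (j + 1) * h) ⟨by nlinarith, by linarith⟩ (by nlinarith)
      have e : t1 + (j + 1 : ℝ) * h - h = t1 + j * h := by ring
      rw [e] at this
      exact this.trans (ih (by omega))
  have := key n le_rfl
  have e : t1 + (n : ℝ) * h = t2 := by rw [hdef]; field_simp; ring
  rwa [e] at this

lemma step_int (Y J : ℝ → ℝ) (t1 t2 : ℝ) (h12 : t1 ≤ t2) (hJ : Continuous J)
    (hY : ∀ ε > 0, ∃ h0 > 0, ∀ h, 0 < h → h < h0 → ∀ s ∈ Icc t1 t2, t1 ≤ s - h →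
      Y s - Y (s - h) ≤ h * (J s + ε)) :
    Y t2 - Y t1 ≤ ∫ s in t1..t2, J s := by
  have key : ∀ ε > 0, Y t2 - Y t1 ≤ (∫ s in t1..t2, J s) + 2 * ε * (t2 - t1) := by
    intro ε hε
    obtain ⟨h0, hh0, H⟩ := hY ε hε
    obtain ⟨δ, hδ, hδ2⟩ := unif_near (isCompact_Icc (a := t1) (b := t2)) isOpen_univ
      (subset_univ _) J hJ.continuousOn ε hε
    have := step_mono (fun s => Y s - (∫ σ in t1..s, J σ) - 2 * ε * s) t1 t2 (min h0 δ) h12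
      (lt_min hh0 hδ) (by
        intro h hp hlt s hs hsh
        have a := H h hp (lt_of_lt_of_le hlt (min_le_left _ _)) s hs hsh
        have hlt2 := lt_of_lt_of_le hlt (min_le_right _ _)
        have b : (∫ σ in t1..s, J σ) - (∫ σ in t1..(s - h), J σ) = ∫ σ in (s - h)..s, J σ :=
          intervalIntegral.integral_interval_sub_left (hJ.intervalIntegrable _ _)
            (hJ.intervalIntegrable _ _)
        have c : ∫ σ in (s - h)..s, (J s - ε) ≤ ∫ σ in (s - h)..s, J σ := by
          apply intervalIntegral.integral_mono_on (by linarith) (by simp)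
            (hJ.intervalIntegrable _ _)
          intro x hx
          have := (hδ2 s hs x (by rw [Real.dist_eq, abs_lt]; constructor <;> linarith [hx.1, hx.2])).2
          linarith [(abs_le.1 this).1]
        rw [intervalIntegral.integral_const] at c
        simp only [sub_sub_cancel, smul_eq_mul] at c
        nlinarith)
    simp only [intervalIntegral.integral_same] at this
    linarith
  refine le_of_forall_pos_le_add fun η hη => ?_
  have h1 : 0 ≤ t2 - t1 := by linarith
  have := key (η / (2 * (t2 - t1 + 1))) (by positivity)
  refine this.trans ?_
  gcongr
  have e : 2 * (η / (2 * (t2 - t1 + 1))) * (t2 - t1) = η * ((t2 - t1) / (t2 - t1 + 1)) := by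
    field_simp
  rw [e]
  have : (t2 - t1) / (t2 - t1 + 1) ≤ 1 := by rw [div_le_one (by linarith)]; linarith
  nlinarith


lemma lapd_int {d : ℕ} (Z : EE d → ℝ) (φ : EE d → ℝ) (hZ : Continuous Z) (hφ : Continuous φ)
    (c : EE d) (ρ : ℝ) (h0 : ∀ y, y ∉ closedBall c ρ → φ y = 0) (h : ℝ) :
    ∫ y, lapd Z y h * φ y = ∫ y, Z y * lapd φ y h := by
  have hsupp : HasCompactSupport φ := HasCompactSupport.intro (isCompact_closedBall c ρ) h0
  have I : ∀ g f : EE d → ℝ, Continuous g → Continuous f → HasCompactSupport f →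
      Integrable (fun y => g y * f y) := fun g f hg hf hs =>
    (hg.mul hf).integrable_of_hasCompactSupport hs.mul_left
  have hs1 : ∀ v : EE d, HasCompactSupport (fun y => φ (y + v)) := fun v =>
    hsupp.comp_homeomorph (Homeomorph.addRight v)
  have shift : ∀ v : EE d, ∫ y, Z (y + v) * φ y = ∫ y, Z y * φ (y - v) := by
    intro v
    rw [← integral_sub_right_eq_self (fun y => Z (y + v) * φ y) v]
    simp
  have hI1 : ∀ v : EE d, Integrable (fun y => Z (y + v) * φ y) := fun v =>
    I _ _ (by fun_prop) hφ hsupp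
  have hI2 : ∀ v : EE d, Integrable (fun y => Z y * φ (y + v)) := fun v =>
    I _ _ hZ (by fun_prop) (hs1 v)
  have hI3 : ∀ v : EE d, Integrable (fun y => Z y * φ (y - v)) := fun v => by
    simpa [sub_eq_add_neg] using hI2 (-v)
  have hI4 : ∀ v : EE d, Integrable (fun y => Z (y - v) * φ y) := fun v => by
    simpa [sub_eq_add_neg] using hI1 (-v)
  have hI5 : Integrable (fun y => 2 * (Z y * φ y)) := (I _ _ hZ hφ hsupp).const_mul 2
  have e1 : ∀ y, lapd Z y h * φ y = ∑ i : Fin d,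
      (Z (y + h • eb i) * φ y + Z (y - h • eb i) * φ y - 2 * (Z y * φ y)) := by
    intro y; unfold lapd; rw [Finset.sum_mul]; exact Finset.sum_congr rfl fun i _ => by ring
  have e2 : ∀ y, Z y * lapd φ y h = ∑ i : Fin d,
      (Z y * φ (y + h • eb i) + Z y * φ (y - h • eb i) - 2 * (Z y * φ y)) := by
    intro y; unfold lapd; rw [Finset.mul_sum]; exact Finset.sum_congr rfl fun i _ => by ring
  simp_rw [e1, e2]
  have A1 : ∀ v, Integrable (fun y => Z (y + v) * φ y + Z (y - v) * φ y) :=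
    fun v => (hI1 v).add (hI4 v)
  have A2 : ∀ v, Integrable (fun y => Z y * φ (y + v) + Z y * φ (y - v)) :=
    fun v => (hI2 v).add (hI3 v)
  have J1 : ∀ v, Integrable (fun y => Z (y + v) * φ y + Z (y - v) * φ y - 2 * (Z y * φ y)) :=
    fun v => (A1 v).sub hI5
  have J2 : ∀ v, Integrable (fun y => Z y * φ (y + v) + Z y * φ (y - v) - 2 * (Z y * φ y)) :=
    fun v => (A2 v).sub hI5
  rw [integral_finsetSum _ (fun i _ => J1 (h • eb i)),
    integral_finsetSum _ (fun i _ => J2 (h • eb i))]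
  refine Finset.sum_congr rfl fun i _ => ?_
  rw [integral_sub (A1 _) hI5, integral_sub (A2 _) hI5,
    integral_add (hI1 _) (hI4 _), integral_add (hI2 _) (hI3 _), shift]
  have := shift (-(h • eb i))
  simp only [← sub_eq_add_neg, sub_neg_eq_add] at this
  rw [this]; ring

lemma wf {d : ℕ} (z Z : ℝ → EE d → ℝ) (hz : Continuous (fun p : ℝ × EE d => z p.1 p.2))
    (hZ : Continuous (fun p : ℝ × EE d => Z p.1 p.2)) (k : ℕ) (c : EE d) (ρ : ℝ) (hρ : 0 < ρ)
    (t1 t2 : ℝ) (h12 : t1 ≤ t2)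
    (H : ∀ ε > 0, ∃ h0 > 0, ∀ h, 0 < h → h < h0 → ∀ s ∈ Icc t1 t2, t1 ≤ s - h →
      ∀ y ∈ closedBall c ρ, h * (z s y - z (s - h) y) ≤ lapd (Z s) y h + ε * h ^ 2) :
    (∫ y, z t2 y * Kf k c ρ y) - ∫ y, z t1 y * Kf k c ρ y
      ≤ ∫ s in t1..t2, ∫ y, Z s y * lapK k c ρ y := by
  have hz' : ∀ s, Continuous (z s) := fun s => hz.comp (Continuous.prodMk_right s)
  have hZ' : ∀ s, Continuous (Z s) := fun s => hZ.comp (Continuous.prodMk_right s)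
  have hK := Kf_cont k c ρ
  have hK0 := Kf_zero k c ρ hρ
  have hL := lapK_cont k c ρ
  have hL0 := lapK_zero k c ρ hρ
  refine step_int (fun s => ∫ y, z s y * Kf k c ρ y) (fun s => ∫ y, Z s y * lapK k c ρ y) t1 t2 h12
    (cont_int hZ hL hL0) ?_
  intro ε hε
  -- bound for Z
  obtain ⟨B, hB⟩ := ((isCompact_Icc (a := t1) (b := t2)).prod
    (isCompact_closedBall c (ρ + 1))).exists_bound_of_continuousOn (hZ.continuousOn)
  have hB' : ∀ s ∈ Icc t1 t2, ∀ y ∈ closedBall c (ρ + 1), |Z s y| ≤ |B| := fun s hs y hy =>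
    (hB (s, y) ⟨hs, hy⟩).trans (le_abs_self B)
  set vol := (volume (closedBall c (ρ + 1))).toReal with hvol
  have hvol0 : 0 ≤ vol := ENNReal.toReal_nonneg
  set IK := ∫ y, Kf k c ρ y with hIK
  have hIK0 : 0 ≤ IK := integral_nonneg (Kf_nonneg k c ρ)
  have hKint : Integrable (Kf k c ρ) := by
    simpa using int_cs (f := fun _ => (1 : ℝ)) continuous_const hK hK0
  set ε1 := ε / (2 * (|B| * vol + 1)) with hε1
  set ε2 := ε / (2 * (IK + 1)) with hε2
  have hp1 : 0 < ε1 := by positivity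
  have hp2 : 0 < ε2 := by positivity
  have he1 : |B| * vol * ε1 ≤ ε / 2 := by
    have : |B| * vol * ε1 = (|B| * vol) / (|B| * vol + 1) * (ε / 2) := by rw [hε1]; field_simp
    rw [this]
    have : (|B| * vol) / (|B| * vol + 1) ≤ 1 := by
      rw [div_le_one (by positivity)]; linarith
    nlinarith
  have he2 : IK * ε2 ≤ ε / 2 := by
    have : IK * ε2 = IK / (IK + 1) * (ε / 2) := by rw [hε2]; field_simp
    rw [this]
    have : IK / (IK + 1) ≤ 1 := by
      rw [div_le_one (by positivity)]; linarith
    nlinarith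
  obtain ⟨h0, hh0, H0⟩ := H ε2 hp2
  obtain ⟨h1, hh1, H1⟩ := unif_lap (fun _ => Kf k c ρ) (fun i _ => KG k c ρ i)
    (fun i _ => KH k c ρ i) univ ({0} ×ˢ closedBall c (ρ + 1)) isOpen_univ
    (isCompact_singleton.prod (isCompact_closedBall c (ρ + 1))) (subset_univ _)
    (fun p _ i => Kf_d1 k c ρ i p.2) (fun p _ i => Kf_d2 k c ρ i p.2)
    (fun i => ((KH_cont k c ρ i).comp continuous_snd).continuousOn) ε1 hp1
  refine ⟨min h0 (min h1 1), by positivity, fun h hh hlt s hs hsh => ?_⟩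
  have l0 : h < h0 := lt_of_lt_of_le hlt (min_le_left _ _)
  have l1 : h < h1 := lt_of_lt_of_le hlt ((min_le_right _ _).trans (min_le_left _ _))
  have l2 : h < 1 := lt_of_lt_of_le hlt ((min_le_right _ _).trans (min_le_right _ _))
  have hlapc : ∀ F : EE d → ℝ, Continuous F → Continuous (fun y => lapd F y h) := by
    intro F hF; unfold lapd; fun_prop
  -- first
  have A1 : h * ((∫ y, z s y * Kf k c ρ y) - ∫ y, z (s - h) y * Kf k c ρ y)
      ≤ (∫ y, lapd (Z s) y h * Kf k c ρ y) + ε2 * h ^ 2 * IK := by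
    rw [← integral_sub (int_cs (hz' s) hK hK0) (int_cs (hz' _) hK hK0), ← integral_const_mul, hIK,
      ← integral_const_mul, ← integral_add (int_cs (hlapc _ (hZ' s)) hK hK0) (hKint.const_mul _)]
    apply integral_mono
    · exact ((int_cs (hz' s) hK hK0).sub (int_cs (hz' _) hK hK0)).const_mul _
    · exact (int_cs (hlapc _ (hZ' s)) hK hK0).add (hKint.const_mul _)
    · intro y
      by_cases hy : y ∈ closedBall c ρ
      · have := mul_le_mul_of_nonneg_right (H0 h hh l0 s hs hsh y hy) (Kf_nonneg k c ρ y)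
        simp only
        nlinarith
      · simp [hK0 y hy]
  rw [lapd_int (Z s) (Kf k c ρ) (hZ' s) hK c ρ hK0 h] at A1
  have zero_out : ∀ y, y ∉ closedBall c (ρ + 1) → lapd (Kf k c ρ) y h - h ^ 2 * lapK k c ρ y = 0 := by
    intro y hy
    rw [mem_closedBall, dist_eq_norm, not_le] at hy
    have o1 : ∀ v : EE d, ‖v‖ ≤ 1 → Kf k c ρ (y + v) = 0 := by
      intro v hv
      apply hK0
      rw [mem_closedBall, dist_eq_norm, not_le]
      have : y - c = (y + v - c) - v := by abel
      rw [this] at hy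
      linarith [norm_sub_le (y + v - c) v]
    have n1 : ∀ i : Fin d, ‖h • (eb i : EE d)‖ ≤ 1 := by
      intro i; rw [norm_smul, norm_eb, Real.norm_eq_abs, abs_of_pos hh]; linarith
    have o0 : Kf k c ρ y = 0 := by simpa using o1 0 (by simp)
    have o2 : lapK k c ρ y = 0 := hL0 y (by rw [mem_closedBall, dist_eq_norm, not_le]; linarith)
    rw [o2]
    unfold lapd
    have : ∀ i : Fin d, Kf k c ρ (y + h • eb i) + Kf k c ρ (y - h • eb i) - 2 * Kf k c ρ y = 0 := by
      intro i
      rw [o1 _ (n1 i), sub_eq_add_neg y, o1 _ (by rw [norm_neg]; exact n1 i), o0]; simp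
    simp [this]
  have dcont : Continuous (fun y => lapd (Kf k c ρ) y h - h ^ 2 * lapK k c ρ y) :=
    (hlapc _ hK).sub (hL.const_mul _ |>.congr fun _ => rfl)
  have A2 : (∫ y, Z s y * lapd (Kf k c ρ) y h) - h ^ 2 * ∫ y, Z s y * lapK k c ρ y
      ≤ |B| * (ε1 * h ^ 2) * vol := by
    have i1 : Integrable (fun y => Z s y * (lapd (Kf k c ρ) y h - h ^ 2 * lapK k c ρ y)) :=
      int_cs (hZ' s) dcont zero_out
    have i2 : Integrable (fun y => h ^ 2 * (Z s y * lapK k c ρ y)) :=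
      (int_cs (hZ' s) hL hL0).const_mul _
    have i3 : (∫ y, Z s y * lapd (Kf k c ρ) y h)
        = (∫ y, Z s y * (lapd (Kf k c ρ) y h - h ^ 2 * lapK k c ρ y))
          + h ^ 2 * ∫ y, Z s y * lapK k c ρ y := by
      rw [← integral_const_mul, ← integral_add i1 i2]
      congr 1; funext y; ring
    rw [i3, add_sub_cancel_right]
    rw [← setIntegral_eq_integral_of_forall_compl_eq_zero (s := closedBall c (ρ + 1))
      (fun y hy => by rw [zero_out y hy, mul_zero])]
    refine (le_abs_self _).trans ?_
    rw [← Real.norm_eq_abs]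
    refine norm_setIntegral_le_of_norm_le_const (measure_closedBall_lt_top) ?_
    intro y hy
    have := H1 h hh l1 (0, y) ⟨rfl, hy⟩
    simp only [KH_sum] at this
    rw [norm_mul]
    exact mul_le_mul (hB' s hs y hy) this (norm_nonneg _) (abs_nonneg _)
  have A3 : h * ((∫ y, z s y * Kf k c ρ y) - ∫ y, z (s - h) y * Kf k c ρ y)
      ≤ h * (h * ((∫ y, Z s y * lapK k c ρ y) + ε)) := by
    have q1 : ε2 * h ^ 2 * IK ≤ ε / 2 * h ^ 2 := by nlinarith [sq_nonneg h]
    have q2 : |B| * (ε1 * h ^ 2) * vol ≤ ε / 2 * h ^ 2 := by nlinarith [sq_nonneg h]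
    nlinarith
  exact le_of_mul_le_mul_left A3 hh


noncomputable def Av {d : ℕ} (V : EE d → ℝ) (x : EE d) (ρ : ℝ) : ℝ :=
  ∫ y, V (x + ρ • y) * qf 0 1 y ^ 2

lemma q2_cont {d : ℕ} (c : EE d) (ρ : ℝ) : Continuous (fun y => qf c ρ y ^ 2) := (qf_cont c ρ).pow 2

lemma q2_zero {d : ℕ} (c : EE d) (ρ : ℝ) (hρ : 0 < ρ) : ∀ y, y ∉ closedBall c ρ → qf c ρ y ^ 2 = 0 := by
  intro y hy; rw [qf_zero c ρ hρ y hy]; simp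

lemma Av_cont {d : ℕ} (V : EE d → ℝ) (hV : Continuous V) (x : EE d) : Continuous (Av V x) := by
  unfold Av
  exact cont_int (F := fun ρ y => V (x + ρ • y)) (by fun_prop) (q2_cont 0 1) (q2_zero 0 1 one_pos)

lemma Av_zero {d : ℕ} (V : EE d → ℝ) (x : EE d) : Av V x 0 = V x * ∫ y : EE d, qf 0 1 y ^ 2 := by
  unfold Av; simp [integral_const_mul]

lemma qf_scale {d : ℕ} (x : EE d) (ρ : ℝ) (hρ : 0 < ρ) (y : EE d) :
    qf x ρ (x + ρ • y) = qf 0 1 y := by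
  unfold qf
  congr 2
  rw [add_sub_cancel_left, norm_smul, Real.norm_eq_abs, abs_of_pos hρ, sub_zero]
  field_simp

lemma int_scale {d : ℕ} (g : EE d → ℝ) (x : EE d) (ρ : ℝ) (hρ : 0 < ρ) :
    ∫ y, g (x + ρ • y) = (ρ ^ d)⁻¹ * ∫ z, g z := by
  have := Measure.integral_comp_smul (volume : Measure (EE d)) (fun z => g (x + z)) ρ
  simp only [finrank_euclideanSpace, Fintype.card_fin, smul_eq_mul] at this
  rw [this, abs_of_pos (by positivity), integral_add_left_eq_self g x]

lemma Av_eq {d : ℕ} (V : EE d → ℝ) (x : EE d) (ρ : ℝ) (hρ : 0 < ρ) :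
    Av V x ρ = (ρ ^ d)⁻¹ * ∫ z, V z * qf x ρ z ^ 2 := by
  rw [← int_scale (fun z => V z * qf x ρ z ^ 2) x ρ hρ]
  unfold Av
  simp_rw [qf_scale x ρ hρ]

lemma Kf_int {d : ℕ} (x : EE d) (ρ : ℝ) (hρ : 0 < ρ) (k : ℕ) :
    ∫ z, Kf k x ρ z = ρ ^ d * ∫ y : EE d, Kf k 0 1 y := by
  have := int_scale (fun z => Kf k x ρ z) x ρ hρ
  simp only [Kf, qf_scale x ρ hρ] at this
  simp only [Kf]
  rw [this]; field_simp

lemma q2_deriv {d : ℕ} (x z : EE d) (ρ : ℝ) (hρ : 0 < ρ) :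
    HasDerivAt (fun ρ => qf x ρ z ^ 2) (4 * qf x ρ z * ‖z - x‖ ^ 2 / ρ ^ 3) ρ := by
  have h1 : HasDerivAt (fun ρ : ℝ => 1 - ‖z - x‖ ^ 2 / ρ ^ 2) (2 * ‖z - x‖ ^ 2 / ρ ^ 3) ρ := by
    have := (((hasDerivAt_pow 2 ρ).inv (by positivity)).const_mul (‖z - x‖ ^ 2)).const_sub 1
    refine (this.congr_deriv ?_).congr_of_eventuallyEq (Filter.Eventually.of_forall fun y => ?_)
    · simp; field_simp
    · simp [div_eq_mul_inv]
  have := HasDerivAt.comp (h := fun ρ : ℝ => 1 - ‖z - x‖ ^ 2 / ρ ^ 2) ρ (hasDerivAt_pospow 0 _) h1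
  refine this.congr_deriv ?_
  simp [qf]; ring

lemma q2int_deriv {d : ℕ} (V : EE d → ℝ) (hV : Continuous V) (x : EE d) (ρ : ℝ) (hρ : 0 < ρ) :
    HasDerivAt (fun ρ => ∫ z, V z * qf x ρ z ^ 2)
      (∫ z, V z * (4 * qf x ρ z * ‖z - x‖ ^ 2 / ρ ^ 3)) ρ := by
  have hc : ∀ r : ℝ, Continuous (fun z => V z * qf x r z ^ 2) := fun r => hV.mul (q2_cont x r)
  have hc2 : Continuous (fun z => V z * (4 * qf x ρ z * ‖z - x‖ ^ 2 / ρ ^ 3)) := by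
    have := qf_cont x ρ
    fun_prop
  refine (hasDerivAt_integral_of_dominated_loc_of_deriv_le (μ := volume) (s := Ioo (ρ / 2) (2 * ρ))
    (F := fun r z => V z * qf x r z ^ 2)
    (F' := fun r z => V z * (4 * qf x r z * ‖z - x‖ ^ 2 / r ^ 3))
    (bound := (closedBall x (2 * ρ)).indicator fun z => |V z| * (4 * (2 * ρ) ^ 2 / (ρ / 2) ^ 3))
    (x₀ := ρ) ?_ ?_ ?_ ?_ ?_ ?_ ?_).2
  · exact Ioo_mem_nhds (by linarith) (by linarith)
  · exact Filter.Eventually.of_forall fun r => (hc r).aestronglyMeasurable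
  · exact int_cs hV (q2_cont x ρ) (q2_zero x ρ hρ)
  · exact hc2.aestronglyMeasurable
  · refine Filter.Eventually.of_forall fun z r hr => ?_
    have hr0 : 0 < r := by linarith [hr.1]
    by_cases hz : z ∈ closedBall x (2 * ρ)
    · rw [indicator_of_mem hz, norm_mul, Real.norm_eq_abs]
      refine mul_le_mul_of_nonneg_left ?_ (abs_nonneg _)
      have q0 := qf_nonneg x r z
      have q1 := qf_le_one x r z
      rw [Real.norm_eq_abs, abs_of_nonneg (by positivity)]
      rw [mem_closedBall, dist_eq_norm] at hz
      have hr1 := hr.1.le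
      calc 4 * qf x r z * ‖z - x‖ ^ 2 / r ^ 3 ≤ 4 * 1 * (2 * ρ) ^ 2 / (ρ / 2) ^ 3 := by gcongr
        _ = _ := by ring
    · rw [indicator_of_notMem hz, qf_zero x r hr0 z (fun h => hz (closedBall_subset_closedBall hr.2.le h))]
      simp
  · rw [integrable_indicator_iff measurableSet_closedBall]
    exact (ContinuousOn.integrableOn_compact (isCompact_closedBall _ _) (by fun_prop))
  · refine Filter.Eventually.of_forall fun z r hr => ?_
    exact (q2_deriv x z r (by linarith [hr.1])).const_mul (V z)

lemma Av_deriv {d : ℕ} (V : EE d → ℝ) (hV : Continuous V) (x : EE d) (ρ : ℝ) (hρ : 0 < ρ) :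
    HasDerivAt (Av V x) (ρ * (ρ ^ d)⁻¹ / 6 * ∫ z, V z * lapK 0 x ρ z) ρ := by
  have h1 := q2int_deriv V hV x ρ hρ
  have h2 := (hasDerivAt_pow d ρ).inv (by positivity)
  have h3 := h2.mul h1
  have i1 : Integrable (fun z => V z * qf x ρ z ^ 2) := int_cs hV (q2_cont x ρ) (q2_zero x ρ hρ)
  have i2 : Integrable (fun z => V z * (4 * qf x ρ z * ‖z - x‖ ^ 2 / ρ ^ 3)) :=
    int_cs hV (by have := qf_cont x ρ; fun_prop) (fun y hy => by rw [qf_zero x ρ hρ y hy]; simp)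
  have e : ∫ z, V z * lapK 0 x ρ z = (6 / ρ) * (∫ z, V z * (4 * qf x ρ z * ‖z - x‖ ^ 2 / ρ ^ 3))
      + (-(6 * d / ρ ^ 2)) * ∫ z, V z * qf x ρ z ^ 2 := by
    rw [← integral_const_mul, ← integral_const_mul,
      ← integral_add (i2.const_mul _) (i1.const_mul _)]
    congr 1; funext z
    unfold lapK
    simp only [Nat.cast_zero, zero_add]
    field_simp
    ring
  rw [e]
  have hev : Av V x =ᶠ[nhds ρ] fun ρ => (ρ ^ d)⁻¹ * ∫ z, V z * qf x ρ z ^ 2 := by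
    filter_upwards [Ioi_mem_nhds hρ] with r hr
    exact Av_eq V x r hr
  refine HasDerivAt.congr_of_eventuallyEq (h3.congr_deriv ?_) hev
  simp only [Pi.inv_apply]
  generalize (∫ z, V z * (4 * qf x ρ z * ‖z - x‖ ^ 2 / ρ ^ 3)) = I1
  generalize (∫ z, V z * qf x ρ z ^ 2) = I2
  clear h1 h2 h3 e hev i1 i2
  rcases Nat.eq_zero_or_pos d with rfl | hd
  · simp; field_simp
  · have : ρ ^ d = ρ ^ (d - 1) * ρ := by rw [← pow_succ]; congr 1; omega
    rw [this]
    field_simp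
    ring

lemma q2pos {d : ℕ} : 0 < ∫ y : EE d, qf 0 1 y ^ 2 := by
  have hi : Integrable (fun y : EE d => qf 0 1 y ^ 2) := by
    simpa using int_cs (f := fun _ => (1 : ℝ)) continuous_const (q2_cont 0 1) (q2_zero (0 : EE d) 1 one_pos)
  refine (q2_cont 0 1).integral_pos_of_hasCompactSupport_nonneg_nonzero
    (HasCompactSupport.intro (isCompact_closedBall _ _) (q2_zero (0 : EE d) 1 one_pos))
    (fun y => by positivity) (x := 0) (by simp [qf])

lemma Av_nonneg {d : ℕ} (V : EE d → ℝ) (x : EE d) (ρ : ℝ) (h : ∀ y, 0 ≤ V y) : 0 ≤ Av V x ρ :=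
  integral_nonneg fun y => mul_nonneg (h _) (by positivity)

/-- lower mean value -/
lemma mv_low {d : ℕ} (V : EE d → ℝ) (hV : Continuous V) (hV0 : ∀ y, 0 ≤ V y) (x : EE d) (a : ℝ)
    (h0 : ∀ ρ, 0 < ρ → ρ ≤ 5 → ∫ z, V z * lapK 0 x ρ z ≤ 0)
    (h1 : ∀ ρ, 4 ≤ ρ → ρ ≤ 5 → ∫ z, V z * lapK 0 x ρ z ≤ -a) (ha : 0 ≤ a) :
    4 / (6 * 5 ^ d) * a ≤ V x * ∫ y : EE d, qf 0 1 y ^ 2 := by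
  have c := Av_cont V hV x
  have A1 : Av V x 4 ≤ Av V x 0 := by
    have := antitoneOn_of_deriv_nonpos (convex_Icc (0:ℝ) 5) c.continuousOn
      (fun r hr => by
        rw [interior_Icc] at hr
        exact (Av_deriv V hV x r hr.1).differentiableAt.differentiableWithinAt)
      (fun r hr => by
        rw [interior_Icc] at hr
        rw [(Av_deriv V hV x r hr.1).deriv]
        have := hr.1
        exact mul_nonpos_of_nonneg_of_nonpos (by positivity) (h0 r hr.1 hr.2.le))
    exact this ⟨le_refl _, by norm_num⟩ ⟨by norm_num, by norm_num⟩ (by norm_num)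
  have A2 : Av V x 5 + 4 / (6 * 5 ^ d) * a * 5 ≤ Av V x 4 + 4 / (6 * 5 ^ d) * a * 4 := by
    have hd' : ∀ r ∈ Ioo (4:ℝ) 5, HasDerivAt (fun r => Av V x r + 4 / (6 * 5 ^ d) * a * r)
        (r * (r ^ d)⁻¹ / 6 * (∫ z, V z * lapK 0 x r z) + 4 / (6 * 5 ^ d) * a) r := fun r hr => by
      have hr0 : 0 < r := by linarith [hr.1]
      have := (Av_deriv V hV x r hr0).add ((hasDerivAt_id r).const_mul (4 / (6 * 5 ^ d) * a))
      exact this.congr_deriv (by simp)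
    have := antitoneOn_of_deriv_nonpos (convex_Icc (4:ℝ) 5)
      (f := fun r => Av V x r + 4 / (6 * 5 ^ d) * a * r) (by fun_prop)
      (fun r hr => by
        rw [interior_Icc] at hr
        exact (hd' r hr).differentiableAt.differentiableWithinAt)
      (fun r hr => by
        rw [interior_Icc] at hr
        rw [(hd' r hr).deriv]
        have h4 : (4:ℝ) ≤ r := hr.1.le
        have h5 : r ≤ 5 := hr.2.le
        have hp : 0 < r := by linarith
        have := h1 r h4 h5
        have k1 : r * (r ^ d)⁻¹ / 6 ≥ 4 / (6 * 5 ^ d) := by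
          have : r * (r ^ d)⁻¹ / 6 ≥ 4 * (5 ^ d)⁻¹ / 6 := by gcongr
          refine this.trans_eq' ?_
          field_simp
        have k2 : 0 < r * (r ^ d)⁻¹ / 6 := by positivity
        nlinarith)
    exact this ⟨le_refl _, by norm_num⟩ ⟨by norm_num, by norm_num⟩ (by norm_num)
  rw [← Av_zero]
  have := Av_nonneg V x 5 hV0
  linarith

/-- upper mean value -/
lemma mv_up {d : ℕ} (V : EE d → ℝ) (hV : Continuous V) (x : EE d) (N r : ℝ) (hr : 0 < r)
    (h0 : ∀ ρ, 0 < ρ → ρ ≤ r → -(N * ∫ z, Kf 0 x ρ z) ≤ ∫ z, V z * lapK 0 x ρ z) :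
    V x * (∫ y : EE d, qf 0 1 y ^ 2) ≤ Av V x r + N * (∫ y : EE d, Kf 0 0 1 y) / 12 * r ^ 2 := by
  have c := Av_cont V hV x
  set I := ∫ y : EE d, Kf 0 0 1 y with hI
  have hd' : ∀ ρ ∈ Ioo (0:ℝ) r, HasDerivAt (fun ρ => Av V x ρ + N * I / 12 * ρ ^ 2)
      (ρ * (ρ ^ d)⁻¹ / 6 * (∫ z, V z * lapK 0 x ρ z) + N * I / 6 * ρ) ρ := fun ρ hρ => by
    have := (Av_deriv V hV x ρ hρ.1).add ((hasDerivAt_pow 2 ρ).const_mul (N * I / 12))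
    exact this.congr_deriv (by simp; ring)
  have := monotoneOn_of_deriv_nonneg (convex_Icc (0:ℝ) r)
    (f := fun ρ => Av V x ρ + N * I / 12 * ρ ^ 2) (by fun_prop)
      (fun ρ hρ => by
        rw [interior_Icc] at hρ
        exact (hd' ρ hρ).differentiableAt.differentiableWithinAt)
      (fun ρ hρ => by
        rw [interior_Icc] at hρ
        rw [(hd' ρ hρ).deriv]
        have hp := hρ.1
        have h1 := h0 ρ hρ.1 hρ.2.le
        rw [Kf_int x ρ hp, ← hI] at h1
        have k2 : 0 < ρ * (ρ ^ d)⁻¹ / 6 := by positivity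
        have h2 := mul_le_mul_of_nonneg_left h1 k2.le
        have e : ρ * (ρ ^ d)⁻¹ / 6 * -(N * (ρ ^ d * I)) = -(N * I / 6 * ρ) := by
          field_simp
        linarith)
  have := this ⟨le_refl _, hr.le⟩ ⟨hr.le, le_refl _⟩ hr.le
  simp only [Av_zero] at this
  simpa using this


def QQ (d : ℕ) (T : ℝ) : Set (ℝ × EE d) := Ioo 0 T ×ˢ ball 0 6

lemma QQ_open (d : ℕ) (T : ℝ) : IsOpen (QQ d T) := isOpen_Ioo.prod isOpen_ball

structure Sol (d : ℕ) (m T : ℝ) (U Ut : ℝ → EE d → ℝ) (G H : Fin d → ℝ → EE d → ℝ) : Prop where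
  Tpos : 0 < T
  cont : Continuous (fun p : ℝ × EE d => U p.1 p.2)
  nonneg : ∀ s y, 0 ≤ U s y
  pos : ∀ p ∈ QQ d T, 0 < U p.1 p.2
  ext : ∀ y, U T y = 0
  dt : ∀ p ∈ QQ d T, HasDerivAt (fun s : ℝ => U s p.2) (Ut p.1 p.2) p.1
  d1 : ∀ p ∈ QQ d T, ∀ i, HasDerivAt (fun h : ℝ => U p.1 (p.2 + h • eb i)) (G i p.1 p.2) 0
  d2 : ∀ p ∈ QQ d T, ∀ i, HasDerivAt (fun h : ℝ => G i p.1 (p.2 + h • eb i)) (H i p.1 p.2) 0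
  cUt : ContinuousOn (fun p : ℝ × EE d => Ut p.1 p.2) (QQ d T)
  cG : ∀ i, ContinuousOn (fun p : ℝ × EE d => G i p.1 p.2) (QQ d T)
  cH : ∀ i, ContinuousOn (fun p : ℝ × EE d => H i p.1 p.2) (QQ d T)
  pde : ∀ p ∈ QQ d T, Ut p.1 p.2 = ∑ i, (m * U p.1 p.2 ^ (m - 1) * H i p.1 p.2
    + m * (m - 1) * U p.1 p.2 ^ (m - 2) * G i p.1 p.2 ^ 2)

section
variable {d : ℕ} {m T : ℝ} {U Ut : ℝ → EE d → ℝ} {G H : Fin d → ℝ → EE d → ℝ}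

lemma Sol.dtpow (S : Sol d m T U Ut G H) (q : ℝ) (p : ℝ × EE d) (hp : p ∈ QQ d T) :
    HasDerivAt (fun s : ℝ => U s p.2 ^ q) (q * U p.1 p.2 ^ (q - 1) * Ut p.1 p.2) p.1 := by
  have := (S.dt p hp).rpow_const (p := q) (Or.inl (S.pos p hp).ne')
  exact this.congr_deriv (by ring)

lemma Sol.d1pow (S : Sol d m T U Ut G H) (q : ℝ) (p : ℝ × EE d) (hp : p ∈ QQ d T) (i : Fin d) :
    HasDerivAt (fun h : ℝ => U p.1 (p.2 + h • eb i) ^ q)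
      (q * U p.1 p.2 ^ (q - 1) * G i p.1 p.2) 0 := by
  have := (S.d1 p hp i).rpow_const (p := q) (Or.inl (by simpa using (S.pos p hp).ne'))
  exact this.congr_deriv (by simp; ring)

lemma Sol.d2pow (S : Sol d m T U Ut G H) (q : ℝ) (p : ℝ × EE d) (hp : p ∈ QQ d T) (i : Fin d) :
    HasDerivAt (fun h : ℝ => q * U p.1 (p.2 + h • eb i) ^ (q - 1) * G i p.1 (p.2 + h • eb i))
      (q * U p.1 p.2 ^ (q - 1) * H i p.1 p.2 + q * (q - 1) * U p.1 p.2 ^ (q - 2) * G i p.1 p.2 ^ 2)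
      0 := by
  have := ((S.d1pow (q - 1) p hp i).const_mul q).mul (S.d2 p hp i)
  refine this.congr_deriv ?_
  have e : q - 1 - 1 = q - 2 := by ring
  simp [e]; ring

lemma Sol.cpow (S : Sol d m T U Ut G H) (q : ℝ) :
    ContinuousOn (fun p : ℝ × EE d => U p.1 p.2 ^ q) (QQ d T) :=
  S.cont.continuousOn.rpow_const (fun p hp => Or.inl (S.pos p hp).ne')

lemma Sol.contpow (S : Sol d m T U Ut G H) (q : ℝ) (hq : 0 ≤ q) :
    Continuous (fun p : ℝ × EE d => U p.1 p.2 ^ q) :=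
  S.cont.rpow_const (fun _ => Or.inr hq)

lemma fd_sub (F Ft Z : ℝ → EE d → ℝ) (GZ HZ : Fin d → ℝ → EE d → ℝ)
    (Q C : Set (ℝ × EE d)) (hQ : IsOpen Q) (hC : IsCompact C) (hCQ : C ⊆ Q)
    (h0 : ∀ p ∈ Q, HasDerivAt (fun s : ℝ => F s p.2) (Ft p.1 p.2) p.1)
    (hF : ContinuousOn (fun p : ℝ × EE d => Ft p.1 p.2) Q)
    (h1 : ∀ p ∈ Q, ∀ i, HasDerivAt (fun h : ℝ => Z p.1 (p.2 + h • eb i)) (GZ i p.1 p.2) 0)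
    (h2 : ∀ p ∈ Q, ∀ i, HasDerivAt (fun h : ℝ => GZ i p.1 (p.2 + h • eb i)) (HZ i p.1 p.2) 0)
    (hH : ∀ i, ContinuousOn (fun p : ℝ × EE d => HZ i p.1 p.2) Q)
    (hle : ∀ p ∈ C, Ft p.1 p.2 ≤ ∑ i, HZ i p.1 p.2) (ε : ℝ) (hε : 0 < ε) :
    ∃ h0 > 0, ∀ h, 0 < h → h < h0 → ∀ p ∈ C,
      h * (F p.1 p.2 - F (p.1 - h) p.2) ≤ lapd (Z p.1) p.2 h + ε * h ^ 2 := by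
  obtain ⟨a, ha, ha'⟩ := unif_dt F Ft Q C hQ hC hCQ h0 hF (ε / 2) (by positivity)
  obtain ⟨b, hb, hb'⟩ := unif_lap Z GZ HZ Q C hQ hC hCQ h1 h2 hH (ε / 2) (by positivity)
  refine ⟨min a b, lt_min ha hb, fun h hh hlt p hp => ?_⟩
  have A := (abs_le.1 (ha' h hh (lt_of_lt_of_le hlt (min_le_left _ _)) p hp)).2
  have B := (abs_le.1 (hb' h hh (lt_of_lt_of_le hlt (min_le_right _ _)) p hp)).1
  have A2 := mul_le_mul_of_nonneg_left A hh.le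
  have A3 := mul_le_mul_of_nonneg_left (hle p hp) (sq_nonneg h)
  nlinarith

lemma Sol.fdp (S : Sol d m T U Ut G H) (hm : 0 < m) (p : ℝ) (hp : 1 ≤ p) (C : Set (ℝ × EE d))
    (hC : IsCompact C) (hCQ : C ⊆ QQ d T) (ε : ℝ) (hε : 0 < ε) :
    ∃ h0 > 0, ∀ h, 0 < h → h < h0 → ∀ x ∈ C,
      h * (U x.1 x.2 ^ p - U (x.1 - h) x.2 ^ p)
        ≤ lapd (fun y => p * m / (p + m - 1) * U x.1 y ^ (p + m - 1)) x.2 h + ε * h ^ 2 := by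
  have hq : 0 < p + m - 1 := by linarith
  refine fd_sub (fun s y => U s y ^ p) (fun s y => p * U s y ^ (p - 1) * Ut s y)
    (fun s y => p * m / (p + m - 1) * U s y ^ (p + m - 1))
    (fun i s y => p * m / (p + m - 1) * ((p + m - 1) * U s y ^ (p + m - 1 - 1) * G i s y))
    (fun i s y => p * m / (p + m - 1) * ((p + m - 1) * U s y ^ (p + m - 1 - 1) * H i s y
      + (p + m - 1) * (p + m - 1 - 1) * U s y ^ (p + m - 1 - 2) * G i s y ^ 2))
    (QQ d T) C (QQ_open d T) hC hCQ (S.dtpow p) ?_ ?_ ?_ ?_ ?_ ε hε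
  · exact (continuousOn_const.mul (S.cpow _)).mul S.cUt
  · exact fun x hx i => (S.d1pow _ x hx i).const_mul _
  · exact fun x hx i => (S.d2pow _ x hx i).const_mul _
  · intro i
    exact continuousOn_const.mul (((continuousOn_const.mul (S.cpow _)).mul (S.cH i)).add
      ((continuousOn_const.mul (S.cpow _)).mul ((S.cG i).pow 2)))
  · intro x hx
    have hU := S.pos x (hCQ hx)
    rw [S.pde x (hCQ hx), Finset.mul_sum]
    refine Finset.sum_le_sum fun i _ => ?_
    have e1 : U x.1 x.2 ^ (p + m - 1 - 1) = U x.1 x.2 ^ (p - 1) * U x.1 x.2 ^ (m - 1) := by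
      rw [← rpow_add hU]; congr 1; ring
    have e2 : U x.1 x.2 ^ (p + m - 1 - 2) = U x.1 x.2 ^ (p - 1) * U x.1 x.2 ^ (m - 2) := by
      rw [← rpow_add hU]; congr 1; ring
    rw [e1, e2]
    have a1 : 0 < U x.1 x.2 ^ (p - 1) := rpow_pos_of_pos hU _
    have a2 : 0 < U x.1 x.2 ^ (m - 2) := rpow_pos_of_pos hU _
    generalize U x.1 x.2 ^ (p - 1) = A at *
    generalize U x.1 x.2 ^ (m - 2) = B at *
    generalize U x.1 x.2 ^ (m - 1) = D at *
    have : 0 ≤ p * m * (p - 1) * A * B * G i x.1 x.2 ^ 2 := by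
      have : 0 ≤ p - 1 := by linarith
      positivity
    have e : p * m / (p + m - 1) * ((p + m - 1) * (A * D) * H i x.1 x.2
      + (p + m - 1) * (p + m - 1 - 1) * (A * B) * G i x.1 x.2 ^ 2)
      = p * m * (A * D * H i x.1 x.2 + (p + m - 1 - 1) * (A * B) * G i x.1 x.2 ^ 2) := by
      field_simp
    rw [e]
    nlinarith

lemma Sol.fdU (S : Sol d m T U Ut G H) (hm : 0 < m) (C : Set (ℝ × EE d))
    (hC : IsCompact C) (hCQ : C ⊆ QQ d T) (ε : ℝ) (hε : 0 < ε) :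
    ∃ h0 > 0, ∀ h, 0 < h → h < h0 → ∀ x ∈ C,
      h * (U x.1 x.2 - U (x.1 - h) x.2) ≤ lapd (fun y => U x.1 y ^ m) x.2 h + ε * h ^ 2 := by
  obtain ⟨h0, a, b⟩ := S.fdp hm 1 le_rfl C hC hCQ ε hε
  refine ⟨h0, a, fun h hh hl x hx => ?_⟩
  have := b h hh hl x hx
  have e2 : (1 : ℝ) + m - 1 = m := by ring
  have e : m / m = 1 := div_self hm.ne'
  simpa [e, e2] using this

lemma Sol.fdN (S : Sol d m T U Ut G H) (C : Set (ℝ × EE d))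
    (hC : IsCompact C) (hCQ : C ⊆ QQ d T) (ε : ℝ) (hε : 0 < ε) :
    ∃ h0 > 0, ∀ h, 0 < h → h < h0 → ∀ x ∈ C,
      lapd (fun y => U x.1 y ^ m) x.2 h ≤ h * (U x.1 x.2 - U (x.1 - h) x.2) + ε * h ^ 2 := by
  obtain ⟨h0, a, b⟩ := fd_sub (fun s y => - U s y) (fun s y => - Ut s y)
    (fun s y => - U s y ^ m) (fun i s y => - (m * U s y ^ (m - 1) * G i s y))
    (fun i s y => - (m * U s y ^ (m - 1) * H i s y + m * (m - 1) * U s y ^ (m - 2) * G i s y ^ 2))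
    (QQ d T) C (QQ_open d T) hC hCQ (fun x hx => (S.dt x hx).neg) S.cUt.neg
    (fun x hx i => (S.d1pow _ x hx i).neg) (fun x hx i => (S.d2pow _ x hx i).neg)
    (fun i => (((continuousOn_const.mul (S.cpow _)).mul (S.cH i)).add
      ((continuousOn_const.mul (S.cpow _)).mul ((S.cG i).pow 2))).neg)
    (fun x hx => by rw [S.pde x (hCQ hx), Finset.sum_neg_distrib]) ε hε
  refine ⟨h0, a, fun h hh hl x hx => ?_⟩
  have := b h hh hl x hx
  have e : lapd (fun y => - U x.1 y ^ m) x.2 h = - lapd (fun y => U x.1 y ^ m) x.2 h := by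
    unfold lapd; rw [← Finset.sum_neg_distrib]
    exact Finset.sum_congr rfl fun i _ => by ring
  rw [e] at this
  linarith

end

lemma wfQ {d : ℕ} (T : ℝ) (hT : 0 < T) (z Z : ℝ → EE d → ℝ)
    (hz : Continuous (fun p : ℝ × EE d => z p.1 p.2))
    (hZ : Continuous (fun p : ℝ × EE d => Z p.1 p.2)) (k : ℕ) (c : EE d) (ρ : ℝ) (hρ : 0 < ρ)
    (H : ∀ t1 t2, 0 < t1 → t2 < T →  ∀ ε > 0, ∃ h0 > 0, ∀ h, 0 < h → h < h0 →
      ∀ s ∈ Icc t1 t2, t1 ≤ s - h →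
      ∀ y ∈ closedBall c ρ, h * (z s y - z (s - h) y) ≤ lapd (Z s) y h + ε * h ^ 2)
    (t1 t2 : ℝ) (h0 : 0 ≤ t1) (h12 : t1 ≤ t2) (hT2 : t2 ≤ T) :
    (∫ y, z t2 y * Kf k c ρ y) - ∫ y, z t1 y * Kf k c ρ y
      ≤ ∫ s in t1..t2, ∫ y, Z s y * lapK k c ρ y := by
  have cY : Continuous (fun s => ∫ y, z s y * Kf k c ρ y) :=
    cont_int hz (Kf_cont k c ρ) (Kf_zero k c ρ hρ)
  have cJ : Continuous (fun s => ∫ y, Z s y * lapK k c ρ y) :=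
    cont_int hZ (lapK_cont k c ρ) (lapK_zero k c ρ hρ)
  set Y := (fun s => ∫ y, z s y * Kf k c ρ y) with hY
  set J := (fun s => ∫ y, Z s y * lapK k c ρ y) with hJ
  have hJi : ∀ a b, IntervalIntegrable J volume a b := fun a b => cJ.intervalIntegrable a b
  have cP : Continuous (fun b => ∫ s in (0:ℝ)..b, J s) :=
    intervalIntegral.continuous_primitive hJi 0
  have e : ∀ a b, ∫ s in a..b, J s = (∫ s in (0:ℝ)..b, J s) - ∫ s in (0:ℝ)..a, J s := fun a b =>
    (intervalIntegral.integral_interval_sub_left (hJi _ _) (hJi _ _)).symm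
  change Y t2 - Y t1 ≤ ∫ s in t1..t2, J s
  rw [e]
  have key : ∀ η ∈ Ioo (0:ℝ) 1, Y ((1 - η) * t2 + η * (T / 2)) - Y ((1 - η) * t1 + η * (T / 2)) ≤
      (∫ s in (0:ℝ)..((1 - η) * t2 + η * (T / 2)), J s)
      - ∫ s in (0:ℝ)..((1 - η) * t1 + η * (T / 2)), J s := by
    intro η hη
    rw [← e]
    have hη1 : 0 < 1 - η := by linarith [hη.2]
    have a1 : 0 < (1 - η) * t1 + η * (T / 2) := by
      have := hη.1; positivity
    have a2 : (1 - η) * t2 + η * (T / 2) < T := by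
      have := hη.1; nlinarith
    exact wf z Z hz hZ k c ρ hρ _ _ (by nlinarith) (H _ _ a1 a2)
  have cL : Continuous (fun η : ℝ => Y ((1 - η) * t2 + η * (T / 2)) - Y ((1 - η) * t1 + η * (T / 2))) :=
    (cY.comp (by fun_prop)).sub (cY.comp (by fun_prop))
  have cR : Continuous (fun η : ℝ => (∫ s in (0:ℝ)..((1 - η) * t2 + η * (T / 2)), J s)
      - ∫ s in (0:ℝ)..((1 - η) * t1 + η * (T / 2)), J s) :=
    (cP.comp (g := fun b => ∫ s in (0:ℝ)..b, J s)
      (f := fun η : ℝ => (1 - η) * t2 + η * (T / 2)) (by fun_prop)).sub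
    (cP.comp (g := fun b => ∫ s in (0:ℝ)..b, J s)
      (f := fun η : ℝ => (1 - η) * t1 + η * (T / 2)) (by fun_prop))
  have hcl : (0 : ℝ) ∈ closure (Ioo (0:ℝ) 1) := by
    rw [closure_Ioo (by norm_num)]; simp
  have := ContinuousWithinAt.closure_le hcl cL.continuousWithinAt cR.continuousWithinAt key
  simpa using this


lemma fub {d : ℕ} {F : ℝ → EE d → ℝ} {φ : EE d → ℝ} {c : EE d} {ρ : ℝ}
    (hF : Continuous (fun p : ℝ × EE d => F p.1 p.2)) (hφ : Continuous φ)
    (h0 : ∀ y, y ∉ closedBall c ρ → φ y = 0) (a b : ℝ) :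
    ∫ s in a..b, ∫ y, F s y * φ y = ∫ y, (∫ s in a..b, F s y) * φ y := by
  have e1 : ∀ s, ∫ y, F s y * φ y = ∫ y in closedBall c ρ, F s y * φ y := fun s => by
    rw [setIntegral_eq_integral_of_forall_compl_eq_zero]
    intro y hy; simp [h0 y hy]
  have e2 : ∫ y, (∫ s in a..b, F s y) * φ y = ∫ y in closedBall c ρ, (∫ s in a..b, F s y) * φ y := by
    rw [setIntegral_eq_integral_of_forall_compl_eq_zero]
    intro y hy; simp [h0 y hy]
  simp_rw [e1, e2]
  rw [intervalIntegral_integral_swap]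
  · simp_rw [intervalIntegral.integral_mul_const]
  · rw [Measure.prod_restrict]
    change IntegrableOn _ _ _
    have : IntegrableOn (Function.uncurry fun x y => F x y * φ y) (uIcc a b ×ˢ closedBall c ρ)
        (volume.prod volume) := by
      apply ContinuousOn.integrableOn_compact (isCompact_uIcc.prod (isCompact_closedBall c ρ))
      exact (hF.mul (hφ.comp continuous_snd)).continuousOn
    exact this.mono_set (prod_mono uIoc_subset_uIcc le_rfl)

lemma pow_split (m A x : ℝ) (hm0 : 0 < m) (hm1 : m < 1) (hA : 0 < A) (hx : 0 ≤ x) :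
    x ^ m ≤ A ^ (m - 1) * x + A ^ m := by
  rcases le_total x A with h | h
  · have : x ^ m ≤ A ^ m := rpow_le_rpow hx h hm0.le
    have : 0 ≤ A ^ (m - 1) * x := by positivity
    linarith
  · have hx' : 0 < x := lt_of_lt_of_le hA h
    have e : x ^ m = x ^ (m - 1) * x := by
      rw [← rpow_add_one hx'.ne']; congr 1; ring
    have : x ^ (m - 1) ≤ A ^ (m - 1) := rpow_le_rpow_of_nonpos hA h (by linarith)
    have : 0 ≤ A ^ m := by positivity
    rw [e]; nlinarith

lemma exists_k (m : ℝ) (hm1 : m < 1) : ∃ k : ℕ, m * (k + 3) ≤ k + 1 := by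
  obtain ⟨k, hk⟩ := exists_nat_ge ((3 * m - 1) / (1 - m))
  refine ⟨k, ?_⟩
  rw [div_le_iff₀ (by linarith)] at hk
  linarith

noncomputable def CK (d k : ℕ) (ρ : ℝ) : ℝ :=
  (4 * (k + 3) * (k + 2) + 2 * (k + 3) * d) / ρ ^ 2

lemma CK_nonneg (d k : ℕ) (ρ : ℝ) : 0 ≤ CK d k ρ := by unfold CK; positivity

lemma lapK_int_bound {d : ℕ} (m A : ℝ) (hm0 : 0 < m) (hm1 : m < 1) (hA : 0 < A) (k : ℕ)
    (hk : m * (k + 3) ≤ k + 1) (c : EE d) (ρ : ℝ) (hρ : 0 < ρ) (W : EE d → ℝ) (hW : Continuous W)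
    (hW0 : ∀ y, 0 ≤ W y) :
    |∫ y, W y ^ m * lapK k c ρ y| ≤ CK d k ρ * (A ^ (m - 1) * (∫ y, W y * Kf k c ρ y)
      + A ^ m * (volume (closedBall c ρ)).toReal) := by
  have hWm : Continuous (fun y => W y ^ m) := hW.rpow_const (fun _ => Or.inr hm0.le)
  have key : ∀ y ∈ closedBall c ρ, ‖W y ^ m * lapK k c ρ y‖ ≤
      CK d k ρ * (A ^ (m - 1) * (W y * Kf k c ρ y) + A ^ m) := by
    intro y _
    have h1 := lapK_bound k c ρ hρ y
    have q0 := qf_nonneg c ρ y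
    have q1 := qf_le_one c ρ y
    have hw : 0 ≤ W y ^ m := rpow_nonneg (hW0 y) m
    have h2 : qf c ρ y ^ (k + 1) ≤ Kf k c ρ y ^ m := by
      unfold Kf
      rw [← rpow_natCast, ← rpow_natCast, ← rpow_mul q0]
      rcases eq_or_lt_of_le q0 with h | h
      · rw [← h, zero_rpow (by positivity), zero_rpow (by positivity)]
      · refine rpow_le_rpow_of_exponent_ge h q1 ?_
        push_cast; linarith
    rw [norm_mul, Real.norm_eq_abs, Real.norm_eq_abs, abs_of_nonneg hw]
    calc W y ^ m * |lapK k c ρ y| ≤ W y ^ m * (CK d k ρ * Kf k c ρ y ^ m) := by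
          gcongr; exact h1.trans (mul_le_mul_of_nonneg_left h2 (CK_nonneg d k ρ))
      _ = CK d k ρ * (W y * Kf k c ρ y) ^ m := by
          rw [mul_rpow (hW0 y) (Kf_nonneg k c ρ y)]; ring
      _ ≤ _ := mul_le_mul_of_nonneg_left (pow_split m A _ hm0 hm1 hA
          (mul_nonneg (hW0 y) (Kf_nonneg k c ρ y))) (CK_nonneg d k ρ)
  have i1 : IntegrableOn (fun y => CK d k ρ * (A ^ (m - 1) * (W y * Kf k c ρ y) + A ^ m))
      (closedBall c ρ) := by
    apply ContinuousOn.integrableOn_compact (isCompact_closedBall c ρ)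
    have := Kf_cont k c ρ
    fun_prop
  have iK : IntegrableOn (fun y => A ^ (m - 1) * (W y * Kf k c ρ y)) (closedBall c ρ) := by
    apply ContinuousOn.integrableOn_compact (isCompact_closedBall c ρ)
    have := Kf_cont k c ρ
    fun_prop
  rw [← setIntegral_eq_integral_of_forall_compl_eq_zero (s := closedBall c ρ)
    (f := fun y => W y ^ m * lapK k c ρ y)
    (fun y hy => by rw [lapK_zero k c ρ hρ y hy, mul_zero]),
    ← setIntegral_eq_integral_of_forall_compl_eq_zero (s := closedBall c ρ)
    (f := fun y => W y * Kf k c ρ y)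
    (fun y hy => by rw [Kf_zero k c ρ hρ y hy, mul_zero]), ← Real.norm_eq_abs]
  refine (norm_integral_le_of_norm_le i1 ?_).trans_eq ?_
  · exact (ae_restrict_iff' measurableSet_closedBall).2 (Filter.Eventually.of_forall key)
  · have iC : IntegrableOn (fun _ : EE d => A ^ m) (closedBall c ρ) :=
      integrableOn_const (hs := measure_closedBall_lt_top.ne)
    rw [integral_const_mul, integral_add iK iC, integral_const_mul, setIntegral_const]
    simp [Measure.real]; left; ring

lemma persist (Y : ℝ → ℝ) (hY : Continuous Y) (T B1 B2 : ℝ) (hB1 : 0 ≤ B1)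
    (h : ∀ a b, 0 ≤ a → a ≤ b → b ≤ T → Y a - Y b ≤ ∫ r in a..b, (B1 * Y r + B2))
    (s : ℝ) (hs : 0 ≤ s) (hsT : s ≤ T) (hs2 : s * (B1 * Y 0 + B2) ≤ Y 0 / 2)
    (hnn : 0 ≤ B1 * Y 0 + B2) (hY0 : 0 ≤ Y 0) : Y 0 / 2 ≤ Y s := by
  have hK : IsCompact (Icc 0 s ∩ {r | Y 0 ≤ Y r}) :=
    isCompact_Icc.inter_right (isClosed_le continuous_const hY)
  obtain ⟨a, ⟨ha1, ha2⟩, ha3⟩ := hK.exists_isGreatest ⟨0, ⟨le_refl _, hs⟩, le_refl (Y 0)⟩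
  have ha2' : Y 0 ≤ Y a := ha2
  rcases eq_or_lt_of_le ha1.2 with rfl | hlt
  · linarith
  have h1 := h a s ha1.1 ha1.2 hsT
  have h2 : ∫ r in a..s, (B1 * Y r + B2) ≤ ∫ r in a..s, (B1 * Y 0 + B2) := by
    apply intervalIntegral.integral_mono_on_of_le_Ioo hlt.le
      ((by fun_prop : Continuous fun r => B1 * Y r + B2).intervalIntegrable _ _) (by simp)
    intro r hr
    have : Y r ≤ Y 0 := by
      by_contra hc
      exact absurd (ha3 ⟨⟨ha1.1.trans hr.1.le, hr.2.le⟩, (not_le.1 hc).le⟩) (not_le.2 hr.1)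
    nlinarith
  rw [intervalIntegral.integral_const, smul_eq_mul] at h2
  have h3 : (s - a) * (B1 * Y 0 + B2) ≤ s * (B1 * Y 0 + B2) := by
    apply mul_le_mul_of_nonneg_right _ hnn
    linarith [ha1.1]
  linarith

/-! the concave-in-time envelope -/
noncomputable def wI {d : ℕ} (κ l : ℝ) (U : ℝ → EE d → ℝ) (s : ℝ) (y : EE d) : ℝ :=
  sInf ((fun a : ℝ => (max l a) ^ (-κ) * U (a * s) y) '' Icc l 1)

section
variable {d : ℕ} {m T : ℝ} {U Ut : ℝ → EE d → ℝ} {G H : Fin d → ℝ → EE d → ℝ}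

lemma wI_fcont {κ l : ℝ} (hl : 0 < l) (hU : Continuous (fun p : ℝ × EE d => U p.1 p.2)) :
    Continuous (fun q : (ℝ × EE d) × ℝ => (max l q.2) ^ (-κ) * U (q.2 * q.1.1) q.1.2) := by
  apply Continuous.mul
  · exact Continuous.rpow_const (by fun_prop) (fun q => Or.inl (by positivity))
  · exact hU.comp (f := fun q : (ℝ × EE d) × ℝ => (q.2 * q.1.1, q.1.2)) (by fun_prop)

lemma wI_cont {κ l : ℝ} (hl : 0 < l) (hU : Continuous (fun p : ℝ × EE d => U p.1 p.2)) :
    Continuous (fun p : ℝ × EE d => wI κ l U p.1 p.2) := by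
  exact IsCompact.continuous_sInf (f := fun (p : ℝ × EE d) a => (max l a) ^ (-κ) * U (a * p.1) p.2)
    (isCompact_Icc (a := l) (b := 1)) (wI_fcont hl hU)

lemma wI_le {κ l : ℝ} (hl : 0 < l) (hU0 : ∀ s y, 0 ≤ U s y) (s : ℝ) (y : EE d) (a : ℝ)
    (ha : a ∈ Icc l 1) : wI κ l U s y ≤ a ^ (-κ) * U (a * s) y := by
  apply csInf_le
  · refine ⟨0, ?_⟩
    rintro _ ⟨b, _, rfl⟩
    have := hU0 (b * s) y
    positivity
  · exact ⟨a, ha, by simp [max_eq_right ha.1]⟩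

lemma wI_att {κ l : ℝ} (hl : 0 < l) (hl1 : l ≤ 1) (hU : Continuous (fun p : ℝ × EE d => U p.1 p.2))
    (s : ℝ) (y : EE d) : ∃ a ∈ Icc l 1, wI κ l U s y = a ^ (-κ) * U (a * s) y := by
  have hc : ContinuousOn (fun a : ℝ => (max l a) ^ (-κ) * U (a * s) y) (Icc l 1) :=
    ((wI_fcont (κ := κ) hl hU).comp (f := fun a : ℝ => ((s, y), a)) (by fun_prop)).continuousOn
  obtain ⟨a, ha, ha2⟩ := isCompact_Icc.exists_sInf_image_eq (nonempty_Icc.2 hl1) hc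
  exact ⟨a, ha, by unfold wI; rw [ha2]; simp [max_eq_right ha.1]⟩

lemma Sol.w_nonneg (S : Sol d m T U Ut G H) {κ l : ℝ} (hl : 0 < l) (hl1 : l ≤ 1)
    (s : ℝ) (y : EE d) : 0 ≤ wI κ l U s y := by
  obtain ⟨a, ha, e⟩ := wI_att (κ := κ) hl hl1 S.cont s y
  rw [e]
  have := S.nonneg (a * s) y
  have : 0 < a := lt_of_lt_of_le hl ha.1
  positivity

lemma Sol.w_zero (S : Sol d m T U Ut G H) {κ l : ℝ} (hκ : 0 ≤ κ) (hl : 0 < l) (hl1 : l ≤ 1)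
    (y : EE d) : wI κ l U 0 y = U 0 y := by
  apply le_antisymm
  · simpa using wI_le (κ := κ) hl S.nonneg 0 y 1 ⟨hl1, le_refl _⟩
  · obtain ⟨a, ha, e⟩ := wI_att (κ := κ) hl hl1 S.cont 0 y
    rw [e, mul_zero]
    have h1 : 1 ≤ a ^ (-κ) := one_le_rpow_of_pos_of_le_one_of_nonpos (lt_of_lt_of_le hl ha.1) ha.2
      (by linarith)
    have := S.nonneg 0 y
    nlinarith

lemma Sol.w_T (S : Sol d m T U Ut G H) {κ l : ℝ} (hl : 0 < l) (hl1 : l ≤ 1)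
    (y : EE d) : wI κ l U T y = 0 := by
  apply le_antisymm
  · simpa [S.ext] using wI_le (κ := κ) hl S.nonneg T y 1 ⟨hl1, le_refl _⟩
  · exact S.w_nonneg hl hl1 T y

lemma Sol.w_fd (S : Sol d m T U Ut G H) (hm0 : 0 < m) (hm1 : m < 1) {κ l : ℝ} (hκ : κ = 1 / (1 - m))
    (hl : 0 < l) (hl1 : l ≤ 1) (c : EE d) (ρ : ℝ) (hc : closedBall c ρ ⊆ ball 0 6) (t1 t2 : ℝ)
    (ht1 : 0 < t1) (ht2 : t2 < T) (ε : ℝ) (hε : 0 < ε) : ∃ h0 > 0, ∀ h, 0 < h → h < h0 →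
      ∀ s ∈ Icc t1 t2, t1 ≤ s - h →
      ∀ y ∈ closedBall c ρ, h * (-wI κ l U s y - -wI κ l U (s - h) y)
        ≤ lapd (fun y => -(wI κ l U s y) ^ m) y h + ε * h ^ 2 := by
  set D := l ^ (-(κ * m)) with hD
  have hD0 : 0 < D := rpow_pos_of_pos hl _
  have hCQ : Icc (l * t1) t2 ×ˢ closedBall c ρ ⊆ QQ d T := by
    rintro ⟨s, y⟩ ⟨h1, h2⟩
    exact ⟨⟨lt_of_lt_of_le (by positivity) h1.1, lt_of_le_of_lt h1.2 ht2⟩, hc h2⟩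
  have hCc : IsCompact (Icc (l * t1) t2 ×ˢ closedBall c ρ) := isCompact_Icc.prod (isCompact_closedBall c ρ)
  obtain ⟨a0, ha0, A0⟩ := unif_dt U Ut (QQ d T) _ (QQ_open d T) hCc hCQ S.dt S.cUt (ε / (2 * D))
    (by positivity)
  obtain ⟨b0, hb0, B0⟩ := unif_lap (fun s y => U s y ^ m) (fun i s y => (m * U s y ^ (m - 1) * G i s y))
    (fun i s y => (m * U s y ^ (m - 1) * H i s y + m * (m - 1) * U s y ^ (m - 2) * G i s y ^ 2))
    (QQ d T) _ (QQ_open d T) hCc hCQ (S.d1pow m) (S.d2pow m)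
    (fun i => ((continuousOn_const.mul (S.cpow _)).mul (S.cH i)).add
      ((continuousOn_const.mul (S.cpow _)).mul ((S.cG i).pow 2))) (ε / (2 * D))
    (by positivity)
  refine ⟨min a0 b0, lt_min ha0 hb0, fun h hh hlt s hs hsh y hy => ?_⟩
  obtain ⟨a, ha, e⟩ := wI_att (κ := κ) hl hl1 S.cont s y
  have ha' : 0 < a := lt_of_lt_of_le hl ha.1
  have hs0 : 0 < s := lt_of_lt_of_le ht1 hs.1
  have hin : (a * s, y) ∈ Icc (l * t1) t2 ×ˢ closedBall c ρ := by
    refine ⟨⟨?_, ?_⟩, hy⟩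
    · exact mul_le_mul ha.1 hs.1 ht1.le ha'.le
    · have := hs.2; have := ha.2; simp only; nlinarith
  have hah : a * h ≤ h := by nlinarith [ha.2]
  have A1 := (abs_le.1 (A0 (a * h) (by positivity) (hah.trans_lt (lt_of_lt_of_le hlt (min_le_left _ _)))
    _ hin)).1
  have B1 := (abs_le.1 (B0 h hh (lt_of_lt_of_le hlt (min_le_right _ _)) _ hin)).2
  rw [← S.pde _ (hCQ hin)] at B1
  simp only at A1 B1
  have w1 : wI κ l U (s - h) y ≤ a ^ (-κ) * U (a * s - a * h) y := by
    have := wI_le (κ := κ) hl S.nonneg (s - h) y a ha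
    rwa [mul_sub] at this
  have w2 : ∀ v, wI κ l U s v ^ m ≤ a ^ (-(κ * m)) * U (a * s) v ^ m := by
    intro v
    have := rpow_le_rpow (S.w_nonneg hl hl1 s v) (wI_le (κ := κ) hl S.nonneg s v a ha) hm0.le
    rw [mul_rpow (by positivity) (S.nonneg _ _), ← rpow_mul ha'.le, neg_mul] at this
    exact this
  have w3 : wI κ l U s y ^ m = a ^ (-(κ * m)) * U (a * s) y ^ m := by
    rw [e, mul_rpow (by positivity) (S.nonneg _ _), ← rpow_mul ha'.le, neg_mul]
  have lap1 : -(a ^ (-(κ * m)) * lapd (fun v => U (a * s) v ^ m) y h)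
      ≤ lapd (fun y => -(wI κ l U s y) ^ m) y h := by
    unfold lapd
    rw [Finset.mul_sum, ← Finset.sum_neg_distrib]
    refine Finset.sum_le_sum fun i _ => ?_
    have := w2 (y + h • eb i)
    have := w2 (y - h • eb i)
    beta_reduce
    rw [w3]
    linarith
  have hb : a ^ (-κ) * a = a ^ (-(κ * m)) := by
    rw [← rpow_add_one ha'.ne']
    congr 1
    have : 1 - m ≠ 0 := by linarith
    rw [hκ]; field_simp; ring
  set b := a ^ (-(κ * m)) with hbdef
  have hb0 : 0 < b := rpow_pos_of_pos ha' _
  have hbD : b ≤ D := by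
    rw [hbdef, hD]
    apply rpow_le_rpow_of_nonpos hl ha.1
    have : 0 < 1 - m := by linarith
    rw [hκ]
    have : 0 ≤ 1 / (1 - m) * m := by positivity
    linarith
  have q0 : 0 ≤ a ^ (-κ) := by positivity
  have A2 : h * (-wI κ l U s y - -wI κ l U (s - h) y)
      ≤ h * (-(a ^ (-κ) * (a * h * Ut (a * s) y - ε / (2 * D) * (a * h)))) := by
    apply mul_le_mul_of_nonneg_left _ hh.le
    rw [e]
    have := mul_le_mul_of_nonneg_left A1 q0
    nlinarith
  have A3 : h * (-(a ^ (-κ) * (a * h * Ut (a * s) y - ε / (2 * D) * (a * h))))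
      = -(b * h ^ 2 * Ut (a * s) y) + b * (ε / (2 * D)) * h ^ 2 := by
    rw [← hb]; ring
  have B2 := mul_le_mul_of_nonneg_left B1 hb0.le
  have E : b * (ε / (2 * D)) * h ^ 2 ≤ ε / 2 * h ^ 2 := by
    apply mul_le_mul_of_nonneg_right _ (sq_nonneg h)
    calc b * (ε / (2 * D)) ≤ D * (ε / (2 * D)) := by gcongr
      _ = ε / 2 := by field_simp
  rw [A3] at A2
  nlinarith

end


section
variable {d : ℕ} {m T : ℝ} {U Ut : ℝ → EE d → ℝ} {G H : Fin d → ℝ → EE d → ℝ}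

lemma Sol.w_persist (S : Sol d m T U Ut G H) (hm0 : 0 < m) (hm1 : m < 1) {κ l : ℝ}
    (hκ : κ = 1 / (1 - m)) (hl : 0 < l) (hl1 : l ≤ 1) (k : ℕ) (hk : m * (k + 3) ≤ k + 1)
    (Y0 : ℝ) (hY0 : Y0 = ∫ y, U 0 y * Kf k 0 2 y) (hpos : 0 < Y0) (s : ℝ) (hs : 0 ≤ s) (hsT : s ≤ T)
    (hs2 : s * (CK d k 2 * (1 + (volume (closedBall (0 : EE d) 2)).toReal)) ≤ Y0 ^ (1 - m) / 2) :
    Y0 / 2 ≤ ∫ y, wI κ l U s y * Kf k 0 2 y := by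
  have hκ0 : 0 ≤ κ := by
    rw [hκ]; have : 0 < 1 - m := by linarith
    positivity
  set vol := (volume (closedBall (0 : EE d) 2)).toReal with hvol
  have hv : 0 ≤ vol := ENNReal.toReal_nonneg
  have hCK := CK_nonneg d k 2
  have wc := wI_cont (κ := κ) (l := l) hl S.cont
  have wcs : ∀ s, Continuous (wI κ l U s) := fun s => wc.comp (Continuous.prodMk_right s)
  have wn := S.w_nonneg (κ := κ) hl hl1
  have wmc : Continuous (fun p : ℝ × EE d => -(wI κ l U p.1 p.2) ^ m) :=
    (wc.rpow_const (fun _ => Or.inr hm0.le)).neg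
  have cY : Continuous (fun s => ∫ y, wI κ l U s y * Kf k 0 2 y) :=
    cont_int wc (Kf_cont k 0 2) (Kf_zero k 0 2 two_pos)
  have hY00 : ∫ y, wI κ l U 0 y * Kf k 0 2 y = Y0 := by
    simp only [S.w_zero hκ0 hl hl1, hY0]
  have e1 : Y0 ^ (m - 1) * Y0 = Y0 ^ m := by
    rw [← rpow_add_one hpos.ne']; congr 1; ring
  have e2 : Y0 ^ m * Y0 ^ (1 - m) = Y0 := by
    rw [← rpow_add hpos]; simp
  have hYm : 0 < Y0 ^ m := rpow_pos_of_pos hpos _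
  have e3 : CK d k 2 * Y0 ^ (m - 1) * Y0 + CK d k 2 * (Y0 ^ m * vol)
      = Y0 ^ m * (CK d k 2 * (1 + vol)) := by
    rw [mul_assoc, e1]; ring
  have := persist (fun s => ∫ y, wI κ l U s y * Kf k 0 2 y) cY T (CK d k 2 * Y0 ^ (m - 1))
    (CK d k 2 * (Y0 ^ m * vol)) (by positivity) ?_ s hs hsT ?_ ?_ ?_
  · rwa [hY00] at this
  · intro a b ha hab hb
    have h1 := wfQ T S.Tpos (fun s y => - wI κ l U s y) (fun s y => -(wI κ l U s y) ^ m) wc.neg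
      wmc k 0 2 two_pos (S.w_fd hm0 hm1 hκ hl hl1 0 2
        (closedBall_subset_ball (by norm_num))) a b ha hab hb
    simp only [neg_mul, integral_neg] at h1
    have h2 : ∫ s in a..b, -∫ y, wI κ l U s y ^ m * lapK k 0 2 y ≤
        ∫ r in a..b, (CK d k 2 * Y0 ^ (m - 1) * (∫ y, wI κ l U r y * Kf k 0 2 y)
          + CK d k 2 * (Y0 ^ m * vol)) := by
      apply intervalIntegral.integral_mono_on hab
      · apply Continuous.intervalIntegrable
        exact (cont_int (F := fun s y => wI κ l U s y ^ m)
          (wc.rpow_const (fun _ => Or.inr hm0.le)) (lapK_cont k 0 2) (lapK_zero k 0 2 two_pos)).neg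
      · apply Continuous.intervalIntegrable
        fun_prop
      · intro r hr
        have := lapK_int_bound m Y0 hm0 hm1 hpos k hk (0 : EE d) 2 two_pos (wI κ l U r) (wcs r) (wn r)
        have := (abs_le.1 this).1
        linarith
    refine le_trans ?_ h2
    linarith
  · rw [hY00, e3]
    have := mul_le_mul_of_nonneg_left hs2 hYm.le
    nlinarith
  · rw [hY00, e3]; positivity
  · rw [hY00]; exact hpos.le

end

lemma Kf_low {d : ℕ} (k : ℕ) (y : EE d) (hy : y ∈ ball (0 : EE d) 1) : (3 / 4 : ℝ) ^ (k + 3) ≤ Kf k 0 2 y := by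
  unfold Kf
  gcongr
  unfold qf
  apply le_max_of_le_right
  rw [mem_ball, dist_zero_right] at hy
  have : ‖y - 0‖ ^ 2 ≤ 1 := by rw [sub_zero]; nlinarith [norm_nonneg y]
  linarith

lemma Kf_cmp {d : ℕ} (k : ℕ) (x y : EE d) (hx : x ∈ ball (0 : EE d) 1) (ρ : ℝ) (hρ : 4 ≤ ρ) :
    (7 / 16 : ℝ) ^ 3 * Kf k 0 2 y ≤ Kf 0 x ρ y := by
  by_cases hy : y ∈ closedBall (0 : EE d) 2
  · have h1 : Kf k 0 2 y ≤ 1 := pow_le_one₀ (qf_nonneg _ _ _) (qf_le_one _ _ _)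
    have h2 : (7 / 16 : ℝ) ^ 3 ≤ Kf 0 x ρ y := by
      unfold Kf
      simp only [zero_add]
      gcongr
      unfold qf
      apply le_max_of_le_right
      rw [mem_ball, dist_zero_right] at hx
      rw [mem_closedBall, dist_zero_right] at hy
      have h3 : ‖y - x‖ ≤ 3 := by linarith [norm_sub_le y x]
      have h4 : ‖y - x‖ ^ 2 / ρ ^ 2 ≤ 3 ^ 2 / 4 ^ 2 := by gcongr
      linarith
    nlinarith [Kf_nonneg k (0 : EE d) 2 y]
  · rw [Kf_zero k 0 2 two_pos y hy]
    simpa using Kf_nonneg 0 x ρ y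

lemma setInt_le_Kf {d : ℕ} (k : ℕ) (W : EE d → ℝ) (hW : Continuous W) (h0 : ∀ y, 0 ≤ W y) :
    (3 / 4 : ℝ) ^ (k + 3) * ∫ y in ball (0 : EE d) 1, W y ≤ ∫ y, W y * Kf k 0 2 y := by
  have hi : Integrable (fun y => W y * Kf k 0 2 y) := int_cs hW (Kf_cont k 0 2) (Kf_zero k 0 2 two_pos)
  have hb : IntegrableOn W (ball (0 : EE d) 1) :=
    (hW.continuousOn.integrableOn_compact (isCompact_closedBall 0 1)).mono_set ball_subset_closedBall
  calc _ = ∫ y in ball (0 : EE d) 1, (3 / 4 : ℝ) ^ (k + 3) * W y := by rw [integral_const_mul]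
    _ ≤ ∫ y in ball (0 : EE d) 1, W y * Kf k 0 2 y := by
        apply setIntegral_mono_on (hb.const_mul _) hi.integrableOn measurableSet_ball
        intro y hy
        nlinarith [Kf_low k y hy, h0 y]
    _ ≤ _ := setIntegral_le_integral hi (Filter.Eventually.of_forall fun y =>
        mul_nonneg (h0 y) (Kf_nonneg _ _ _ _))

set_option maxHeartbeats 2000000 in
theorem lower (d : ℕ) (m : ℝ) (hm0 : 0 < m) (hm1 : m < 1) : ∃ c0 c1 : ℝ, 0 < c0 ∧ 0 < c1 ∧
    ∀ (T : ℝ) (U Ut : ℝ → EE d → ℝ) (G H : Fin d → ℝ → EE d → ℝ), Sol d m T U Ut G H →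
    ∀ M, M = ∫ y in ball (0 : EE d) 1, U 0 y → 0 < M → ∀ t, 0 < t → t ≤ c0 * M ^ (1 - m) →
    t < T ∧ ∀ x ∈ ball (0 : EE d) 1,
      c1 * (M * T ^ (-(1 / (1 - m)))) ^ (1 / m) * t ^ (1 / (1 - m)) ≤ U t x := by
  obtain ⟨k, hk⟩ := exists_k m hm1
  set κ := 1 / (1 - m) with hκ
  have hm1' : 0 < 1 - m := by linarith
  have hκ0 : 0 < κ := by rw [hκ]; positivity
  set vol := (volume (closedBall (0 : EE d) 2)).toReal with hvol
  have hv : 0 ≤ vol := ENNReal.toReal_nonneg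
  set Ck := CK d k 2 * (1 + vol) with hCk
  have hCk0 : 0 ≤ Ck := by have := CK_nonneg d k 2; positivity
  set q : ℝ := (3 / 4 : ℝ) ^ (k + 3) with hq
  have hq0 : 0 < q := by positivity
  set I2 := ∫ y : EE d, qf 0 1 y ^ 2 with hI2
  have hI20 : 0 < I2 := q2pos
  set b := 4 / (6 * 5 ^ d) * ((7 / 16 : ℝ) ^ 3 * (q / 2)) / I2 with hb
  have hb0 : 0 < b := by positivity
  refine ⟨q ^ (1 - m) / (2 * (Ck + 1)), b ^ (1 / m), by positivity, by positivity, ?_⟩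
  intro T U Ut G H S M hM hMpos t ht htle
  set Y0 := ∫ y, U 0 y * Kf k 0 2 y with hY0
  have hUc : ∀ s, Continuous (U s) := fun s => S.cont.comp (Continuous.prodMk_right s)
  have hYM : q * M ≤ Y0 := by
    rw [hM]; exact setInt_le_Kf k (U 0) (hUc 0) (S.nonneg 0)
  have hY0p : 0 < Y0 := lt_of_lt_of_le (by positivity) hYM
  have hsm : ∀ s, 0 ≤ s → s ≤ t → s * Ck ≤ Y0 ^ (1 - m) / 2 := by
    intro s hs hst
    have h1 : (q * M) ^ (1 - m) ≤ Y0 ^ (1 - m) := rpow_le_rpow (by positivity) hYM hm1'.le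
    rw [mul_rpow hq0.le hMpos.le] at h1
    have h2 : s * (Ck + 1) ≤ q ^ (1 - m) * M ^ (1 - m) / 2 := by
      have : s ≤ q ^ (1 - m) / (2 * (Ck + 1)) * M ^ (1 - m) := hst.trans htle
      calc s * (Ck + 1) ≤ q ^ (1 - m) / (2 * (Ck + 1)) * M ^ (1 - m) * (Ck + 1) := by gcongr
        _ = _ := by field_simp
    nlinarith
  have htT : t < T := by
    by_contra hc
    push Not at hc
    have := S.w_persist hm0 hm1 hκ (l := 1) one_pos le_rfl k hk Y0 hY0 hY0p T S.Tpos.le le_rfl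
      (hsm T S.Tpos.le hc)
    simp [S.w_T one_pos le_rfl] at this
    linarith
  refine ⟨htT, fun x hx => ?_⟩
  have hT := S.Tpos
  set l := t / T with hl
  have hl0 : 0 < l := by positivity
  have hl1 : l ≤ 1 := by rw [hl, div_le_one hT]; exact htT.le
  have hp := S.w_persist hm0 hm1 hκ hl0 hl1 k hk Y0 hY0 hY0p t ht.le htT.le (hsm t ht.le le_rfl)
  have wc := wI_cont (κ := κ) (l := l) hl0 S.cont
  have wcs : ∀ s, Continuous (wI κ l U s) := fun s => wc.comp (Continuous.prodMk_right s)
  have wn := S.w_nonneg (κ := κ) hl0 hl1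
  have wmc : Continuous (fun p : ℝ × EE d => (wI κ l U p.1 p.2) ^ m) :=
    wc.rpow_const (fun _ => Or.inr hm0.le)
  set V : EE d → ℝ := fun z => ∫ s in t..T, wI κ l U s z ^ m with hV
  have hVc : Continuous V := by
    apply intervalIntegral.continuous_parametric_intervalIntegral_of_continuous'
    exact wmc.comp continuous_swap
  have hV0 : ∀ z, 0 ≤ V z := fun z => intervalIntegral.integral_nonneg htT.le
    fun s _ => rpow_nonneg (wn s z) m
  have main : ∀ ρ, 0 < ρ → ρ ≤ 5 → ∫ z, V z * lapK 0 x ρ z ≤ -∫ y, wI κ l U t y * Kf 0 x ρ y := by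
    intro ρ hρ hρ5
    have h1 := wfQ T hT (fun s y => - wI κ l U s y) (fun s y => -(wI κ l U s y) ^ m) wc.neg
      wmc.neg 0 x ρ hρ (S.w_fd hm0 hm1 hκ hl0 hl1 x ρ (by
        intro z hz
        rw [mem_closedBall, dist_eq_norm] at hz
        rw [mem_ball, dist_zero_right] at hx ⊢
        have : z = (z - x) + x := by abel
        rw [this]
        linarith [norm_add_le (z - x) x])) t T ht.le htT.le le_rfl
    simp only [neg_mul, integral_neg, S.w_T hl0 hl1, zero_mul, integral_zero, neg_zero,
      intervalIntegral.integral_neg] at h1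
    rw [fub (F := fun s y => wI κ l U s y ^ m) wmc (lapK_cont 0 x ρ) (lapK_zero 0 x ρ hρ)] at h1
    linarith
  have mv := mv_low V hVc hV0 x ((7 / 16 : ℝ) ^ 3 * (q / 2) * M)
    (fun ρ h1 h2 => (main ρ h1 h2).trans (by
      rw [neg_nonpos]
      exact integral_nonneg fun y => mul_nonneg (wn t y) (Kf_nonneg _ _ _ _)))
    (fun ρ h1 h2 => (main ρ (by linarith) h2).trans (by
      rw [neg_le_neg_iff]
      calc (7 / 16 : ℝ) ^ 3 * (q / 2) * M ≤ (7 / 16 : ℝ) ^ 3 * ∫ y, wI κ l U t y * Kf k 0 2 y := by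
            rw [mul_assoc]; gcongr; linarith
        _ = ∫ y, (7 / 16 : ℝ) ^ 3 * (wI κ l U t y * Kf k 0 2 y) := by rw [integral_const_mul]
        _ ≤ _ := by
            apply integral_mono
            · exact (int_cs (wcs t) (Kf_cont k 0 2) (Kf_zero k 0 2 two_pos)).const_mul _
            · exact int_cs (wcs t) (Kf_cont 0 x ρ) (Kf_zero 0 x ρ (by linarith))
            · intro y
              have := Kf_cmp k x y hx ρ h1
              have := wn t y
              simp only
              nlinarith)) (by positivity)
  have hUtx := S.nonneg t x
  have Vup : V x ≤ T ^ κ * t ^ (-(κ * m)) * U t x ^ m := by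
    have h1 : V x ≤ ∫ s in t..T, (T ^ (κ * m) * t ^ (-(κ * m)) * U t x ^ m) := by
      apply intervalIntegral.integral_mono_on htT.le
      · exact (wmc.comp (Continuous.prodMk_left x)).intervalIntegrable _ _
      · simp
      · intro s hs
        have hs0 : 0 < s := lt_of_lt_of_le ht hs.1
        have h2 := wI_le (κ := κ) hl0 S.nonneg s x (t / s)
          ⟨by rw [hl]; gcongr; exact hs.2, by rw [div_le_one hs0]; exact hs.1⟩
        rw [div_mul_cancel₀ _ hs0.ne'] at h2
        have h3 := rpow_le_rpow (wn s x) h2 hm0.le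
        refine h3.trans ?_
        rw [mul_rpow (by positivity) hUtx, ← rpow_mul (by positivity), div_rpow ht.le hs0.le]
        gcongr
        rw [neg_mul, rpow_neg hs0.le, div_eq_mul_inv, inv_inv, mul_comm]
        gcongr
        exact hs.2
    rw [intervalIntegral.integral_const, smul_eq_mul] at h1
    refine h1.trans ?_
    have e : T ^ κ = T * T ^ (κ * m) := by
      rw [mul_comm, ← rpow_add_one hT.ne']; congr 1; rw [hκ]; field_simp; ring
    rw [e]
    have : 0 ≤ T ^ (κ * m) * t ^ (-(κ * m)) * U t x ^ m := by positivity
    nlinarith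
  have fin1 : b * M ≤ T ^ κ * t ^ (-(κ * m)) * U t x ^ m := by
    refine le_trans ?_ Vup
    rw [hb]
    rw [div_mul_eq_mul_div, div_le_iff₀ hI20]
    linarith
  have fin2 : b * (M * T ^ (-κ)) * t ^ (κ * m) ≤ U t x ^ m := by
    have h1 : 0 < T ^ (-κ) * t ^ (κ * m) := by positivity
    have := mul_le_mul_of_nonneg_left fin1 h1.le
    have e : T ^ (-κ) * t ^ (κ * m) * (T ^ κ * t ^ (-(κ * m)) * U t x ^ m)
        = U t x ^ m := by
      have a1 : T ^ (-κ) * T ^ κ = 1 := by rw [← rpow_add hT]; simp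
      have a2 : t ^ (κ * m) * t ^ (-(κ * m)) = 1 := by rw [← rpow_add ht]; simp
      calc _ = (T ^ (-κ) * T ^ κ) * (t ^ (κ * m) * t ^ (-(κ * m))) * U t x ^ m := by ring
        _ = _ := by rw [a1, a2]; simp
    rw [e] at this
    linarith
  have hTκ : 0 < T ^ (-κ) := rpow_pos_of_pos hT _
  have htκ : 0 < t ^ (κ * m) := rpow_pos_of_pos ht _
  have fin3 := rpow_le_rpow (by positivity) fin2 (one_div_pos.2 hm0).le
  rw [← rpow_mul hUtx, mul_one_div_cancel hm0.ne', rpow_one, mul_rpow (by positivity) (by positivity),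
    mul_rpow hb0.le (by positivity), ← rpow_mul ht.le] at fin3
  have e : κ * m * (1 / m) = κ := by field_simp
  rwa [e] at fin3


theorem upIV (d : ℕ) (m p : ℝ) (hm0 : 0 < m) (hm1 : m < 1) (hp : 1 ≤ p) : ∃ (k : ℕ) (C : ℝ), 0 < C ∧
    ∀ (T : ℝ) (U Ut : ℝ → EE d → ℝ) (G H : Fin d → ℝ → EE d → ℝ), Sol d m T U Ut G H →
    ∀ t, 0 < t → t ≤ T → ∀ s ∈ Icc 0 t, ∫ y, U s y ^ p * Kf k 0 1 y ≤
      C * ((∫ y, U 0 y ^ p * Kf k 0 1 y) + t ^ (p / (1 - m))) := by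
  have hp0 : 0 < p := by linarith
  have hm1' : 0 < 1 - m := by linarith
  have hq : 0 < p + m - 1 := by linarith
  set n := (p + m - 1) / p with hn
  have hn0 : 0 < n := by positivity
  have hn1 : n < 1 := by rw [hn, div_lt_one hp0]; linarith
  have hn1' : 0 < 1 - n := by linarith
  obtain ⟨k, hk⟩ := exists_k n hn1
  set vol := (volume (closedBall (0 : EE d) 1)).toReal with hvol
  have hv : 0 ≤ vol := ENNReal.toReal_nonneg
  set c := p * m / (p + m - 1) with hc
  have hc0 : 0 < c := by positivity
  set D := c * CK d k 1 with hD
  have hD0 : 0 ≤ D := by have := CK_nonneg d k 1; positivity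
  have hpw : 0 < (2 * (D + 1)) ^ (p / (1 - m)) := by positivity
  refine ⟨k, 2 + (2 * (D + 1)) ^ (p / (1 - m)) * vol, by positivity, ?_⟩
  intro T U Ut G H S t ht htT
  have zc : Continuous (fun x : ℝ × EE d => U x.1 x.2 ^ p) := S.contpow p hp0.le
  have zcs : ∀ s, Continuous (fun y => U s y ^ p) := fun s => zc.comp (Continuous.prodMk_right s)
  have Zc : Continuous (fun x : ℝ × EE d => c * U x.1 x.2 ^ (p + m - 1)) :=
    continuous_const.mul (S.contpow _ hq.le)
  have cY : Continuous (fun s => ∫ y, U s y ^ p * Kf k 0 1 y) :=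
    cont_int (F := fun s y => U s y ^ p) zc (Kf_cont k 0 1) (Kf_zero k 0 1 one_pos)
  set Y := fun s => ∫ y, U s y ^ p * Kf k 0 1 y with hY
  have hYn : ∀ s, 0 ≤ Y s := fun s => integral_nonneg fun y =>
    mul_nonneg (rpow_nonneg (S.nonneg s y) _) (Kf_nonneg _ _ _ _)
  obtain ⟨s1, hs1, hmax⟩ := isCompact_Icc.exists_isMaxOn (nonempty_Icc.2 ht.le) cY.continuousOn
  have hmax' : ∀ s ∈ Icc 0 t, Y s ≤ Y s1 := fun s hs => hmax hs
  set A := (2 * (D + 1) * t) ^ (1 / (1 - n)) with hA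
  have hA0 : 0 < A := by positivity
  have hA1 : A ^ (n - 1) = (2 * (D + 1) * t)⁻¹ := by
    rw [hA, ← rpow_mul (by positivity), ← rpow_neg_one]; congr 1; field_simp; ring
  have hA2 : A ^ n = A * (2 * (D + 1) * t)⁻¹ := by
    rw [← hA1, mul_comm, ← rpow_add_one hA0.ne']; congr 1; ring
  have hA3 : A = (2 * (D + 1)) ^ (p / (1 - m)) * t ^ (p / (1 - m)) := by
    have e : 1 - n = (1 - m) / p := by rw [hn]; field_simp; ring
    rw [← mul_rpow (by positivity) ht.le, hA, e, one_div_div]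
  have h1 := wfQ T S.Tpos (fun s y => U s y ^ p) (fun s y => c * U s y ^ (p + m - 1)) zc Zc
    k 0 1 one_pos (by
      intro t1 t2 h0 h2 ε hε
      obtain ⟨h0, a, b⟩ := S.fdp hm0 p hp (Icc t1 t2 ×ˢ closedBall 0 1)
        (isCompact_Icc.prod (isCompact_closedBall _ _))
        (by
          rintro ⟨s, y⟩ ⟨hs, hy⟩
          exact ⟨⟨lt_of_lt_of_le h0 hs.1, lt_of_le_of_lt hs.2 h2⟩,
            closedBall_subset_ball (by norm_num) hy⟩) ε hε
      exact ⟨h0, a, fun h hh hl s hs _ y hy => b h hh hl (s, y) ⟨hs, hy⟩⟩)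
    0 s1 le_rfl hs1.1 (hs1.2.trans htT)
  have h2 : ∫ s in (0:ℝ)..s1, ∫ y, c * U s y ^ (p + m - 1) * lapK k 0 1 y ≤
      ∫ s in (0:ℝ)..s1, (D * (A ^ (n - 1) * Y s1 + A ^ n * vol)) := by
    apply intervalIntegral.integral_mono_on hs1.1
    · apply Continuous.intervalIntegrable
      exact cont_int (F := fun s y => c * U s y ^ (p + m - 1)) Zc (lapK_cont k 0 1)
        (lapK_zero k 0 1 one_pos)
    · simp
    · intro s hs
      have b := lapK_int_bound n A hn0 hn1 hA0 k hk (0 : EE d) 1 one_pos (fun y => U s y ^ p) (zcs s)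
        (fun y => rpow_nonneg (S.nonneg s y) _)
      have b2 := (abs_le.1 b).2
      have e : ∀ y, (U s y ^ p) ^ n = U s y ^ (p + m - 1) := fun y => by
        rw [← rpow_mul (S.nonneg s y)]; congr 1; rw [hn]; field_simp
      simp only [e] at b2
      simp only [mul_assoc c, integral_const_mul]
      have b3 := mul_le_mul_of_nonneg_left b2 hc0.le
      refine b3.trans ?_
      rw [hD, mul_assoc]
      have := hmax' s ⟨hs.1, hs.2.trans hs1.2⟩
      have := CK_nonneg d k 1
      have hY' : ∫ y, U s y ^ p * Kf k 0 1 y ≤ Y s1 := hmax' s ⟨hs.1, hs.2.trans hs1.2⟩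
      gcongr
  rw [intervalIntegral.integral_const, smul_eq_mul, sub_zero, hA1, hA2] at h2
  have h3 : Y s1 - Y 0 ≤ s1 * (D * ((2 * (D + 1) * t)⁻¹ * Y s1 + A * (2 * (D + 1) * t)⁻¹ * vol)) :=
    h1.trans h2
  have h4 : s1 * (D * ((2 * (D + 1) * t)⁻¹ * Y s1 + A * (2 * (D + 1) * t)⁻¹ * vol))
      ≤ (Y s1 + A * vol) / 2 := by
    have e : s1 * (D * ((2 * (D + 1) * t)⁻¹ * Y s1 + A * (2 * (D + 1) * t)⁻¹ * vol))
      = (s1 / t) * (D / (D + 1)) * ((Y s1 + A * vol) / 2) := by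
      generalize Y s1 = y1
      field_simp
    rw [e]
    have a1 : s1 / t ≤ 1 := by rw [div_le_one ht]; exact hs1.2
    have a2 : D / (D + 1) ≤ 1 := by rw [div_le_one (by positivity)]; linarith
    have a3 : (s1 / t) * (D / (D + 1)) ≤ 1 := mul_le_one₀ a1 (by positivity) a2
    have a4 : 0 ≤ (Y s1 + A * vol) / 2 := by have := hYn s1; positivity
    nlinarith
  intro s hs
  have h5 : Y s1 ≤ 2 * Y 0 + A * vol := by linarith
  refine (hmax' s hs).trans (h5.trans ?_)
  change _ ≤ _ * (Y 0 + _)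
  have := hYn 0
  rw [hA3]
  generalize (2 * (D + 1)) ^ (p / (1 - m)) = q1 at *
  have : 0 < t ^ (p / (1 - m)) := by positivity
  generalize t ^ (p / (1 - m)) = q2 at *
  have : 0 ≤ q1 * vol * Y 0 := by positivity
  nlinarith


noncomputable def ze {d : ℕ} (c : EE d) (ρ : ℝ) (y : EE d) : ℝ := 1 - ‖y - c‖ ^ 2 / ρ ^ 2
noncomputable def zg {d : ℕ} (c : EE d) (ρ : ℝ) (i : Fin d) (y : EE d) : ℝ :=
  -(2 * (y i - c i)) / ρ ^ 2

lemma ze_d {d : ℕ} (c : EE d) (ρ : ℝ) (i : Fin d) (y : EE d) :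
    HasDerivAt (fun h : ℝ => ze c ρ (y + h • eb i)) (zg c ρ i y) 0 := quad_deriv c ρ i y

lemma zg_d {d : ℕ} (c : EE d) (ρ : ℝ) (i : Fin d) (y : EE d) :
    HasDerivAt (fun h : ℝ => zg c ρ i (y + h • eb i)) (-2 / ρ ^ 2) 0 := by
  have e : ∀ h : ℝ, zg c ρ i (y + h • eb i) = -(2 * (y i + h - c i)) / ρ ^ 2 := by
    intro h; simp [zg, eb]
  simp_rw [e]
  have := (((((hasDerivAt_id (0 : ℝ)).const_add (y i)).sub_const (c i)).const_mul 2).neg).div_const (ρ ^ 2)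
  exact this.congr_deriv (by ring)

lemma ze_c {d : ℕ} (c : EE d) (ρ : ℝ) : Continuous (ze c ρ) := by unfold ze; fun_prop
lemma zg_c {d : ℕ} (c : EE d) (ρ : ℝ) (i : Fin d) : Continuous (zg c ρ i) := by unfold zg; fun_prop

lemma zg_sum {d : ℕ} (c : EE d) (ρ : ℝ) (hρ : 0 < ρ) (y : EE d) (hy : y ∈ closedBall c ρ) :
    ∑ i, zg c ρ i y ^ 2 ≤ 4 / ρ ^ 2 := by
  have e : ∑ i, zg c ρ i y ^ 2 = 4 / ρ ^ 4 * ‖y - c‖ ^ 2 := by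
    rw [EuclideanSpace.norm_sq_eq, Finset.mul_sum]
    refine Finset.sum_congr rfl fun i _ => ?_
    simp [zg, sq_abs]; ring
  rw [e]
  rw [mem_closedBall, dist_eq_norm] at hy
  calc 4 / ρ ^ 4 * ‖y - c‖ ^ 2 ≤ 4 / ρ ^ 4 * ρ ^ 2 := by gcongr
    _ = _ := by field_simp

section
variable {d : ℕ} {m T : ℝ} {U Ut : ℝ → EE d → ℝ} {G H : Fin d → ℝ → EE d → ℝ}

lemma Sol.V_lap (S : Sol d m T U Ut G H) (hm0 : 0 < m) (s0 s1 : ℝ) (h0 : 0 < s0) (h1 : s1 < T)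
    (s : ℝ) (hs : s ∈ Icc s0 s1) (y : EE d) (hy : y ∈ ball (0 : EE d) 6) (ε : ℝ) (hε : 0 < ε) :
    ∃ h0 > 0, ∀ h, 0 < h → h < h0 →
      lapd (fun y => ∫ σ in s0..s, U σ y ^ m) y h ≤ h ^ 2 * (U s y - U s0 y) + ε * h ^ 2 := by
  have h01 : s0 ≤ s := hs.1
  have hsub : Icc s0 s1 ×ˢ {y} ⊆ QQ d T := by
    rintro ⟨a, b⟩ ⟨ha, hb⟩
    rw [mem_singleton_iff] at hb
    simp only at ha hb
    subst hb
    exact ⟨⟨lt_of_lt_of_le h0 ha.1, lt_of_le_of_lt ha.2 h1⟩, hy⟩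
  obtain ⟨h0', hp, hb⟩ := unif_lap (fun s y => U s y ^ m) (fun i s y => m * U s y ^ (m - 1) * G i s y)
    (fun i s y => m * U s y ^ (m - 1) * H i s y + m * (m - 1) * U s y ^ (m - 2) * G i s y ^ 2)
    (QQ d T) (Icc s0 s1 ×ˢ {y}) (QQ_open d T) (isCompact_Icc.prod isCompact_singleton) hsub
    (fun x hx i => S.d1pow _ x hx i) (fun x hx i => S.d2pow _ x hx i)
    (fun i => (((continuousOn_const.mul (S.cpow _)).mul (S.cH i)).add
      ((continuousOn_const.mul (S.cpow _)).mul ((S.cG i).pow 2))))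
    (ε / (s1 - s0 + 1)) (by have := hs.1.trans hs.2; exact div_pos hε (by linarith))
  refine ⟨h0', hp, fun h hh hl => ?_⟩
  have cm : Continuous (fun x : ℝ × EE d => U x.1 x.2 ^ m) := S.contpow m hm0.le
  have cz : ∀ z : EE d, Continuous (fun σ => U σ z ^ m) := fun z => cm.comp (Continuous.prodMk_left z)
  have ii : ∀ z : EE d, IntervalIntegrable (fun σ => U σ z ^ m) volume s0 s :=
    fun z => (cz z).intervalIntegrable _ _
  have e : lapd (fun y => ∫ σ in s0..s, U σ y ^ m) y h =
      ∫ σ in s0..s, lapd (fun y => U σ y ^ m) y h := by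
    unfold lapd
    rw [intervalIntegral.integral_finsetSum]
    · refine Finset.sum_congr rfl fun i _ => ?_
      rw [intervalIntegral.integral_sub, intervalIntegral.integral_add (ii _) (ii _),
        intervalIntegral.integral_const_mul]
      · exact (ii _).add (ii _)
      · exact (ii _).const_mul _
    · intro i _
      exact ((ii _).add (ii _)).sub ((ii _).const_mul _)
  have cUt : ContinuousOn (fun σ => Ut σ y) (Icc s0 s) := by
    refine S.cUt.comp (f := fun σ => (σ, y)) (by fun_prop) ?_
    intro σ hσ
    exact hsub ⟨⟨hσ.1, hσ.2.trans hs.2⟩, rfl⟩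
  have iUt : IntervalIntegrable (fun σ => Ut σ y) volume s0 s := by
    apply ContinuousOn.intervalIntegrable
    rwa [uIcc_of_le h01]
  have ftc : ∫ σ in s0..s, Ut σ y = U s y - U s0 y := by
    apply intervalIntegral.integral_eq_sub_of_hasDerivAt _ iUt
    intro σ hσ
    rw [uIcc_of_le h01] at hσ
    exact S.dt (σ, y) (hsub ⟨⟨hσ.1, hσ.2.trans hs.2⟩, rfl⟩)
  rw [e]
  have h2 : ∫ σ in s0..s, lapd (fun y => U σ y ^ m) y h ≤
      ∫ σ in s0..s, (h ^ 2 * Ut σ y + ε / (s1 - s0 + 1) * h ^ 2) := by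
    apply intervalIntegral.integral_mono_on h01
    · apply Continuous.intervalIntegrable
      unfold lapd
      exact continuous_finsetSum _ fun i _ => ((cz _).add (cz _)).sub ((cz _).const_mul _)
    · exact (iUt.const_mul _).add (by simp)
    · intro σ hσ
      have hin : (σ, y) ∈ Icc s0 s1 ×ˢ {y} := ⟨⟨hσ.1, hσ.2.trans hs.2⟩, rfl⟩
      have b := (abs_le.1 (hb h hh hl (σ, y) hin)).2
      have pd := S.pde (σ, y) (hsub hin)
      simp only at b pd
      rw [← pd] at b
      linarith
  refine h2.trans ?_
  rw [intervalIntegral.integral_add (iUt.const_mul _) (by simp), intervalIntegral.integral_const_mul, ftc,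
    intervalIntegral.integral_const, smul_eq_mul]
  have : (s - s0) * (ε / (s1 - s0 + 1) * h ^ 2) ≤ ε * h ^ 2 := by
    have a : 0 < s1 - s0 + 1 := by linarith [hs.2]
    rw [← mul_assoc]
    gcongr
    rw [mul_div_assoc', div_le_iff₀ a]
    nlinarith [hs.2]
  linarith

lemma Sol.zU (S : Sol d m T U Ut G H) (c : EE d) (ρ : ℝ) (x : ℝ × EE d) (hx : x ∈ QQ d T) (ε : ℝ)
    (hε : 0 < ε) : ∃ h0 > 0, ∀ h, 0 < h → h < h0 →
      h ^ 2 * (∑ i, (2 * zg c ρ i x.2 ^ 2 * U x.1 x.2 + 2 * ze c ρ x.2 * (-2 / ρ ^ 2) * U x.1 x.2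
        + 4 * ze c ρ x.2 * zg c ρ i x.2 * G i x.1 x.2 + ze c ρ x.2 ^ 2 * H i x.1 x.2)) - ε * h ^ 2 ≤
      lapd (fun y => ze c ρ y ^ 2 * U x.1 y) x.2 h := by
  have cze : ContinuousOn (fun p : ℝ × EE d => ze c ρ p.2) (QQ d T) :=
    ((ze_c c ρ).comp continuous_snd).continuousOn
  have czg : ∀ i, ContinuousOn (fun p : ℝ × EE d => zg c ρ i p.2) (QQ d T) :=
    fun i => ((zg_c c ρ i).comp continuous_snd).continuousOn
  have cU := S.cont.continuousOn (s := QQ d T)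
  obtain ⟨h0, hp, hb⟩ := unif_lap (fun s y => ze c ρ y ^ 2 * U s y)
    (fun i s y => 2 * ze c ρ y * zg c ρ i y * U s y + ze c ρ y ^ 2 * G i s y)
    (fun i s y => 2 * zg c ρ i y ^ 2 * U s y + 2 * ze c ρ y * (-2 / ρ ^ 2) * U s y
        + 4 * ze c ρ y * zg c ρ i y * G i s y + ze c ρ y ^ 2 * H i s y)
    (QQ d T) {x} (QQ_open d T) isCompact_singleton (by simpa using hx)
    (fun x hx i => by
      have := ((ze_d c ρ i x.2).pow 2).mul (S.d1 x hx i)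
      exact this.congr_deriv (by simp))
    (fun x hx i => by
      have := ((((ze_d c ρ i x.2).const_mul 2).mul (zg_d c ρ i x.2)).mul (S.d1 x hx i)).add
        (((ze_d c ρ i x.2).pow 2).mul (S.d2 x hx i))
      exact this.congr_deriv (by simp; ring))
    (fun i => by
      have := czg i; have := S.cG i; have := S.cH i
      fun_prop) ε hε
  refine ⟨h0, hp, fun h hh hl => ?_⟩
  have := (abs_le.1 (hb h hh hl x rfl)).1
  linarith

end

lemma alg_i (m u z g h ζ r : ℝ) (hm1 : m < 1) (hm0 : 0 < m) (hu : 0 < u) (hr : 0 < r)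
    (hζ0 : 0 ≤ ζ) (hζ1 : ζ ≤ 1) :
    ζ ^ 2 * (m * u ^ (m - 1) * h + m * (m - 1) * u ^ (m - 2) * g ^ 2) ≤
      m * u ^ (m - 1) * (2 * z ^ 2 * u + 2 * ζ * (-2 / r ^ 2) * u + 4 * ζ * z * g + ζ ^ 2 * h)
      + m * u ^ m * (4 / (1 - m) * z ^ 2 + 4 / r ^ 2) := by
  have e1 : u ^ m = u ^ (m - 1) * u := by rw [← rpow_add_one hu.ne']; congr 1; ring
  have e2 : u ^ (m - 2) = u ^ (m - 1) / u := by rw [← rpow_sub_one hu.ne']; congr 1; ring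
  rw [e1, e2]
  have ha : 0 < u ^ (m - 1) := by positivity
  generalize u ^ (m - 1) = a at *
  have hm : 0 < 1 - m := by linarith
  have sq : 0 ≤ (1 - m) / u * (ζ * g + 2 * u * z / (1 - m)) ^ 2 := by positivity
  have e : (1 - m) / u * (ζ * g + 2 * u * z / (1 - m)) ^ 2
     = (1 - m) * ζ ^ 2 * g ^ 2 / u + 4 * ζ * z * g + 4 * u * z ^ 2 / (1 - m) := by
    field_simp; ring
  rw [e] at sq
  have h3 : 0 ≤ m * a * (((1 - m) * ζ ^ 2 * g ^ 2 / u + 4 * ζ * z * g + 4 * u * z ^ 2 / (1 - m))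
      + 2 * z ^ 2 * u + 4 * u / r ^ 2 * (1 - ζ)) := by
    have : 0 ≤ 1 - ζ := by linarith
    have h5 : 0 ≤ 2 * z ^ 2 * u := by positivity
    have h6 : 0 ≤ 4 * u / r ^ 2 * (1 - ζ) := by positivity
    have : 0 < m * a := by positivity
    apply mul_nonneg this.le
    linarith
  have e4 : m * a * (2 * z ^ 2 * u + 2 * ζ * (-2 / r ^ 2) * u + 4 * ζ * z * g + ζ ^ 2 * h)
      + m * (a * u) * (4 / (1 - m) * z ^ 2 + 4 / r ^ 2) -
      ζ ^ 2 * (m * a * h + m * (m - 1) * (a / u) * g ^ 2) = m * a * (((1 - m) * ζ ^ 2 * g ^ 2 / u + 4 * ζ * z * g + 4 * u * z ^ 2 / (1 - m))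
      + 2 * z ^ 2 * u + 4 * u / r ^ 2 * (1 - ζ)) := by
    ring
  linarith


section
variable {d : ℕ} {m T : ℝ} {U Ut : ℝ → EE d → ℝ} {G H : Fin d → ℝ → EE d → ℝ}

lemma alg_tot (m u N r τ η K ζ UT ε Sg : ℝ) (D : ℝ) (hm0 : 0 < m) (hm1 : m < 1) (hu : 0 < u)
    (hN : 0 < N) (hr : 0 < r) (hτ : τ = N ^ (1 - m) * r ^ 2) (huN : u ≤ 2 * N)
    (hη0 : 0 ≤ η) (hη1 : η ≤ 1) (hζ0 : 0 ≤ ζ) (hζ1 : ζ ≤ 1) (hD : 0 ≤ D)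
    (hK : K = (2 + 16 / (1 - m) + 4 * D) / (1 - m) / r ^ 2)
    (h1 : ζ ^ 2 * UT ≤ m * u ^ (m - 1) * Sg + m * u ^ m * ((16 / (1 - m) + 4 * D) / r ^ 2))
    (h2 : η * Sg ≤ K * u)
    (h3 : 0 ≤ 1 / τ * ζ ^ 2 * u + η * ζ ^ 2 * UT - K * u ^ m - ε) (hε : 0 < ε) : False := by
  have e1 : u ^ m = u ^ (m - 1) * u := by rw [← rpow_add_one hu.ne']; congr 1; ring
  have e2 : u = u ^ m * u ^ (1 - m) := by rw [← rpow_add hu]; simp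
  have hm : 0 < 1 - m := by linarith
  have hum : 0 < u ^ m := by positivity
  have hτ0 : 0 < τ := by rw [hτ]; positivity
  have b1 : u ^ (1 - m) ≤ 2 * N ^ (1 - m) := by
    have := rpow_le_rpow hu.le huN hm.le
    rw [mul_rpow (by norm_num) hN.le] at this
    have h2 : (2 : ℝ) ^ (1 - m) ≤ 2 ^ (1 : ℝ) := rpow_le_rpow_of_exponent_le (by norm_num) (by linarith)
    rw [rpow_one] at h2
    have : 0 < N ^ (1 - m) := by positivity
    nlinarith
  have b2 : 1 / τ * u ≤ 2 / r ^ 2 * u ^ m := by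
    have : u ≤ u ^ m * (2 * N ^ (1 - m)) := by
      calc u = u ^ m * u ^ (1 - m) := e2
        _ ≤ _ := by gcongr
    rw [one_div, inv_mul_le_iff₀ hτ0, hτ]
    calc u ≤ u ^ m * (2 * N ^ (1 - m)) := this
      _ = _ := by field_simp
  have b3 : 1 / τ * ζ ^ 2 * u ≤ 2 / r ^ 2 * u ^ m := by
    refine le_trans ?_ b2
    have : ζ ^ 2 ≤ 1 := pow_le_one₀ hζ0 hζ1
    have : 0 < 1 / τ * u := by positivity
    nlinarith
  have b4 : η * ζ ^ 2 * UT ≤ m * u ^ m * K + m * u ^ m * ((16 / (1 - m) + 4 * D) / r ^ 2) := by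
    have a1 := mul_le_mul_of_nonneg_left h1 hη0
    have a2 : 0 < m * u ^ (m - 1) := by positivity
    have a3 := mul_le_mul_of_nonneg_left h2 a2.le
    have a4 : 0 ≤ m * u ^ m * ((16 / (1 - m) + 4 * D) / r ^ 2) := by positivity
    have a5 := mul_le_mul_of_nonneg_right hη1 a4
    have a6 : m * u ^ (m - 1) * (K * u) = m * u ^ m * K := by rw [e1]; ring
    rw [a6] at a3
    calc η * ζ ^ 2 * UT = η * (ζ ^ 2 * UT) := by ring
      _ ≤ _ := a1
      _ = m * u ^ (m - 1) * (η * Sg) + η * (m * u ^ m * ((16 / (1 - m) + 4 * D) / r ^ 2)) := by ring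
      _ ≤ _ := by linarith
  have b5 : K * (1 - m) = 2 / r ^ 2 + (16 / (1 - m) + 4 * D) / r ^ 2 := by
    rw [hK]; field_simp; ring
  have b6 : 0 ≤ (16 / (1 - m) + 4 * D) / r ^ 2 := by positivity
  have b7 : m * u ^ m * ((16 / (1 - m) + 4 * D) / r ^ 2) ≤ u ^ m * ((16 / (1 - m) + 4 * D) / r ^ 2) := by
    gcongr; nlinarith
  have b8 : u ^ m * (K * (1 - m)) = u ^ m * (2 / r ^ 2 + (16 / (1 - m) + 4 * D) / r ^ 2) := by rw [b5]
  nlinarith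

theorem Sol.upII (S : Sol d m T U Ut G H) (hm0 : 0 < m) (hm1 : m < 1) (s0 s1 : ℝ) (x1 : EE d)
    (r N : ℝ) (hs0 : 0 < s0) (h01 : s0 < s1) (hs1T : s1 < T) (hr : 0 < r) (hN : 0 < N)
    (hball : closedBall x1 r ⊆ ball 0 6) (hτ : s1 - s0 = N ^ (1 - m) * r ^ 2)
    (hU : ∀ s ∈ Icc s0 s1, ∀ y ∈ closedBall x1 r, U s y ≤ 2 * N) :
    U s1 x1 ≤ (2 + 16 / (1 - m) + 4 * d) / (1 - m) / r ^ 2 * ∫ s in s0..s1, U s x1 ^ m := by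
  set K := (2 + 16 / (1 - m) + 4 * (d : ℝ)) / (1 - m) / r ^ 2 with hK
  have hm : 0 < 1 - m := by linarith
  have hK0 : 0 < K := by positivity
  set τ := s1 - s0 with hτd
  have hτ0 : 0 < τ := by linarith
  have cm : Continuous (fun x : ℝ × EE d => U x.1 x.2 ^ m) := S.contpow m hm0.le
  have cz : ∀ z : EE d, Continuous (fun σ => U σ z ^ m) := fun z => cm.comp (Continuous.prodMk_left z)
  have cV : Continuous (fun p : ℝ × EE d => ∫ σ in s0..p.1, U σ p.2 ^ m) := by
    apply intervalIntegral.continuous_parametric_intervalIntegral_of_continuous (μ := volume)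
      (f := fun (p : ℝ × EE d) σ => U σ p.2 ^ m)
    · exact cm.comp (continuous_snd.prodMk (continuous_snd.comp continuous_fst))
    · exact continuous_fst
  have key : ∀ ε > 0, U s1 x1 - K * (∫ s in s0..s1, U s x1 ^ m) ≤ ε * τ := by
    intro ε hε
    by_contra hc
    push Not at hc
    set P : ℝ × EE d → ℝ := fun p => (p.1 - s0) / τ * (ze x1 r p.2 ^ 2 * U p.1 p.2)
      - K * (∫ σ in s0..p.1, U σ p.2 ^ m) - ε * (p.1 - s0) with hP
    have cP : Continuous P := by
      have := S.cont
      have := (ze_c x1 r).comp (continuous_snd (X := ℝ) (Y := EE d))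
      simp only [Function.comp_def] at this
      fun_prop
    have hcomp : IsCompact (Icc s0 s1 ×ˢ closedBall x1 r) :=
      isCompact_Icc.prod (isCompact_closedBall _ _)
    have hmem : (s1, x1) ∈ Icc s0 s1 ×ˢ closedBall x1 r :=
      ⟨⟨h01.le, le_rfl⟩, mem_closedBall_self hr.le⟩
    obtain ⟨⟨s, y⟩, ⟨hs, hy⟩, hmx⟩ := hcomp.exists_isMaxOn ⟨_, hmem⟩ cP.continuousOn
    simp only at hs hy
    have hmx' : ∀ q ∈ Icc s0 s1 ×ˢ closedBall x1 r, P q ≤ P (s, y) := fun q hq => hmx hq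
    have hpos : 0 < P (s, y) := by
      refine lt_of_lt_of_le ?_ (hmx' _ hmem)
      simp only [hP, ze]
      rw [← hτd, div_self hτ0.ne']
      simp
      linarith
    have hVn : 0 ≤ ∫ σ in s0..s, U σ y ^ m :=
      intervalIntegral.integral_nonneg hs.1 fun σ _ => rpow_nonneg (S.nonneg σ y) _
    have hss : s0 < s := by
      rcases eq_or_lt_of_le hs.1 with h | h
      · exfalso
        rw [← h] at hpos
        simp [hP] at hpos
      · exact h
    have hyn : ‖y - x1‖ < r := by
      rw [mem_closedBall, dist_eq_norm] at hy
      rcases eq_or_lt_of_le hy with h | h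
      · exfalso
        simp only [hP, ze, h] at hpos
        rw [div_self (by positivity)] at hpos
        have : 0 ≤ K * ∫ σ in s0..s, U σ y ^ m := by positivity
        have : 0 ≤ ε * (s - s0) := mul_nonneg hε.le (by linarith)
        simp at hpos
        linarith
      · exact h
    have hy6 := hball hy
    have hsT : s < T := lt_of_le_of_lt hs.2 hs1T
    have hQ : (s, y) ∈ QQ d T := ⟨⟨by linarith, hsT⟩, hy6⟩
    have hu := S.pos _ hQ
    simp only at hu
    set η := (s - s0) / τ with hη
    have hη0 : 0 ≤ η := div_nonneg (by linarith) hτ0.le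
    have hη1 : η ≤ 1 := by rw [hη, div_le_one hτ0]; linarith [hs.2]
    set Sg := ∑ i, (2 * zg x1 r i y ^ 2 * U s y + 2 * ze x1 r y * (-2 / r ^ 2) * U s y
        + 4 * ze x1 r y * zg x1 r i y * G i s y + ze x1 r y ^ 2 * H i s y) with hSg
    have hζ1 : ze x1 r y ≤ 1 := by
      unfold ze
      have : 0 ≤ ‖y - x1‖ ^ 2 / r ^ 2 := by positivity
      linarith
    have hζ0 : 0 ≤ ze x1 r y := by
      unfold ze
      rw [sub_nonneg, div_le_one (by positivity)]
      gcongr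
    refine alg_tot m (U s y) N r τ η K (ze x1 r y) (Ut s y) ε Sg d hm0 hm1 hu hN hr hτ
      (hU s hs y hy) hη0 hη1 hζ0 hζ1 (by positivity) hK ?_ ?_ ?_ hε
    · have pd := S.pde _ hQ
      simp only at pd
      rw [pd, Finset.mul_sum, hSg, Finset.mul_sum]
      refine (Finset.sum_le_sum fun i _ => alg_i m (U s y) (zg x1 r i y) (G i s y) (H i s y)
        (ze x1 r y) r hm1 hm0 hu hr hζ0 hζ1).trans ?_
      rw [Finset.sum_add_distrib]
      gcongr
      rw [← Finset.mul_sum]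
      have := zg_sum x1 r hr y hy
      gcongr
      rw [Finset.sum_add_distrib, ← Finset.mul_sum]
      simp only [Finset.sum_const, Finset.card_univ, Fintype.card_fin, nsmul_eq_mul]
      calc 4 / (1 - m) * ∑ i, zg x1 r i y ^ 2 + d * (4 / r ^ 2)
          ≤ 4 / (1 - m) * (4 / r ^ 2) + d * (4 / r ^ 2) := by gcongr
        _ = _ := by ring
    · apply le_of_forall_pos_le_add
      intro e he
      obtain ⟨a, ha, ha'⟩ := S.zU x1 r (s, y) hQ (e / 2) (by positivity)
      obtain ⟨b, hb, hb'⟩ := S.V_lap hm0 s0 s1 hs0 hs1T s hs y hy6 (e / (2 * K)) (by positivity)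
      obtain ⟨h, hh, hha, hhb, hhc⟩ : ∃ h : ℝ, 0 < h ∧ h < a ∧ h < b ∧ h < r - ‖y - x1‖ := by
        have : 0 < min a (min b (r - ‖y - x1‖)) := lt_min ha (lt_min hb (by linarith))
        obtain ⟨h, h1, h2⟩ := exists_between this
        simp only [lt_min_iff] at h2
        exact ⟨h, h1, h2.1, h2.2.1, h2.2.2⟩
      have A := ha' h hh hha
      have B := hb' h hh hhb
      simp only at A
      rw [← hSg] at A
      have hle : ∀ v : EE d, ‖v‖ = 1 → ∀ σ : ℝ, |σ| = h → P (s, y + σ • v) ≤ P (s, y) := by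
        intro v hv σ hσ
        apply hmx'
        refine ⟨hs, ?_⟩
        rw [mem_closedBall, dist_eq_norm]
        have : y + σ • v - x1 = (y - x1) + σ • v := by abel
        rw [this]
        refine (norm_add_le _ _).trans ?_
        rw [norm_smul, hv, Real.norm_eq_abs, hσ]
        linarith
      have hlap : η * lapd (fun y => ze x1 r y ^ 2 * U s y) y h
          - K * lapd (fun y => ∫ σ in s0..s, U σ y ^ m) y h ≤ 0 := by
        unfold lapd
        rw [Finset.mul_sum, Finset.mul_sum, ← Finset.sum_sub_distrib]
        apply Finset.sum_nonpos
        intro i _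
        have p1 := hle (eb i) (norm_eb i) h (abs_of_pos hh)
        have p2 := hle (eb i) (norm_eb i) (-h) (by rw [abs_neg, abs_of_pos hh])
        rw [neg_smul, ← sub_eq_add_neg] at p2
        simp only [hP, ← hη] at p1 p2
        linarith
      have A2 := mul_le_mul_of_nonneg_left A hη0
      have B2 := mul_le_mul_of_nonneg_left B hK0.le
      have hU0 := S.nonneg s0 y
      have e3 : K * (h ^ 2 * (U s y - U s0 y) + e / (2 * K) * h ^ 2)
        = h ^ 2 * (K * U s y - K * U s0 y + e / 2) := by field_simp
      rw [e3] at B2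
      have h5 : h ^ 2 * (η * Sg) ≤ h ^ 2 * (K * U s y + e) := by
        have : η * (e / 2 * h ^ 2) ≤ e / 2 * h ^ 2 := by
          have : 0 ≤ e / 2 * h ^ 2 := by positivity
          nlinarith
        have : 0 ≤ h ^ 2 * (K * U s0 y) := by positivity
        nlinarith
      exact le_of_mul_le_mul_left h5 (by positivity)
    · apply le_of_forall_pos_le_add
      intro e he
      have D1 : HasDerivAt (fun σ => P (σ, y)) (1 / τ * ze x1 r y ^ 2 * U s y + η * ze x1 r y ^ 2 * Ut s y - K * U s y ^ m - ε) s := by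
        have a1 : HasDerivAt (fun σ => (σ - s0) / τ) (1 / τ) s :=
          ((hasDerivAt_id s).sub_const s0).div_const τ
        have a2 := (S.dt _ hQ).const_mul (ze x1 r y ^ 2)
        have a3 : HasDerivAt (fun σ => ∫ q in s0..σ, U q y ^ m) (U s y ^ m) s :=
          intervalIntegral.integral_hasDerivAt_right ((cz y).intervalIntegrable _ _)
            ((cz y).stronglyMeasurableAtFilter _ _) (cz y).continuousAt
        have a4 : HasDerivAt (fun σ => ε * (σ - s0)) (ε * 1) s :=
          ((hasDerivAt_id s).sub_const s0).const_mul ε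
        have := ((a1.mul a2).sub (a3.const_mul K)).sub a4
        exact this.congr_deriv (by simp only [← hη]; ring)
      have hge : 0 ≤ 1 / τ * ze x1 r y ^ 2 * U s y + η * ze x1 r y ^ 2 * Ut s y - K * U s y ^ m - ε := by
        have t1 := (hasDerivWithinAt_iff_tendsto_slope' (self_notMem_Iio)).1 (D1.hasDerivWithinAt (s := Iio s))
        refine ge_of_tendsto t1 ?_
        filter_upwards [Ioo_mem_nhdsLT hss] with σ hσ
        have := hmx' (σ, y) ⟨⟨hσ.1.le, hσ.2.le.trans hs.2⟩, hy⟩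
        rw [slope_def_field]
        exact div_nonneg_of_nonpos (by linarith) (by linarith [hσ.2])
      linarith
  have : U s1 x1 - K * (∫ s in s0..s1, U s x1 ^ m) ≤ 0 := by
    apply le_of_forall_pos_le_add
    intro ε hε
    have := key (ε / τ) (by positivity)
    rw [div_mul_cancel₀ _ hτ0.ne'] at this
    linarith
  linarith

end


lemma qf_mono {d : ℕ} (c : EE d) (ρ r : ℝ) (hρ : 0 < ρ) (hr : ρ ≤ r) (y : EE d) :
    qf c ρ y ≤ qf c r y := by
  unfold qf
  gcongr

lemma pm_split (x a m p : ℝ) (hx : 0 ≤ x) (ha : 0 < a) (hm : 0 < m) (hmp : m ≤ p) :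
    x ^ m ≤ a ^ m + a ^ (m - p) * x ^ p := by
  have hp : 0 < p := by linarith
  rcases le_or_gt x a with h | h
  · have := rpow_le_rpow hx h hm.le
    have : 0 ≤ a ^ (m - p) * x ^ p := by positivity
    linarith
  · have hx0 : 0 < x := by linarith
    have h1 : x ^ m = x ^ (m - p) * x ^ p := by rw [← rpow_add hx0]; simp
    have h2 : x ^ (m - p) ≤ a ^ (m - p) := rpow_le_rpow_of_nonpos ha h.le (by linarith)
    have h3 : 0 < a ^ m := by positivity
    have : x ^ (m - p) * x ^ p ≤ a ^ (m - p) * x ^ p := by gcongr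
    linarith

lemma alg3 (m p N r τ A I2 I3 Yb K0 e δ V : ℝ) (d : ℕ) (hN : 0 < N) (hr : 0 < r)
    (hτ : τ = N ^ (1 - m) * r ^ 2) (hI2 : 0 < I2) (hK0 : 0 < K0) (he : 0 < e) (hδ : 0 < δ)
    (h1 : N ≤ K0 / r ^ 2 * V) (h2 : V * I2 ≤ A + 2 * N * I3 / 12 * (e * r) ^ 2)
    (h3 : A ≤ τ * ((δ * N) ^ m * I2 + ((e * r) ^ d)⁻¹ * ((δ * N) ^ (m - p) * Yb)))
    (h4 : K0 * I3 / 6 * e ^ 2 ≤ I2 / 2) (h5 : K0 * δ ^ m = 1 / 4) :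
    N ^ p * r ^ d ≤ 4 * K0 * δ ^ (m - p) * (e ^ d)⁻¹ / I2 * Yb := by
  have a1 : N * I2 ≤ K0 / r ^ 2 * (V * I2) := by
    calc N * I2 ≤ (K0 / r ^ 2 * V) * I2 := by gcongr
      _ = _ := by ring
  have hk : 0 < K0 / r ^ 2 := by positivity
  have a2 := mul_le_mul_of_nonneg_left h2 hk.le
  have a3 := mul_le_mul_of_nonneg_left h3 hk.le
  have e1 : K0 / r ^ 2 * (A + 2 * N * I3 / 12 * (e * r) ^ 2) = K0 / r ^ 2 * A + N * (K0 * I3 / 6 * e ^ 2) := by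
    field_simp; ring
  have e2 : K0 / r ^ 2 * (τ * ((δ * N) ^ m * I2 + ((e * r) ^ d)⁻¹ * ((δ * N) ^ (m - p) * Yb)))
      = N * I2 / 4 + K0 * δ ^ (m - p) * (e ^ d)⁻¹ * (N ^ (1 - p) * (r ^ d)⁻¹) * Yb := by
    rw [hτ, mul_rpow hδ.le hN.le, mul_rpow hδ.le hN.le, mul_pow]
    have b1 : N ^ (1 - m) * N ^ m = N := by rw [← rpow_add hN]; simp
    have b2 : N ^ (1 - m) * N ^ (m - p) = N ^ (1 - p) := by rw [← rpow_add hN]; congr 1; ring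
    calc _ = (K0 * δ ^ m) * (N ^ (1 - m) * N ^ m) * I2 * (r ^ 2 / r ^ 2)
        + K0 * δ ^ (m - p) * (e ^ d)⁻¹ * ((N ^ (1 - m) * N ^ (m - p)) * (r ^ d)⁻¹) * Yb * (r ^ 2 / r ^ 2) := by
          rw [mul_inv]; ring
      _ = _ := by rw [b1, b2, h5, div_self (by positivity)]; ring
  rw [e1] at a2
  rw [e2] at a3
  have a4 := mul_le_mul_of_nonneg_left h4 hN.le
  have a5 : N * I2 / 4 ≤ K0 * δ ^ (m - p) * (e ^ d)⁻¹ * (N ^ (1 - p) * (r ^ d)⁻¹) * Yb := by linarith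
  have hNp : 0 < N ^ (p - 1) * r ^ d := by positivity
  have a6 := mul_le_mul_of_nonneg_left a5 hNp.le
  have b3 : N ^ (p - 1) * N = N ^ p := by rw [← rpow_add_one hN.ne']; congr 1; ring
  have b4 : N ^ (p - 1) * N ^ (1 - p) = 1 := by rw [← rpow_add hN]; simp
  have e3 : N ^ (p - 1) * r ^ d * (N * I2 / 4) = (N ^ p * r ^ d) * I2 / 4 := by rw [← b3]; ring
  have e4 : N ^ (p - 1) * r ^ d * (K0 * δ ^ (m - p) * (e ^ d)⁻¹ * (N ^ (1 - p) * (r ^ d)⁻¹) * Yb)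
      = K0 * δ ^ (m - p) * (e ^ d)⁻¹ * Yb := by
    calc _ = K0 * δ ^ (m - p) * (e ^ d)⁻¹ * Yb * (N ^ (p - 1) * N ^ (1 - p)) * (r ^ d * (r ^ d)⁻¹) := by ring
      _ = _ := by rw [b4, mul_inv_cancel₀ (by positivity)]; ring
  rw [e3, e4] at a6
  rw [div_mul_eq_mul_div, le_div_iff₀ hI2]
  linarith

theorem upIII (d : ℕ) (m p : ℝ) (hm0 : 0 < m) (hm1 : m < 1) (hp : 1 ≤ p) : ∃ C : ℝ, 0 < C ∧
    ∀ (T : ℝ) (U Ut : ℝ → EE d → ℝ) (G H : Fin d → ℝ → EE d → ℝ), Sol d m T U Ut G H →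
    ∀ (s0 s1 : ℝ) (x1 : EE d) (r N Yb : ℝ), 0 < s0 → s0 < s1 → s1 < T → 0 < r → 0 < N →
    closedBall x1 r ⊆ ball 0 6 → s1 - s0 = N ^ (1 - m) * r ^ 2 →
    (∀ s ∈ Icc s0 s1, ∀ y ∈ closedBall x1 r, U s y ≤ 2 * N) → U s1 x1 = N →
    (∀ s ∈ Icc s0 s1, ∫ y, U s y ^ p * qf x1 r y ^ 2 ≤ Yb) → N ^ p * r ^ d ≤ C * Yb := by
  have hm : 0 < 1 - m := by linarith
  have hp0 : 0 < p := by linarith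
  set K0 := (2 + 16 / (1 - m) + 4 * (d : ℝ)) / (1 - m) with hK0
  have hK00 : 0 < K0 := by positivity
  set I2 := ∫ y : EE d, qf 0 1 y ^ 2 with hI2
  have hI20 : 0 < I2 := q2pos
  set I3 := ∫ y : EE d, Kf 0 0 1 y with hI3
  have hI30 : 0 ≤ I3 := integral_nonneg fun y => Kf_nonneg _ _ _ _
  set e := min 1 (3 * I2 / (K0 * (I3 + 1))) with he
  have he0 : 0 < e := lt_min one_pos (by positivity)
  have he1 : e ≤ 1 := min_le_left _ _
  have he2 : K0 * I3 / 6 * e ^ 2 ≤ I2 / 2 := by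
    have h1 : e ^ 2 ≤ e := by nlinarith
    have h2 : e * (K0 * (I3 + 1)) ≤ 3 * I2 := by
      rw [← le_div_iff₀ (by positivity)]; exact min_le_right _ _
    have h3 : K0 * I3 / 6 * e ^ 2 ≤ K0 * I3 / 6 * e := by gcongr
    nlinarith
  set δ := (1 / (4 * K0)) ^ (1 / m) with hδ
  have hδ0 : 0 < δ := by positivity
  have hδm : K0 * δ ^ m = 1 / 4 := by
    rw [hδ, ← rpow_mul (by positivity), one_div_mul_cancel hm0.ne', rpow_one]; field_simp
  refine ⟨4 * K0 * δ ^ (m - p) * (e ^ d)⁻¹ / I2, by positivity, ?_⟩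
  intro T U Ut G H S s0 s1 x1 r N Yb hs0 h01 hs1T hr hN hball hτ hU hUN hYb
  have cm : Continuous (fun x : ℝ × EE d => U x.1 x.2 ^ m) := S.contpow m hm0.le
  have cms : ∀ s, Continuous (fun y => U s y ^ m) := fun s => cm.comp (Continuous.prodMk_right s)
  have cps : ∀ s, Continuous (fun y => U s y ^ p) := fun s =>
    (S.contpow p hp0.le).comp (Continuous.prodMk_right s)
  have cUs : ∀ s, Continuous (fun y => U s y) := fun s => S.cont.comp (Continuous.prodMk_right s)
  have II := S.upII hm0 hm1 s0 s1 x1 r N hs0 h01 hs1T hr hN hball hτ hU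
  rw [hUN] at II
  set V : EE d → ℝ := fun z => ∫ s in s0..s1, U s z ^ m with hV
  have hVc : Continuous V := by
    apply intervalIntegral.continuous_parametric_intervalIntegral_of_continuous'
    exact cm.comp continuous_swap
  set ρ := e * r with hρ
  have hρ0 : 0 < ρ := by positivity
  have hρr : ρ ≤ r := by rw [hρ]; nlinarith
  have mv := mv_up V hVc x1 (2 * N) ρ hρ0 (by
    intro ρ' h1 h2
    have hsub : closedBall x1 ρ' ⊆ closedBall x1 r := closedBall_subset_closedBall (h2.trans hρr)
    have w := wfQ T S.Tpos U (fun s y => U s y ^ m) S.cont cm 0 x1 ρ' h1 (by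
      intro t1 t2 h0 h2 ε hε
      obtain ⟨h0, a, b⟩ := S.fdU hm0 (Icc t1 t2 ×ˢ closedBall x1 ρ')
        (isCompact_Icc.prod (isCompact_closedBall _ _))
        (by
          rintro ⟨s, y⟩ ⟨hs, hy⟩
          exact ⟨⟨lt_of_lt_of_le h0 hs.1, lt_of_le_of_lt hs.2 h2⟩, hball (hsub hy)⟩) ε hε
      exact ⟨h0, a, fun h hh hl s hs _ y hy => b h hh hl (s, y) ⟨hs, hy⟩⟩)
      s0 s1 hs0.le h01.le hs1T.le
    rw [fub (F := fun s y => U s y ^ m) cm (lapK_cont 0 x1 ρ') (lapK_zero 0 x1 ρ' h1)] at w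
    have hn : 0 ≤ ∫ y, U s1 y * Kf 0 x1 ρ' y :=
      integral_nonneg fun y => mul_nonneg (S.nonneg _ _) (Kf_nonneg _ _ _ _)
    have hu : ∫ y, U s0 y * Kf 0 x1 ρ' y ≤ 2 * N * ∫ z, Kf 0 x1 ρ' z := by
      rw [← integral_const_mul]
      apply integral_mono
      · exact int_cs (cUs s0) (Kf_cont 0 x1 ρ') (Kf_zero 0 x1 ρ' h1)
      · exact int_cs (f := fun _ => 2 * N) continuous_const (Kf_cont 0 x1 ρ') (Kf_zero 0 x1 ρ' h1)
      · intro y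
        by_cases hy : y ∈ closedBall x1 ρ'
        · exact mul_le_mul_of_nonneg_right (hU s0 ⟨le_rfl, h01.le⟩ y (hsub hy)) (Kf_nonneg _ _ _ _)
        · simp [Kf_zero 0 x1 ρ' h1 y hy]
    linarith)
  have hq : ∫ z, qf x1 ρ z ^ 2 = ρ ^ d * I2 := by
    have := int_scale (fun z => qf x1 ρ z ^ 2) x1 ρ hρ0
    simp only [qf_scale x1 ρ hρ0] at this
    rw [hI2, this]; field_simp
  have hA : Av V x1 ρ ≤ (s1 - s0) * ((δ * N) ^ m * I2 + (ρ ^ d)⁻¹ * ((δ * N) ^ (m - p) * Yb)) := by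
    rw [Av_eq V x1 ρ hρ0]
    have ef := fub (F := fun s y => U s y ^ m) cm (q2_cont x1 ρ) (q2_zero x1 ρ hρ0) s0 s1
    rw [← ef]
    have b1 : ∫ s in s0..s1, ∫ y, U s y ^ m * qf x1 ρ y ^ 2 ≤
        ∫ s in s0..s1, ((δ * N) ^ m * (ρ ^ d * I2) + (δ * N) ^ (m - p) * Yb) := by
      apply intervalIntegral.integral_mono_on h01.le
      · apply Continuous.intervalIntegrable
        exact cont_int (F := fun s y => U s y ^ m) cm (q2_cont x1 ρ) (q2_zero x1 ρ hρ0)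
      · simp
      · intro s hs
        have i1 : Integrable (fun y => U s y ^ m * qf x1 ρ y ^ 2) :=
          int_cs (cms s) (q2_cont x1 ρ) (q2_zero x1 ρ hρ0)
        have i2 : Integrable (fun y => U s y ^ p * qf x1 ρ y ^ 2) :=
          int_cs (cps s) (q2_cont x1 ρ) (q2_zero x1 ρ hρ0)
        have i3 : Integrable (fun y => (δ * N) ^ m * qf x1 ρ y ^ 2) :=
          int_cs (f := fun _ => (δ * N) ^ m) continuous_const (q2_cont x1 ρ) (q2_zero x1 ρ hρ0)
        have i4 : Integrable (fun y => U s y ^ p * qf x1 r y ^ 2) :=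
          int_cs (cps s) (q2_cont x1 r) (q2_zero x1 r hr)
        calc ∫ y, U s y ^ m * qf x1 ρ y ^ 2 ≤ ∫ y, ((δ * N) ^ m * qf x1 ρ y ^ 2
              + (δ * N) ^ (m - p) * (U s y ^ p * qf x1 ρ y ^ 2)) := by
              apply integral_mono i1 (i3.add (i2.const_mul _))
              intro y
              have := pm_split (U s y) (δ * N) m p (S.nonneg s y) (by positivity) hm0 (by linarith)
              have := mul_le_mul_of_nonneg_right this (sq_nonneg (qf x1 ρ y))
              simp only [Pi.add_apply]
              linarith
          _ = (δ * N) ^ m * (ρ ^ d * I2) + (δ * N) ^ (m - p) * ∫ y, U s y ^ p * qf x1 ρ y ^ 2 := by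
              rw [integral_add i3 (i2.const_mul _), integral_const_mul, integral_const_mul, hq]
          _ ≤ _ := by
              gcongr
              refine le_trans (integral_mono i2 i4 fun y => ?_) (hYb s hs)
              have := qf_nonneg x1 ρ y
              have := qf_mono x1 ρ r hρ0 hρr y
              have := rpow_nonneg (S.nonneg s y) p
              simp only
              gcongr
    rw [intervalIntegral.integral_const, smul_eq_mul] at b1
    calc (ρ ^ d)⁻¹ * ∫ s in s0..s1, ∫ y, U s y ^ m * qf x1 ρ y ^ 2
        ≤ (ρ ^ d)⁻¹ * ((s1 - s0) * ((δ * N) ^ m * (ρ ^ d * I2) + (δ * N) ^ (m - p) * Yb)) := by gcongr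
      _ = _ := by
        generalize (δ * N) ^ m = a
        generalize (δ * N) ^ (m - p) = b
        field_simp
  exact alg3 m p N r (s1 - s0) _ I2 I3 Yb K0 e δ (V x1) d hN hr hτ hI20 hK00 he0 hδ0 II mv hA he2 hδm


lemma caseA (N s1 ε r B m p θ : ℝ) (d : ℕ) (hN : 0 < N) (hs : 0 < s1) (hε : 0 < ε)
    (hθ : 0 < 2 * p - d * (1 - m)) (hθ' : θ = 1 / (2 * p - d * (1 - m)))
    (hr : r = √(ε * s1 * N ^ (m - 1))) (h : N ^ p * r ^ d ≤ B) :
    s1 ^ (d * θ) * N ≤ ε ^ (-(d * θ)) * B ^ (2 * θ) := by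
  have hθ0 : 0 < θ := by rw [hθ']; positivity
  have e1 : r ^ d = (ε * s1) ^ ((d : ℝ) / 2) * N ^ ((m - 1) * (d / 2)) := by
    rw [hr, sqrt_eq_rpow, ← rpow_natCast, ← rpow_mul (by positivity), mul_rpow (by positivity) (by positivity),
      ← rpow_mul hN.le]
    congr 2 <;> ring
  rw [e1] at h
  have h2 := rpow_le_rpow (by positivity) h (by positivity : 0 ≤ 2 * θ)
  have e2 : N ^ p * ((ε * s1) ^ ((d : ℝ) / 2) * N ^ ((m - 1) * (d / 2)))
      = N ^ (p + (m - 1) * (d / 2)) * (ε * s1) ^ ((d : ℝ) / 2) := by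
    rw [rpow_add hN]; ring
  rw [e2, mul_rpow (by positivity) (by positivity), ← rpow_mul hN.le, ← rpow_mul (by positivity)] at h2
  have e3 : (p + (m - 1) * (d / 2)) * (2 * θ) = 1 := by
    have e0 : (p + (m - 1) * (d / 2)) * 2 = 2 * p - d * (1 - m) := by ring
    rw [hθ', ← mul_assoc, e0, mul_one_div_cancel hθ.ne']
  have e4 : (d : ℝ) / 2 * (2 * θ) = d * θ := by ring
  rw [e3, e4, rpow_one, mul_rpow hε.le hs.le] at h2
  rw [rpow_neg hε.le, ← div_eq_inv_mul, le_div_iff₀ (by positivity)]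
  linarith

lemma caseB (N s1 ε d1 m κ : ℝ) (hm1 : m < 1) (hN : 0 < N) (hs : 0 < s1) (hε : 0 < ε) (hd : 0 < d1)
    (hκ : κ = 1 / (1 - m)) (h : ε * d1 ≤ √(ε * s1 * N ^ (m - 1))) :
    d1 ^ (2 * κ) * N ≤ ε ^ (-κ) * s1 ^ κ := by
  have hm : 0 < 1 - m := by linarith
  have hκ0 : 0 < κ := by rw [hκ]; positivity
  have h1 : (ε * d1) ^ 2 ≤ ε * s1 * N ^ (m - 1) := by
    rw [← Real.le_sqrt (by positivity) (by positivity)]; exact h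
  have e1 : N ^ (m - 1) * N ^ (1 - m) = 1 := by rw [← rpow_add hN]; simp
  have h2 : ε * d1 ^ 2 * N ^ (1 - m) ≤ s1 := by
    have := mul_le_mul_of_nonneg_right h1 (by positivity : 0 ≤ N ^ (1 - m))
    have e : ε * s1 * N ^ (m - 1) * N ^ (1 - m) = ε * s1 := by rw [mul_assoc, e1, mul_one]
    rw [e] at this
    have : ε * (ε * d1 ^ 2 * N ^ (1 - m)) ≤ ε * s1 := by linarith
    exact le_of_mul_le_mul_left this hε
  have h3 := rpow_le_rpow (by positivity) h2 hκ0.le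
  have e2 : (1 - m) * κ = 1 := by rw [hκ]; field_simp
  rw [mul_rpow (by positivity) (by positivity), mul_rpow hε.le (by positivity), ← rpow_mul hN.le, e2,
    rpow_one, ← rpow_natCast, ← rpow_mul hd.le] at h3
  push_cast at h3
  rw [rpow_neg hε.le, ← div_eq_inv_mul, le_div_iff₀ (by positivity)]
  linarith

lemma Kf_low' {d : ℕ} (k : ℕ) (y : EE d) (hy : ‖y‖ ≤ 1 / 2) : (3 / 4 : ℝ) ^ (k + 3) ≤ Kf k 0 1 y := by
  unfold Kf
  gcongr
  unfold qf
  apply le_max_of_le_right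
  have : ‖y - 0‖ ^ 2 ≤ 1 / 4 := by rw [sub_zero]; nlinarith [norm_nonneg y]
  linarith

set_option maxHeartbeats 4000000 in
theorem doubling (d : ℕ) (hd : 0 < d) (m p : ℝ) (hm0 : 0 < m) (hm1 : m < 1) (hp : 1 ≤ p)
    (hθ : 0 < 2 * p - d * (1 - m)) (k : ℕ) (θ κ : ℝ) (hθ' : θ = 1 / (2 * p - d * (1 - m)))
    (hκ : κ = 1 / (1 - m)) : ∃ C : ℝ, 0 < C ∧
    ∀ (T : ℝ) (U Ut : ℝ → EE d → ℝ) (G H : Fin d → ℝ → EE d → ℝ), Sol d m T U Ut G H →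
    ∀ t, 0 < t → t < T → ∀ Y, 0 ≤ Y → (∀ s ∈ Icc 0 t, ∫ y, U s y ^ p * Kf k 0 1 y ≤ Y) →
    U t 0 ≤ C * (Y ^ (2 * θ) * t ^ (-(d * θ)) + t ^ κ) := by
  have hm : 0 < 1 - m := by linarith
  have hp0 : 0 < p := by linarith
  have hκ0 : 0 < κ := by rw [hκ]; positivity
  have hθ0 : 0 < θ := by rw [hθ']; positivity
  obtain ⟨C3, hC3, h3⟩ := upIII d m p hm0 hm1 hp
  set a := 2 * κ with ha
  set b := d * θ with hb
  have ha0 : 0 < a := by positivity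
  have hd' : (0 : ℝ) < d := by exact_mod_cast hd
  have hbp : 0 < b := by positivity
  have hb0 : 0 ≤ b := hbp.le
  set l := (1 / 2 : ℝ) ^ (1 / (a + b)) with hl
  have hl0 : 0 < l := by positivity
  have hl1 : l < 1 := rpow_lt_one (by norm_num) (by norm_num) (by positivity)
  have hlab : l ^ (a + b) = 1 / 2 := by
    rw [hl, ← rpow_mul (by norm_num), one_div_mul_cancel (by positivity), rpow_one]
  set ε := 1 - l with hε
  have hε0 : 0 < ε := by linarith
  have hε1 : ε < 1 := by linarith
  set CB := C3 * (4 / 3 : ℝ) ^ (k + 3) with hCB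
  have hCB0 : 0 < CB := by positivity
  set C1 := 2 ^ a * (ε ^ (-b) * CB ^ (2 * θ)) with hC1
  set C2 := 2 ^ a * ε ^ (-κ) with hC2
  have hC10 : 0 < C1 := by positivity
  have hC20 : 0 < C2 := by positivity
  refine ⟨C1 + C2, by positivity, ?_⟩
  intro T U Ut G H S t ht htT Y hY hYs
  set Φ : ℝ × EE d → ℝ := fun q => q.1 ^ b * (1 / 2 - ‖q.2‖) ^ a * U q.1 q.2 with hΦ
  have cΦ : Continuous Φ := by
    refine Continuous.mul (Continuous.mul ?_ ?_) S.cont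
    · exact continuous_fst.rpow_const fun _ => Or.inr hb0
    · exact (continuous_const.sub continuous_snd.norm).rpow_const fun _ => Or.inr ha0.le
  have hmem : (t, (0 : EE d)) ∈ Icc 0 t ×ˢ closedBall (0 : EE d) (1 / 2) :=
    ⟨⟨ht.le, le_rfl⟩, mem_closedBall_self (by norm_num)⟩
  obtain ⟨⟨s1, x1⟩, ⟨hs1, hx1⟩, hmx⟩ := (isCompact_Icc.prod (isCompact_closedBall (0 : EE d) (1 / 2))).exists_isMaxOn
    ⟨_, hmem⟩ cΦ.continuousOn
  have hmx' : ∀ q ∈ Icc 0 t ×ˢ closedBall (0 : EE d) (1 / 2), Φ q ≤ Φ (s1, x1) := fun q hq => hmx hq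
  simp only at hs1 hx1
  rw [mem_closedBall, dist_zero_right] at hx1
  have hUt0 : 0 < U t 0 := S.pos (t, 0) ⟨⟨ht, htT⟩, mem_ball_self (by norm_num)⟩
  have hΦt : Φ (t, 0) = t ^ b * (1 / 2) ^ a * U t 0 := by simp [hΦ]
  have hΦ1 : Φ (t, 0) ≤ s1 ^ b * (1 / 2 - ‖x1‖) ^ a * U s1 x1 := hmx' _ hmem
  have hlow : U t 0 ≤ 2 ^ a * t ^ (-b) * (s1 ^ b * (1 / 2 - ‖x1‖) ^ a * U s1 x1) := by
    rw [hΦt] at hΦ1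
    have e : U t 0 = 2 ^ a * t ^ (-b) * (t ^ b * (1 / 2) ^ a * U t 0) := by
      have e1 : t ^ (-b) * t ^ b = 1 := by rw [← rpow_add ht]; simp
      have e2 : (2 : ℝ) ^ a * (1 / 2) ^ a = 1 := by
        rw [← mul_rpow (by norm_num) (by norm_num)]; simp
      calc U t 0 = (2 ^ a * (1 / 2) ^ a) * (t ^ (-b) * t ^ b) * U t 0 := by rw [e1, e2]; ring
        _ = _ := by ring
    rw [e]
    gcongr
  have htκ : 0 < t ^ κ := by positivity
  have htb : 0 < t ^ (-b) := by positivity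
  have hYθ : 0 ≤ Y ^ (2 * θ) := by positivity
  have fin : ∀ X, U t 0 ≤ X → X ≤ C1 * (Y ^ (2 * θ) * t ^ (-b)) ∨ X ≤ C2 * t ^ κ →
      U t 0 ≤ (C1 + C2) * (Y ^ (2 * θ) * t ^ (-b) + t ^ κ) := by
    intro X hX h
    have p1 : 0 ≤ C1 * (Y ^ (2 * θ) * t ^ (-b)) := by positivity
    have p2 : 0 ≤ C2 * (Y ^ (2 * θ) * t ^ (-b)) := by positivity
    have p3 : 0 ≤ C1 * t ^ κ := by positivity
    have p4 : 0 ≤ C2 * t ^ κ := by positivity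
    rcases h with h | h <;> nlinarith
  apply fin _ hlow
  -- degenerate cases
  have hprod : 0 < s1 ^ b * (1 / 2 - ‖x1‖) ^ a * U s1 x1 := by
    refine lt_of_lt_of_le ?_ hΦ1
    rw [hΦt]; positivity
  have hNn := S.nonneg s1 x1
  have hd1n : 0 ≤ 1 / 2 - ‖x1‖ := by linarith
  have hN : 0 < U s1 x1 := by
    rcases hNn.eq_or_lt with h | h
    · rw [← h] at hprod; simp at hprod
    · exact h
  have hd1 : 0 < 1 / 2 - ‖x1‖ := by
    rcases hd1n.eq_or_lt with h | h
    · rw [← h, zero_rpow ha0.ne'] at hprod; simp at hprod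
    · exact h
  have hs1p : s1 ≠ 0 := by
    intro h
    rw [h, zero_rpow hbp.ne'] at hprod; simp at hprod
  have hs10 : 0 < s1 := lt_of_le_of_ne hs1.1 (Ne.symm hs1p)
  have hs1T : s1 < T := lt_of_le_of_lt hs1.2 htT
  set N := U s1 x1 with hNd
  set d1 := 1 / 2 - ‖x1‖ with hd1d
  have hd1h : d1 ≤ 1 / 2 := by rw [hd1d]; linarith [norm_nonneg x1]
  set R0 := √(ε * s1 * N ^ (m - 1)) with hR0
  have hR0p : 0 < R0 := by rw [hR0]; positivity
  set r := min R0 (ε * d1) with hr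
  have hr0 : 0 < r := lt_min hR0p (by positivity)
  have hr1 : r ≤ ε * d1 := min_le_right _ _
  have hr2 : r ^ 2 ≤ ε * s1 * N ^ (m - 1) := by
    have : r ^ 2 ≤ R0 ^ 2 := by gcongr; exact min_le_left _ _
    rwa [hR0, sq_sqrt (by positivity)] at this
  set τ := N ^ (1 - m) * r ^ 2 with hτ
  have hτ0 : 0 < τ := by positivity
  have hτ1 : τ ≤ ε * s1 := by
    have e1 : N ^ (1 - m) * N ^ (m - 1) = 1 := by rw [← rpow_add hN]; simp
    calc τ ≤ N ^ (1 - m) * (ε * s1 * N ^ (m - 1)) := by rw [hτ]; gcongr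
      _ = (N ^ (1 - m) * N ^ (m - 1)) * (ε * s1) := by ring
      _ = _ := by rw [e1, one_mul]
  have hs0 : l * s1 ≤ s1 - τ := by rw [hε] at hτ1; linarith
  have hs0p : 0 < l * s1 := by positivity
  have hyb : ∀ y ∈ closedBall x1 r, l * d1 ≤ 1 / 2 - ‖y‖ := by
    intro y hy
    rw [mem_closedBall, dist_eq_norm] at hy
    have : ‖y‖ ≤ ‖y - x1‖ + ‖x1‖ := by
      have := norm_add_le (y - x1) x1
      rwa [sub_add_cancel] at this
    have : ε * d1 = d1 - l * d1 := by rw [hε]; ring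
    linarith
  have hyb' : ∀ y ∈ closedBall x1 r, ‖y‖ ≤ 1 / 2 := by
    intro y hy
    have := hyb y hy
    have : 0 < l * d1 := by positivity
    linarith
  have hY' := h3 T U Ut G H S (s1 - τ) s1 x1 r N ((4 / 3 : ℝ) ^ (k + 3) * Y) (by linarith) (by linarith)
    hs1T hr0 hN (by
      intro y hy
      rw [mem_ball, dist_zero_right]
      linarith [hyb' y hy]) (by ring) (by
      intro s hs y hy
      have hsl : l * s1 ≤ s := hs0.trans hs.1
      have h1 : Φ (s, y) ≤ Φ (s1, x1) := hmx' _ ⟨⟨by linarith, hs.2.trans hs1.2⟩, by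
        rw [mem_closedBall, dist_zero_right]; exact hyb' y hy⟩
      have h2 : Φ (s, y) ≤ s1 ^ b * d1 ^ a * N := h1
      have hUn := S.nonneg s y
      have h4 : (l * s1) ^ b * (l * d1) ^ a * U s y ≤ Φ (s, y) := by
        simp only [hΦ]
        have := hyb y hy
        have hs00 : 0 < s := by linarith
        gcongr
      have e : (l * s1) ^ b * (l * d1) ^ a = (1 / 2) * (s1 ^ b * d1 ^ a) := by
        rw [mul_rpow hl0.le hs10.le, mul_rpow hl0.le hd1.le, ← hlab, rpow_add hl0]; ring
      rw [e] at h4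
      have h5 : (s1 ^ b * d1 ^ a) * U s y ≤ (s1 ^ b * d1 ^ a) * (2 * N) := by linarith
      exact le_of_mul_le_mul_left h5 (by positivity)) hNd.symm (by
      intro s hs
      have hs' : s ∈ Icc 0 t := ⟨by linarith [hs.1], hs.2.trans hs1.2⟩
      have cps : Continuous (fun y => U s y ^ p) :=
        (S.contpow p hp0.le).comp (Continuous.prodMk_right s)
      refine le_trans ?_ (mul_le_mul_of_nonneg_left (hYs s hs') (by positivity))
      rw [← integral_const_mul]
      apply integral_mono
      · exact int_cs cps (q2_cont x1 r) (q2_zero x1 r hr0)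
      · exact (int_cs cps (Kf_cont k 0 1) (Kf_zero k 0 1 one_pos)).const_mul _
      · intro y
        have hUp := rpow_nonneg (S.nonneg s y) p
        simp only
        by_cases hy : y ∈ closedBall x1 r
        · have h1 := Kf_low' k y (hyb' y hy)
          have h2 : qf x1 r y ^ 2 ≤ 1 := pow_le_one₀ (qf_nonneg _ _ _) (qf_le_one _ _ _)
          have h4 : 1 ≤ (4 / 3 : ℝ) ^ (k + 3) * Kf k 0 1 y := by
            calc (1 : ℝ) = (4 / 3 : ℝ) ^ (k + 3) * (3 / 4 : ℝ) ^ (k + 3) := by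
                  rw [← mul_pow]; norm_num
              _ ≤ _ := by gcongr
          nlinarith
        · rw [q2_zero x1 r hr0 y hy]
          have := Kf_nonneg k (0 : EE d) 1 y
          simp only [mul_zero]
          positivity)
  rcases le_total R0 (ε * d1) with hc | hc
  · left
    have hrR : r = R0 := min_eq_left hc
    have A := caseA N s1 ε r (C3 * ((4 / 3 : ℝ) ^ (k + 3) * Y)) m p θ d hN hs10 hε0 hθ hθ' hrR hY'
    rw [← mul_assoc, ← hCB, mul_rpow hCB0.le hY, ← hb] at A
    have hda : d1 ^ a ≤ 1 := rpow_le_one hd1.le (by linarith) ha0.le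
    have hsb : 0 < s1 ^ b * N := by positivity
    calc 2 ^ a * t ^ (-b) * (s1 ^ b * d1 ^ a * N) ≤ 2 ^ a * t ^ (-b) * (s1 ^ b * N) := by
          gcongr
          nlinarith
      _ ≤ 2 ^ a * t ^ (-b) * (ε ^ (-b) * (CB ^ (2 * θ) * Y ^ (2 * θ))) := by gcongr
      _ = _ := by rw [hC1]; ring
  · right
    have B := caseB N s1 ε d1 m κ hm1 hN hs10 hε0 hd1 hκ hc
    have e1 : t ^ (-b) * t ^ b = 1 := by rw [← rpow_add ht]; simp
    calc 2 ^ a * t ^ (-b) * (s1 ^ b * d1 ^ a * N) = 2 ^ a * t ^ (-b) * (s1 ^ b * (d1 ^ a * N)) := by ring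
      _ ≤ 2 ^ a * t ^ (-b) * (t ^ b * (ε ^ (-κ) * t ^ κ)) := by
          have := hs1.2
          have B2 : ε ^ (-κ) * s1 ^ κ ≤ ε ^ (-κ) * t ^ κ := by gcongr
          have B3 : d1 ^ a * N ≤ ε ^ (-κ) * t ^ κ := B.trans B2
          have B4 : s1 ^ b ≤ t ^ b := by gcongr
          refine mul_le_mul_of_nonneg_left ?_ (by positivity)
          exact mul_le_mul B4 B3 (by positivity) (by positivity)
      _ = 2 ^ a * ε ^ (-κ) * t ^ κ * (t ^ (-b) * t ^ b) := by ring
      _ = _ := by rw [e1, hC2, mul_one]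

lemma add_rpow_le2 (a b q : ℝ) (ha : 0 ≤ a) (hb : 0 ≤ b) (hq : 0 ≤ q) :
    (a + b) ^ q ≤ 2 ^ q * (a ^ q + b ^ q) := by
  have h1 : 0 ≤ a ^ q := rpow_nonneg ha q
  have h2 : 0 ≤ b ^ q := rpow_nonneg hb q
  have h3 : (0 : ℝ) ≤ 2 ^ q := by positivity
  rcases le_total a b with h | h
  · calc (a + b) ^ q ≤ (2 * b) ^ q := rpow_le_rpow (by positivity) (by linarith) hq
      _ = 2 ^ q * b ^ q := mul_rpow (by norm_num) hb
      _ ≤ _ := by nlinarith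
  · calc (a + b) ^ q ≤ (2 * a) ^ q := rpow_le_rpow (by positivity) (by linarith) hq
      _ = 2 ^ q * a ^ q := mul_rpow (by norm_num) ha
      _ ≤ _ := by nlinarith

theorem upper (d : ℕ) (hd : 0 < d) (m p : ℝ) (hm0 : 0 < m) (hm1 : m < 1) (hp : 1 ≤ p)
    (hθ : 0 < 2 * p - d * (1 - m)) (θ κ : ℝ) (hθ' : θ = 1 / (2 * p - d * (1 - m)))
    (hκ : κ = 1 / (1 - m)) : ∃ C : ℝ, 0 < C ∧
    ∀ (T : ℝ) (U Ut : ℝ → EE d → ℝ) (G H : Fin d → ℝ → EE d → ℝ), Sol d m T U Ut G H →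
    ∀ t, 0 < t → t < T →
    U t 0 ≤ C * ((∫ y in ball (0 : EE d) 1, U 0 y ^ p) ^ (2 * θ) * t ^ (-(d * θ)) + t ^ κ) := by
  have hm : 0 < 1 - m := by linarith
  have hp0 : 0 < p := by linarith
  have hκ0 : 0 < κ := by rw [hκ]; positivity
  have hθ0 : 0 < θ := by rw [hθ']; positivity
  obtain ⟨k, C4, hC4, h4⟩ := upIV d m p hm0 hm1 hp
  obtain ⟨C5, hC5, h5⟩ := doubling d hd m p hm0 hm1 hp hθ k θ κ hθ' hκ
  set A := C4 ^ (2 * θ) * 2 ^ (2 * θ) with hA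
  have hA0 : 0 < A := by positivity
  refine ⟨C5 * (A + 1), by positivity, ?_⟩
  intro T U Ut G H S t ht htT
  have cps : Continuous (fun y => U 0 y ^ p) :=
    (S.contpow p hp0.le).comp (Continuous.prodMk_right 0)
  have hUp : ∀ y, 0 ≤ U 0 y ^ p := fun y => rpow_nonneg (S.nonneg 0 y) p
  set y0 := ∫ y in ball (0 : EE d) 1, U 0 y ^ p with hy0
  have hy00 : 0 ≤ y0 := integral_nonneg hUp
  have hI : ∫ y, U 0 y ^ p * Kf k 0 1 y ≤ y0 := by
    have hz : ∀ y ∉ ball (0 : EE d) 1, U 0 y ^ p * Kf k 0 1 y = 0 := by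
      intro y hy
      have : Kf k (0 : EE d) 1 y = 0 := by
        unfold Kf qf
        rw [mem_ball, dist_zero_right, not_lt] at hy
        rw [max_eq_left]
        · simp
        · rw [sub_zero]
          have : 1 ≤ ‖y‖ ^ 2 := one_le_pow₀ hy
          linarith
      rw [this, mul_zero]
    rw [← setIntegral_eq_integral_of_forall_compl_eq_zero hz, hy0]
    apply setIntegral_mono
    · exact (int_cs cps (Kf_cont k 0 1) (Kf_zero k 0 1 one_pos)).integrableOn
    · exact (cps.continuousOn.integrableOn_compact (isCompact_closedBall (0 : EE d) 1)).mono_set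
        ball_subset_closedBall
    · intro y
      have h1 : Kf k (0 : EE d) 1 y ≤ 1 := pow_le_one₀ (qf_nonneg _ _ _) (qf_le_one _ _ _)
      simp only
      nlinarith [hUp y]
  set Y := C4 * (y0 + t ^ (p / (1 - m))) with hY
  have htp : 0 < t ^ (p / (1 - m)) := by positivity
  have hY0 : 0 ≤ Y := by positivity
  have h := h5 T U Ut G H S t ht htT Y hY0 (by
    intro s hs
    refine (h4 T U Ut G H S t ht htT.le s hs).trans ?_
    rw [hY]
    gcongr)
  have hYq : Y ^ (2 * θ) ≤ A * (y0 ^ (2 * θ) + (t ^ (p / (1 - m))) ^ (2 * θ)) := by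
    rw [hY, mul_rpow hC4.le (by positivity), hA, mul_assoc]
    exact mul_le_mul_of_nonneg_left (add_rpow_le2 _ _ _ hy00 htp.le (by positivity)) (by positivity)
  have e : (t ^ (p / (1 - m))) ^ (2 * θ) * t ^ (-(d * θ)) = t ^ κ := by
    rw [← rpow_mul ht.le, ← rpow_add ht]
    congr 1
    have e0 : (2 * p - d * (1 - m)) * θ = 1 := by rw [hθ', mul_one_div_cancel hθ.ne']
    have e1 : (1 - m) * κ = 1 := by rw [hκ, mul_one_div_cancel hm.ne']
    have e2 : p / (1 - m) = p * κ := by rw [hκ]; ring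
    rw [e2]
    linear_combination κ * e0 + (d * θ) * e1
  have htd : 0 < t ^ (-(d * θ)) := by positivity
  have htκ : 0 < t ^ κ := by positivity
  have hyq : 0 ≤ y0 ^ (2 * θ) := by positivity
  have h6 : Y ^ (2 * θ) * t ^ (-(d * θ)) ≤ A * (y0 ^ (2 * θ) * t ^ (-(d * θ)) + t ^ κ) := by
    calc Y ^ (2 * θ) * t ^ (-(d * θ)) ≤ A * (y0 ^ (2 * θ) + (t ^ (p / (1 - m))) ^ (2 * θ)) * t ^ (-(d * θ)) := by
          gcongr
      _ = A * (y0 ^ (2 * θ) * t ^ (-(d * θ)) + (t ^ (p / (1 - m))) ^ (2 * θ) * t ^ (-(d * θ))) := by ring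
      _ = _ := by rw [e]
  have h7 : 0 ≤ y0 ^ (2 * θ) * t ^ (-(d * θ)) := by positivity
  calc U t 0 ≤ _ := h
    _ ≤ C5 * ((A + 1) * (y0 ^ (2 * θ) * t ^ (-(d * θ)) + t ^ κ)) := by
        apply mul_le_mul_of_nonneg_left _ hC5.le
        linarith
    _ = _ := by ring

lemma D_smooth {d : ℕ} (F : ℝ × EE d → ℝ) (Q : Set (ℝ × EE d)) (hQ : IsOpen Q)
    (hF : ContDiffOn ℝ (⊤ : ℕ∞) F Q) (v : ℝ × EE d) :
    ContDiffOn ℝ (⊤ : ℕ∞) (fun q => fderiv ℝ F q v) Q := by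
  have h := hF.fderiv_of_isOpen (m := ((⊤ : ℕ∞) : WithTop ℕ∞)) hQ (by simp)
  exact h.clm_apply contDiffOn_const

lemma slice_fd {d : ℕ} (F : ℝ × EE d → ℝ) (t : ℝ) (y : EE d) (hF : DifferentiableAt ℝ F (t, y)) :
    HasFDerivAt (fun z => F (t, z)) ((fderiv ℝ F (t, y)).comp (ContinuousLinearMap.inr ℝ ℝ (EE d))) y :=
  HasFDerivAt.comp y hF.hasFDerivAt (hasFDerivAt_prodMk_right t y)

lemma slice_t {d : ℕ} (F : ℝ × EE d → ℝ) (t : ℝ) (y : EE d) (hF : DifferentiableAt ℝ F (t, y)) :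
    HasDerivAt (fun s => F (s, y)) (fderiv ℝ F (t, y) (1, 0)) t := by
  have h := hF.hasFDerivAt.comp_hasDerivAt t ((hasDerivAt_id t).prodMk (hasDerivAt_const t y))
  exact h

lemma spaceLap_eq {d : ℕ} (m : ℝ) (F : ℝ × EE d → ℝ) (Q : Set (ℝ × EE d)) (hQ : IsOpen Q)
    (hF : ContDiffOn ℝ (⊤ : ℕ∞) F Q) (hpos : ∀ q ∈ Q, 0 < F q) (t : ℝ) (x : EE d) (hq : (t, x) ∈ Q) :
    spaceLap (fun y => F (t, y) ^ m) x = ∑ i, (m * F (t, x) ^ (m - 1) *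
      fderiv ℝ (fun q => fderiv ℝ F q (0, eb i)) (t, x) (0, eb i)
      + m * (m - 1) * F (t, x) ^ (m - 2) * (fderiv ℝ F (t, x) (0, eb i)) ^ 2) := by
  have hdiff : ∀ q ∈ Q, DifferentiableAt ℝ F q := fun q hq =>
    (hF.contDiffAt (hQ.mem_nhds hq)).differentiableAt (by simp)
  unfold spaceLap
  refine Finset.sum_congr rfl fun i _ => ?_
  change (fderiv ℝ (fun y => fderiv ℝ (fun y => F (t, y) ^ m) y (eb i)) x) (eb i) = _
  have hev : (fun y => fderiv ℝ (fun y => F (t, y) ^ m) y (eb i)) =ᶠ[nhds x]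
      fun y => m * F (t, y) ^ (m - 1) * fderiv ℝ F (t, y) (0, eb i) := by
    have hn : ∀ᶠ y in nhds x, (t, y) ∈ Q :=
      (Continuous.prodMk_right t).continuousAt.eventually (hQ.mem_nhds hq)
    filter_upwards [hn] with y hy
    have h1 := (slice_fd F t y (hdiff _ hy)).rpow_const (p := m) (Or.inl (hpos _ hy).ne')
    rw [h1.fderiv]
    simp [ContinuousLinearMap.comp_apply]
  rw [hev.fderiv_eq]
  have hD : DifferentiableAt ℝ (fun q => fderiv ℝ F q (0, eb i)) (t, x) :=
    ((D_smooth F Q hQ hF (0, eb i)).contDiffAt (hQ.mem_nhds hq)).differentiableAt (by simp)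
  have h1 := (slice_fd F t x (hdiff _ hq)).rpow_const (p := m - 1) (Or.inl (hpos _ hq).ne')
  have h2 := slice_fd _ t x hD
  have h3 := (h1.const_mul m).mul h2
  have h4 := h3.fderiv
  have h5 : (fun y => m * F (t, y) ^ (m - 1) * fderiv ℝ F (t, y) (0, eb i)) =
    ((fun y => m * F (t, y) ^ (m - 1)) * fun z => fderiv ℝ F (t, z) (0, eb i)) := rfl
  rw [h5, h4]
  have e : m - 1 - 1 = m - 2 := by ring
  simp [ContinuousLinearMap.comp_apply, e]
  ring

noncomputable def prj {d : ℕ} (y : EE d) : EE d := (6 / max 6 ‖y‖) • y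

lemma prj_cont {d : ℕ} : Continuous (prj (d := d)) := by
  unfold prj
  refine Continuous.smul (Continuous.div continuous_const (continuous_const.max continuous_norm) ?_) continuous_id
  intro y
  have : (6 : ℝ) ≤ max 6 ‖y‖ := le_max_left _ _
  positivity

lemma prj_norm {d : ℕ} (y : EE d) : ‖prj y‖ ≤ 6 := by
  unfold prj
  have h6 : (6 : ℝ) ≤ max 6 ‖y‖ := le_max_left _ _
  have hy : ‖y‖ ≤ max 6 ‖y‖ := le_max_right _ _
  have h0 : 0 < max 6 ‖y‖ := by linarith
  rw [norm_smul, Real.norm_of_nonneg (by positivity), div_mul_eq_mul_div, div_le_iff₀ h0]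
  linarith

lemma prj_eq {d : ℕ} (y : EE d) (hy : y ∈ ball (0 : EE d) 6) : prj y = y := by
  unfold prj
  rw [mem_ball, dist_zero_right] at hy
  rw [max_eq_left hy.le]
  simp

noncomputable def clp (T s : ℝ) : ℝ := max 0 (min T s)

lemma clp_cont (T : ℝ) : Continuous (clp T) := by unfold clp; fun_prop

lemma clp_mem (T s : ℝ) (hT : 0 < T) : clp T s ∈ Icc 0 T :=
  ⟨le_max_left _ _, max_le hT.le (min_le_left _ _)⟩

lemma clp_eq (T s : ℝ) (hs : s ∈ Icc 0 T) : clp T s = s := by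
  unfold clp; rw [min_eq_right hs.2, max_eq_right hs.1]

noncomputable def UU {d : ℕ} (T R κ : ℝ) (x0 : EE d) (u : ℝ → EE d → ℝ) (s : ℝ) (y : EE d) : ℝ :=
  R ^ (2 * κ) * u (clp T s) (x0 + R • prj y)

lemma UU_eq {d : ℕ} (T R κ : ℝ) (x0 : EE d) (u : ℝ → EE d → ℝ) (s : ℝ) (hs : s ∈ Icc 0 T) (y : EE d)
    (hy : y ∈ ball (0 : EE d) 6) : UU T R κ x0 u s y = R ^ (2 * κ) * u s (x0 + R • y) := by
  unfold UU; rw [clp_eq T s hs, prj_eq y hy]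

set_option maxHeartbeats 2000000 in
lemma mkSol {d : ℕ} (m T R κ : ℝ) (hm0 : 0 < m) (hm1 : m < 1) (hκ : κ = 1 / (1 - m)) (hT : 0 < T) (hR : 0 < R)
    (Ω : Set (EE d)) (hΩ : IsOpen Ω) (x0 : EE d) (hx0 : closedBall x0 (6 * R) ⊆ Ω)
    (u : ℝ → EE d → ℝ) (u0 : EE d → ℝ) (hu : IsFDESol m (Ioo 0 T ×ˢ Ω) u) (h0 : ∀ x ∈ Ω, 0 ≤ u0 x)
    (hi : TakesInit T Ω u u0) (he : ExtinctAt T Ω u) :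
    ∃ Ut G H, Sol d m T (UU T R κ x0 u) Ut G H := by
  obtain ⟨hpos, hsm, hpde⟩ := hu
  set F : ℝ × EE d → ℝ := fun q => u q.1 q.2 with hF
  set Q : Set (ℝ × EE d) := Ioo 0 T ×ˢ Ω with hQd
  have hQ : IsOpen Q := isOpen_Ioo.prod hΩ
  have hm : 0 < 1 - m := by linarith
  set a := R ^ (2 * κ) with ha
  have ha0 : 0 < a := by positivity
  set L : ℝ × EE d → ℝ × EE d := fun q => (q.1, x0 + R • q.2) with hL
  have cL : Continuous L := by rw [hL]; fun_prop
  have inΩ : ∀ y : EE d, x0 + R • prj y ∈ Ω := by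
    intro y
    apply hx0
    rw [mem_closedBall, dist_eq_norm, add_sub_cancel_left, norm_smul, Real.norm_of_nonneg hR.le]
    nlinarith [prj_norm y]
  have LQ : ∀ q ∈ QQ d T, L q ∈ Q := by
    rintro ⟨s, y⟩ ⟨h1, h2⟩
    refine ⟨h1, ?_⟩
    have := inΩ y
    rwa [prj_eq y h2] at this
  have UQ : ∀ q ∈ QQ d T, UU T R κ x0 u q.1 q.2 = a * F (L q) := by
    rintro ⟨s, y⟩ ⟨h1, h2⟩
    exact UU_eq T R κ x0 u s ⟨h1.1.le, h1.2.le⟩ y h2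
  have QQo : IsOpen (QQ d T) := isOpen_Ioo.prod isOpen_ball
  have hdiff : ∀ q ∈ Q, DifferentiableAt ℝ F q := fun q hq =>
    (hsm.contDiffAt (hQ.mem_nhds hq)).differentiableAt (by simp)
  have hDsm := D_smooth F Q hQ hsm
  have hDdiff : ∀ v, ∀ q ∈ Q, DifferentiableAt ℝ (fun q => fderiv ℝ F q v) q := fun v q hq =>
    ((hDsm v).contDiffAt (hQ.mem_nhds hq)).differentiableAt (by simp)
  have cF : ContinuousOn F (Icc 0 T ×ˢ Ω) := by
    rintro ⟨s, x⟩ ⟨hs, hx⟩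
    simp only at hs hx
    rcases lt_or_ge s T with h | h
    · refine (hi.1 (s, x) ⟨⟨hs.1, h⟩, hx⟩).mono_of_mem_nhdsWithin ?_
      have : {q : ℝ × EE d | q.1 < T} ∈ nhds (s, x) := (isOpen_lt continuous_fst continuous_const).mem_nhds h
      filter_upwards [mem_nhdsWithin_of_mem_nhds this, self_mem_nhdsWithin] with q h1 h2
      exact ⟨⟨h2.1.1, h1⟩, h2.2⟩
    · have hs0 : 0 < s := by linarith
      refine (he.1 (s, x) ⟨⟨hs0, hs.2⟩, hx⟩).mono_of_mem_nhdsWithin ?_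
      have : {q : ℝ × EE d | 0 < q.1} ∈ nhds (s, x) := (isOpen_lt continuous_const continuous_fst).mem_nhds hs0
      filter_upwards [mem_nhdsWithin_of_mem_nhds this, self_mem_nhdsWithin] with q h1 h2
      exact ⟨⟨h1, h2.1.2⟩, h2.2⟩
  -- line derivative helper
  have line : ∀ (K : ℝ × EE d → ℝ) (s : ℝ) (y : EE d) (i : Fin d), DifferentiableAt ℝ K (L (s, y)) →
      HasDerivAt (fun h : ℝ => K (L (s, y + h • eb i))) (R * fderiv ℝ K (L (s, y)) (0, eb i)) 0 := by
    intro K s y i hK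
    have h1 : HasDerivAt (fun h : ℝ => L (s, y + h • eb i)) (0, R • eb i) 0 := by
      have h2 : HasDerivAt (fun h : ℝ => x0 + R • (y + h • (eb i : EE d))) (R • eb i) 0 := by
        have := (((hasDerivAt_id (0 : ℝ)).smul_const (eb i : EE d)).const_add y).const_smul R |>.const_add x0
        simpa using this
      exact (hasDerivAt_const (0 : ℝ) s).prodMk h2
    have h3 : HasFDerivAt K (fderiv ℝ K (L (s, y))) (L (s, y + (0 : ℝ) • eb i)) := by
      simpa using hK.hasFDerivAt
    have h4 := h3.comp_hasDerivAt (0 : ℝ) h1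
    refine h4.congr_deriv ?_
    have : ((0 : ℝ), R • (eb i : EE d)) = R • ((0 : ℝ), (eb i : EE d)) := by simp
    rw [this, map_smul, smul_eq_mul]
  have evline : ∀ q ∈ QQ d T, ∀ i : Fin d, ∀ᶠ h : ℝ in nhds 0, (q.1, q.2 + h • (eb i : EE d)) ∈ QQ d T := by
    intro q hq i
    have c : Continuous (fun h : ℝ => (q.1, q.2 + h • (eb i : EE d))) := by fun_prop
    apply c.continuousAt.eventually
    apply QQo.mem_nhds
    simpa using hq
  refine ⟨fun s y => a * fderiv ℝ F (L (s, y)) (1, 0), fun i s y => a * (R * fderiv ℝ F (L (s, y)) (0, eb i)),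
    fun i s y => a * (R * (R * fderiv ℝ (fun q => fderiv ℝ F q (0, eb i)) (L (s, y)) (0, eb i))),
    ⟨hT, ?_, ?_, ?_, ?_, ?_, ?_, ?_, ?_, ?_, ?_, ?_⟩⟩
  · have : (fun q : ℝ × EE d => UU T R κ x0 u q.1 q.2) = fun q => a * F (clp T q.1, x0 + R • prj q.2) := rfl
    rw [this]
    refine continuous_const.mul (cF.comp_continuous ?_ ?_)
    · exact ((clp_cont T).comp continuous_fst).prodMk
        (continuous_const.add ((prj_cont.comp continuous_snd).const_smul R))
    · intro q
      exact ⟨clp_mem T q.1 hT, inΩ q.2⟩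
  · intro s y
    unfold UU
    refine mul_nonneg ha0.le ?_
    obtain ⟨h1, h2⟩ := clp_mem T s hT
    set s' := clp T s
    rcases h1.eq_or_lt with h | h
    · rw [← h, hi.2 _ (inΩ y)]; exact h0 _ (inΩ y)
    · rcases h2.eq_or_lt with h' | h'
      · rw [h', he.2.1 _ (inΩ y)]
      · exact (hpos (s', _) ⟨⟨h, h'⟩, inΩ y⟩).le
  · intro q hq
    rw [UQ q hq]
    exact mul_pos ha0 (hpos _ (LQ q hq))
  · intro y
    unfold UU
    rw [clp_eq T T ⟨hT.le, le_rfl⟩, he.2.1 _ (inΩ y), mul_zero]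
  · rintro ⟨s, y⟩ hq
    have h1 := (slice_t F s (x0 + R • y) (hdiff _ (LQ _ hq))).const_mul a
    refine h1.congr_of_eventuallyEq ?_
    filter_upwards [isOpen_Ioo.mem_nhds hq.1] with s' hs'
    exact UQ (s', y) ⟨hs', hq.2⟩
  · rintro ⟨s, y⟩ hq i
    have h1 := (line F s y i (hdiff _ (LQ _ hq))).const_mul a
    refine h1.congr_of_eventuallyEq ?_
    filter_upwards [evline _ hq i] with h hh
    exact UQ _ hh
  · rintro ⟨s, y⟩ hq i
    have h1 := ((line _ s y i (hDdiff (0, eb i) _ (LQ _ hq))).const_mul R).const_mul a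
    exact h1
  · exact continuousOn_const.mul ((hDsm (1, 0)).continuousOn.comp cL.continuousOn LQ)
  · intro i
    exact continuousOn_const.mul (continuousOn_const.mul ((hDsm (0, eb i)).continuousOn.comp cL.continuousOn LQ))
  · intro i
    exact continuousOn_const.mul (continuousOn_const.mul (continuousOn_const.mul
      ((D_smooth _ Q hQ (hDsm (0, eb i)) (0, eb i)).continuousOn.comp cL.continuousOn LQ)))
  · rintro ⟨s, y⟩ hq
    have hLq := LQ _ hq
    have h1 := hpde _ hLq
    have h2 := (slice_t F s (x0 + R • y) (hdiff _ hLq)).deriv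
    have h3 := spaceLap_eq m F Q hQ hsm hpos s (x0 + R • y) hLq
    have h4 : fderiv ℝ F (L (s, y)) (1, 0) = _ := h2.symm.trans (h1.trans h3)
    simp only
    rw [h4, UQ _ hq, Finset.mul_sum]
    refine Finset.sum_congr rfl fun i _ => ?_
    have hFp : 0 < F (L (s, y)) := hpos _ hLq
    have e1 : a ^ (m - 1) * R ^ 2 = 1 := by
      rw [ha, ← rpow_mul hR.le, ← rpow_natCast R 2, ← rpow_add hR]
      have : 2 * κ * (m - 1) + ((2 : ℕ) : ℝ) = 0 := by rw [hκ]; push_cast; field_simp; ring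
      rw [this, rpow_zero]
    have e2 : a ^ (m - 2) * a = a ^ (m - 1) := by
      conv_lhs => rw [← rpow_one a, ← rpow_mul ha0.le, one_mul, ← rpow_add ha0]
      congr 1; ring
    rw [mul_rpow ha0.le hFp.le, mul_rpow ha0.le hFp.le]
    change a * (m * F (L (s, y)) ^ (m - 1) * (fderiv ℝ (fun q => fderiv ℝ F q (0, eb i)) (L (s, y))) (0, eb i) +
      m * (m - 1) * F (L (s, y)) ^ (m - 2) * (fderiv ℝ F (L (s, y))) (0, eb i) ^ 2) = _
    generalize (fderiv ℝ (fun q => fderiv ℝ F q (0, eb i)) (L (s, y))) (0, eb i) = HH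
    generalize (fderiv ℝ F (L (s, y))) (0, eb i) = GG
    generalize F (L (s, y)) ^ (m - 1) = f1
    generalize F (L (s, y)) ^ (m - 2) = f2
    linear_combination (-(a * m * f1 * HH) - a * m * (m - 1) * f2 * GG ^ 2) * e1
      - (m * (m - 1) * f2 * GG ^ 2 * a * R ^ 2) * e2


lemma scale_int {d : ℕ} (f : EE d → ℝ) (x0 : EE d) (R : ℝ) (hR : 0 < R) :
    ∫ y in ball (0 : EE d) 1, f (x0 + R • y) = R ^ (-(d : ℝ)) * ∫ x in ball x0 R, f x := by
  have h1 := Measure.setIntegral_comp_smul_of_pos (volume : Measure (EE d)) (fun z => f (x0 + z)) (ball (0 : EE d) 1) hR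
  rw [smul_unitBall_of_pos hR] at h1
  have h2 := (measurePreserving_add_left (volume : Measure (EE d)) x0).setIntegral_preimage_emb
    (measurableEmbedding_addLeft x0) f (ball x0 R)
  have h3 : (fun y => x0 + y) ⁻¹' ball x0 R = ball (0 : EE d) R := by
    ext y; simp [mem_ball, dist_eq_norm]
  rw [h3] at h2
  rw [h1, h2, rpow_neg hR.le, rpow_natCast]
  simp

lemma final_alg (d : ℕ) (m p T R κ θ M I C c1 t0 t' u0 u1 : ℝ) (hm0 : 0 < m) (hm1 : m < 1) (hp : 1 ≤ p)
    (hθ : 0 < 2 * p - d * (1 - m)) (hκ : κ = 1 / (1 - m)) (hθ' : θ = 1 / (2 * p - d * (1 - m)))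
    (hT : 0 < T) (hR : 0 < R) (hM : 0 < M) (hI : 0 ≤ I) (hC : 0 < C) (hc1 : 0 < c1) (ht0 : 0 < t0)
    (ht' : t0 / 2 ≤ t')
    (hlow : c1 * ((R ^ (2 * κ) * (R ^ (-(d : ℝ)) * M)) * T ^ (-(1 / (1 - m)))) ^ (1 / m) * t' ^ (1 / (1 - m))
      ≤ R ^ (2 * κ) * u1)
    (hup : R ^ (2 * κ) * u0 ≤ C * (((R ^ (2 * κ)) ^ p * (R ^ (-(d : ℝ)) * I)) ^ (2 * θ) * t0 ^ (-(d * θ)) + t0 ^ κ)) :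
    (c1 * 2 ^ (-κ) / C * R ^ ((2 - d) / m) * (M * T ^ (-(1 / (1 - m)))) ^ (1 / m) *
      ((I ^ (1 / p)) ^ (2 * p / (2 * p - d * (1 - m))) *
        t0 ^ (-(2 * p / (2 * p - d * (1 - m)) / (1 - m))) + R ^ (-(2 / (1 - m))))⁻¹) * u0 ≤ u1 := by
  have hm : 0 < 1 - m := by linarith
  have hp0 : 0 < p := by linarith
  have hκ0 : 0 < κ := by rw [hκ]; positivity
  have hθ0 : 0 < θ := by rw [hθ']; positivity
  have e0 : (2 * p - d * (1 - m)) * θ = 1 := by rw [hθ', mul_one_div_cancel hθ.ne']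
  have e1 : (1 - m) * κ = 1 := by rw [hκ, mul_one_div_cancel hm.ne']
  have x1 : 2 * p / (2 * p - d * (1 - m)) = 2 * p * θ := by rw [hθ']; ring
  have x2 : 2 * p * θ / (1 - m) = 2 * p * θ * κ := by rw [hκ]; ring
  have x3 : 2 / (1 - m) = 2 * κ := by rw [hκ]; ring
  rw [← hκ] at hlow ⊢
  rw [x1, x2, x3, ← rpow_mul hI]
  have x4 : 1 / p * (2 * p * θ) = 2 * θ := by field_simp
  rw [x4]
  set b := R ^ (2 * κ) with hb
  have hb0 : 0 < b := by positivity
  have hbinv : R ^ (-(2 * κ)) = b⁻¹ := by rw [rpow_neg hR.le]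
  rw [hbinv]
  have y1 : (b ^ p * (R ^ (-(d : ℝ)) * I)) ^ (2 * θ) = b * I ^ (2 * θ) := by
    rw [← mul_assoc, mul_rpow (by positivity) hI, hb, ← rpow_mul hR.le, ← rpow_add hR, ← rpow_mul hR.le]
    congr 2
    linear_combination (2 * κ) * e0 + (2 * d * θ) * e1
  have y2 : t0 ^ (-(d * θ)) = t0 ^ κ * t0 ^ (-(2 * p * θ * κ)) := by
    rw [← rpow_add ht0]
    congr 1
    linear_combination κ * e0 + (d * θ) * e1
  have y3 : (b * (R ^ (-(d : ℝ)) * M) * T ^ (-κ)) ^ (1 / m) = b * R ^ ((2 - d) / m) * (M * T ^ (-κ)) ^ (1 / m) := by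
    have : b * (R ^ (-(d : ℝ)) * M) * T ^ (-κ) = (b * R ^ (-(d : ℝ))) * (M * T ^ (-κ)) := by ring
    rw [this, mul_rpow (by positivity) (by positivity), hb, ← rpow_add hR, ← rpow_mul hR.le, ← rpow_add hR]
    congr 2
    field_simp
    linear_combination 2 * e1
  rw [y1, y2] at hup
  rw [y3] at hlow
  set W := (M * T ^ (-κ)) ^ (1 / m) with hW
  have hW0 : 0 < W := by positivity
  set Z := R ^ ((2 - d) / m) with hZ
  have hZ0 : 0 < Z := by positivity
  set J := I ^ (2 * θ) with hJ
  have hJ0 : 0 ≤ J := by positivity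
  set τ := t0 ^ (-(2 * p * θ * κ)) with hτ
  have hτ0 : 0 < τ := by positivity
  set D := J * τ + b⁻¹ with hD
  have hD0 : 0 < D := by positivity
  have htk : 0 < t0 ^ κ := by positivity
  have hup2 : u0 ≤ C * t0 ^ κ * D := by
    have : C * (b * J * (t0 ^ κ * τ) + t0 ^ κ) = b * (C * t0 ^ κ * D) := by
      rw [hD]; field_simp
    rw [this] at hup
    exact le_of_mul_le_mul_left hup hb0
  have hlow2 : c1 * Z * W * t' ^ κ ≤ u1 := by
    have : c1 * (b * Z * W) * t' ^ κ = b * (c1 * Z * W * t' ^ κ) := by ring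
    rw [this] at hlow
    exact le_of_mul_le_mul_left hlow hb0
  have ht2 : 2 ^ (-κ) * t0 ^ κ ≤ t' ^ κ := by
    have : (2 : ℝ) ^ (-κ) * t0 ^ κ = (t0 / 2) ^ κ := by
      rw [div_rpow ht0.le (by norm_num), rpow_neg (by norm_num)]; ring
    rw [this]
    exact rpow_le_rpow (by positivity) ht' hκ0.le
  have h2 : (0 : ℝ) < 2 ^ (-κ) := by positivity
  calc c1 * 2 ^ (-κ) / C * Z * W * D⁻¹ * u0 ≤ c1 * 2 ^ (-κ) / C * Z * W * D⁻¹ * (C * t0 ^ κ * D) := by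
        exact mul_le_mul_of_nonneg_left hup2 (by positivity)
    _ = c1 * Z * W * (2 ^ (-κ) * t0 ^ κ) := by field_simp
    _ ≤ c1 * Z * W * t' ^ κ := by exact mul_le_mul_of_nonneg_left ht2 (by positivity)
    _ ≤ u1 := hlow2

/-- **Theorem 5.1: forward, backward and elliptic Harnack inequalities at initial
times.** Here `m_c = (d-2)/d`, `p_c = d(1-m)/2`, `ϑ_p = 1/(2p - d(1-m))`, and
`t_* = c₀' R^{2-d(1-m)} ‖u₀‖_{L¹(B_R)}^{1-m}`. -/
theorem harnack_initial_times
    (d : ℕ) (hd : 3 ≤ d) (m : ℝ) (hm0 : 0 < m) (hm1 : m < 1) (p : ℝ)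
    (hp₁ : (d - 2 : ℝ) / d < m → p = 1)
    (hp₂ : m ≤ (d - 2 : ℝ) / d → d * (1 - m) / 2 < p) :
    ∃ c₀' C₆ : ℝ, 0 < c₀' ∧ 0 < C₆ ∧
      ∀ (Ω : Set (EuclideanSpace ℝ (Fin d))), IsOpen Ω →
      ∀ (u : ℝ → EuclideanSpace ℝ (Fin d) → ℝ) (u₀ : EuclideanSpace ℝ (Fin d) → ℝ) (T : ℝ),
        0 < T →
        IsFDESol m (Ioo 0 T ×ˢ Ω) u →
        (∀ x ∈ Ω, 0 ≤ u₀ x) →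
        LocallyIntegrableOn (fun x => u₀ x ^ p) Ω →
        TakesInit T Ω u u₀ →
        ExtinctAt T Ω u →
      ∀ (x₀ : EuclideanSpace ℝ (Fin d)) (R : ℝ), 0 < R →
        closedBall x₀ (6 * R) ⊆ Ω →
        0 < ∫ x in ball x₀ R, u₀ x →
      ∀ t₀ : ℝ, 0 < t₀ →
        t₀ ≤ c₀' * R ^ (2 - d * (1 - m)) * (∫ x in ball x₀ R, u₀ x) ^ (1 - m) →
      ∀ θ : ℝ, 0 ≤ θ →
        θ ≤ min (c₀' * R ^ (2 - d * (1 - m)) * (∫ x in ball x₀ R, u₀ x) ^ (1 - m) - t₀)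
          (t₀ / 2) →
      ∀ x ∈ ball x₀ R,
        (C₆ * R ^ ((2 - d) / m) *
            ((∫ y in ball x₀ R, u₀ y) * T ^ (-(1 / (1 - m)))) ^ (1 / m) *
            (((∫ y in ball x₀ R, u₀ y ^ p) ^ (1 / p)) ^
                (2 * p / (2 * p - d * (1 - m))) *
              t₀ ^ (-(2 * p / (2 * p - d * (1 - m)) / (1 - m))) +
              R ^ (-(2 / (1 - m))))⁻¹) * u t₀ x₀ ≤ u (t₀ + θ) x ∧
        (C₆ * R ^ ((2 - d) / m) *
            ((∫ y in ball x₀ R, u₀ y) * T ^ (-(1 / (1 - m)))) ^ (1 / m) *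
            (((∫ y in ball x₀ R, u₀ y ^ p) ^ (1 / p)) ^
                (2 * p / (2 * p - d * (1 - m))) *
              t₀ ^ (-(2 * p / (2 * p - d * (1 - m)) / (1 - m))) +
              R ^ (-(2 / (1 - m))))⁻¹) * u t₀ x₀ ≤ u (t₀ - θ) x := by

  have hm : 0 < 1 - m := by linarith
  have hd3 : (3 : ℝ) ≤ d := by exact_mod_cast hd
  have hd0 : (0 : ℝ) < d := by linarith
  have hpp : 1 ≤ p ∧ 0 < 2 * p - d * (1 - m) := by
    rcases lt_or_ge ((d - 2 : ℝ) / d) m with h | h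
    · have h1 := hp₁ h
      rw [div_lt_iff₀ hd0] at h
      rw [h1]
      exact ⟨le_rfl, by linarith⟩
    · have h1 := hp₂ h
      rw [le_div_iff₀ hd0] at h
      constructor <;> linarith
  obtain ⟨hp, hθ0⟩ := hpp
  set κ := 1 / (1 - m) with hκ
  obtain ⟨c0, c1, hc0, hc1, hlow⟩ := lower d m hm0 hm1
  obtain ⟨C, hC, hup⟩ := upper d (by omega) m p hm0 hm1 hp hθ0 (1 / (2 * p - d * (1 - m))) κ rfl hκ
  refine ⟨c0, c1 * 2 ^ (-κ) / C, hc0, by positivity, ?_⟩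
  intro Ω hΩ u u₀ T hT hu h0 _ hi he x₀ R hR hxR hM t₀ ht₀ hts θ hθ hθm x hx
  obtain ⟨Ut, G, H, S⟩ := mkSol m T R κ hm0 hm1 hκ hT hR Ω hΩ x₀ hxR u u₀ hu h0 hi he
  have hp0 : 0 < p := by linarith
  set b := R ^ (2 * κ) with hb
  have hb0 : 0 < b := by positivity
  have b16 : ball (0 : EE d) 1 ⊆ ball 0 6 := ball_subset_ball (by norm_num)
  have inΩ : ∀ y ∈ ball (0 : EE d) 1, x₀ + R • y ∈ Ω := by
    intro y hy
    apply hxR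
    rw [mem_ball, dist_zero_right] at hy
    rw [mem_closedBall, dist_eq_norm, add_sub_cancel_left, norm_smul, Real.norm_of_nonneg hR.le]
    nlinarith
  have U0 : ∀ y ∈ ball (0 : EE d) 1, UU T R κ x₀ u 0 y = b * u₀ (x₀ + R • y) := by
    intro y hy
    rw [UU_eq T R κ x₀ u 0 ⟨le_rfl, hT.le⟩ y (b16 hy), hi.2 _ (inΩ y hy)]
  set M := ∫ x in ball x₀ R, u₀ x with hMd
  set I := ∫ x in ball x₀ R, u₀ x ^ p with hId
  have hMt : b * (R ^ (-(d : ℝ)) * M) = ∫ y in ball (0 : EE d) 1, UU T R κ x₀ u 0 y := by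
    rw [setIntegral_congr_fun measurableSet_ball U0, integral_const_mul, scale_int u₀ x₀ R hR]
  have hIt : b ^ p * (R ^ (-(d : ℝ)) * I) = ∫ y in ball (0 : EE d) 1, UU T R κ x₀ u 0 y ^ p := by
    have : ∀ y ∈ ball (0 : EE d) 1, UU T R κ x₀ u 0 y ^ p = b ^ p * (u₀ (x₀ + R • y)) ^ p := by
      intro y hy
      rw [U0 y hy, mul_rpow hb0.le (h0 _ (inΩ y hy))]
    rw [setIntegral_congr_fun measurableSet_ball this, integral_const_mul,
      scale_int (fun z => u₀ z ^ p) x₀ R hR]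
  have hI0 : 0 ≤ I := by
    apply setIntegral_nonneg measurableSet_ball
    intro y hy
    apply rpow_nonneg
    apply h0
    apply hxR
    exact ball_subset_closedBall (ball_subset_ball (by linarith) hy)
  have hMt0 : 0 < b * (R ^ (-(d : ℝ)) * M) := by positivity
  have hts' : c0 * R ^ (2 - d * (1 - m)) * M ^ (1 - m) = c0 * (b * (R ^ (-(d : ℝ)) * M)) ^ (1 - m) := by
    rw [← mul_assoc b, mul_rpow (by positivity) hM.le, hb, ← rpow_add hR, ← rpow_mul hR.le, mul_assoc]
    congr 3
    have e1 : (1 - m) * κ = 1 := by rw [hκ, mul_one_div_cancel hm.ne']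
    linear_combination (-2) * e1
  rw [hts'] at hts hθm
  have hL := hlow T _ Ut G H S _ hMt hMt0
  have hq1 : θ ≤ c0 * (b * (R ^ (-(d : ℝ)) * M)) ^ (1 - m) - t₀ := hθm.trans (min_le_left _ _)
  have hq2 : θ ≤ t₀ / 2 := hθm.trans (min_le_right _ _)
  have ht₀T := (hL t₀ ht₀ hts).1
  have hU := hup T _ Ut G H S t₀ ht₀ ht₀T
  rw [← hIt, UU_eq T R κ x₀ u t₀ ⟨ht₀.le, ht₀T.le⟩ 0 (mem_ball_self (by norm_num)), smul_zero, add_zero] at hU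
  -- the point x in rescaled coordinates
  set y := R⁻¹ • (x - x₀) with hy
  have hyx : x₀ + R • y = x := by rw [hy, smul_smul, mul_inv_cancel₀ hR.ne', one_smul]; simp
  have hyb : y ∈ ball (0 : EE d) 1 := by
    rw [mem_ball, dist_eq_norm] at hx
    rw [mem_ball, dist_zero_right, hy, norm_smul, norm_inv, Real.norm_of_nonneg hR.le, inv_mul_lt_iff₀ hR]
    linarith
  have key : ∀ t', t₀ / 2 ≤ t' → t' ≤ c0 * (b * (R ^ (-(d : ℝ)) * M)) ^ (1 - m) →
      c1 * ((b * (R ^ (-(d : ℝ)) * M)) * T ^ (-(1 / (1 - m)))) ^ (1 / m) * t' ^ (1 / (1 - m)) ≤ b * u t' x := by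
    intro t' h1 h2
    have ht' : 0 < t' := by linarith
    obtain ⟨h3, h4⟩ := hL t' ht' h2
    have h5 := h4 y hyb
    rwa [UU_eq T R κ x₀ u t' ⟨ht'.le, h3.le⟩ y (b16 hyb), hyx] at h5
  constructor
  · exact final_alg d m p T R κ _ M I C c1 t₀ (t₀ + θ) (u t₀ x₀) (u (t₀ + θ) x) hm0 hm1 hp hθ0 hκ rfl hT hR hM
      hI0 hC hc1 ht₀ (by linarith) (key _ (by linarith) (by linarith)) hU
  · exact final_alg d m p T R κ _ M I C c1 t₀ (t₀ - θ) (u t₀ x₀) (u (t₀ - θ) x) hm0 hm1 hp hθ0 hκ rfl hT hR hM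
      hI0 hC hc1 ht₀ (by linarith) (key _ (by linarith) (by linarith)) hU
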